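/- Let f : ℕ → [−1,1] be a multiplicative function and let g := 1 ∗ f. There is an absolute constant C > 0 such that for every real x ≥ 3 and every real T with 1 ≤ T ≤ (log x)^{100}, one has |L_f(x) − M̃_g(w₀x)| ≤ C·( |M̃_g(w₀x)|/log x + log(2T)/T + (log log x / log x)·e^{−M(x;T)} ), where M(x;T) := min_{|t| ≤ T} ∑_{p ≤ x} (1 − f(p))·cos(t·log p)/p. -/

import Mathlib

/-!
Put `Φ_c(v) = ∑ c(n)/n · k(v - log n)` with `k(w) = 1_{w ≥ 0} - ⌊w₀eʷ⌋/(w₀eʷ)`. Then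
`L_f(x) - M̃_g(w₀x) = Φ_f(log x)` (`Phi_eq_diff`), and the claim is a bound for `Φ_f(log x)` which does
not need the term `|M̃_g(w₀x)|/log x`. The Laplace transform of `k` is
`1/s - w₀^s ζ(1+s)/(1+s)`. The choice `log w₀ = 1 - γ` makes it vanish at `s = 0`, and it is
`≪ log(3+|t|)/(1+|t|) · |s/(1+s)|` for `0 < Re s ≤ 1` and `t = Im s` (`KL_bound`).

Multiplicativity enters in two ways. First, up to prime powers `f · log` is the convolution
`a = (f log 1_primes) ∗ f`, so `v Φ_f(v) = Φ_a(v) + O(1)` (`Phi_log_approx`). Secondly, the Euler product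
gives `F(s) ≪ e^{-M(x;T)} |ζ(1+s)|` for `F(s) = ∑ f(n) n^{-1-s}` on the line `Re s = 1/log x`, `|t| ≤ T`.
The maximum principle carries this to
`F(α+it) · s/(1+s) ≪ log(3+|t|) (e^{-M} + α log x / T)` for `1/log x ≤ α ≤ 1`, `|t| ≤ T/2` (`F_bound`).

By Plancherel, `∫ Φ_a(v)² e^{-2αv} dv` is at most a constant times the integral of `|P F K|²` over the
line `Re s = α`, where `P` is the Dirichlet series of `f log 1_primes` and `K` is the transform of `k`.
For `|t| ≤ T/2` the bound for `F` is combined with the local mean square `≪ 1/α` of `P`, which comes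
from a majorant principle (`majorant`) and the pole of `ζ'/ζ`. For `|t| > T/2` the coefficients are
majorized by `log n` on dyadic shells. With `α = 1/V`, Cauchy–Schwarz bounds `∫_V^{2V} |Φ_f|`, and
summing over `O(log log x)` dyadic intervals gives
`∫_{v ≤ log x} |Φ_f| ≪ log log x · e^{-M} + log x · log(2T)/T` (`integral_Phi`).

Finally `|Φ_a(log x)| ≤ ∑_p (log p / p) |Φ_f(log x - log p)|`. Each prime is spread over `[p, (1+δ)p]`
with `δ = (log x)^{-2}`: `Φ_f` hardly varies there (`Phi_variation`), and Selberg's sieve bounds the number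
of primes in such intervals (`primes_log_short`), so the sum is `≪ ∫ |Φ_f| + log log x`
(`prime_smoothing`, `Phi_bound`). Since `M(x;T)` is bounded above (`MxT_upper`), the last term is
`≪ log log x · e^{-M}`.
-/

open Finset

noncomputable def Lsum (h : ℕ → ℝ) (x : ℝ) : ℝ := ∑ n ∈ Finset.Icc 1 ⌊x⌋₊, h n / n

noncomputable def Mt (h : ℕ → ℝ) (x : ℝ) : ℝ := (∑ n ∈ Finset.Icc 1 ⌊x⌋₊, h n) / x

noncomputable def w0 : ℝ := Real.exp (1 - Real.eulerMascheroniConstant)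

def IsMult (f : ℕ → ℝ) : Prop := f 1 = 1 ∧ ∀ m n : ℕ, Nat.Coprime m n → f (m * n) = f m * f n

noncomputable def dconv (f : ℕ → ℝ) : ℕ → ℝ := fun n => ∑ d ∈ n.divisors, f d

noncomputable def primesUpTo (y : ℝ) : Finset ℕ := (Finset.Iic ⌊y⌋₊).filter Nat.Prime

/-- `M(x;T) := min_{|t| ≤ T} ∑_{p ≤ x} (1 − f(p))·cos(t·log p)/p`. -/
noncomputable def MxT (f : ℕ → ℝ) (x T : ℝ) : ℝ :=
  sInf ((fun t : ℝ => ∑ p ∈ primesUpTo x, (1 - f p) * Real.cos (t * Real.log p) / p) ''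
    Set.Icc (-T) T)


/-! ### Selberg's sieve for primes in short intervals -/

/-- Squarefree integers in `[1, R]`, the support of the sieve weights. -/
def sqf (R : ℕ) : Finset ℕ := (Finset.Icc 1 R).filter Squarefree

/-- The normalising sum `∑_{m ≤ R} μ²(m)/φ(m)`. -/
noncomputable def selG (R : ℕ) : ℝ := ∑ m ∈ sqf R, (1 : ℝ) / (Nat.totient m)

/-- Selberg's optimal sieve weights. -/
noncomputable def selLam (R d : ℕ) : ℝ :=
  (ArithmeticFunction.moebius d : ℝ) * d *
    (∑ k ∈ sqf R, if d ∣ k then (1 : ℝ) / (Nat.totient k) else 0) / selG R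

lemma mem_sqf {R d : ℕ} : d ∈ sqf R ↔ (1 ≤ d ∧ d ≤ R) ∧ Squarefree d := by
  simp [sqf]

lemma selG_pos {R : ℕ} (hR : 1 ≤ R) : 0 < selG R := by
  apply Finset.sum_pos
  · intro m hm
    have := (mem_sqf.1 hm).1.1
    have : 0 < Nat.totient m := Nat.totient_pos.2 this
    positivity
  · exact ⟨1, mem_sqf.2 ⟨⟨le_rfl, hR⟩, squarefree_one⟩⟩

lemma selLam_one {R : ℕ} (hR : 1 ≤ R) : selLam R 1 = 1 := by
  have := (selG_pos hR).ne'
  simp only [selLam]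
  simp only [isUnit_one, IsUnit.dvd, if_true]
  change _ * selG R / selG R = 1
  simp [this]

lemma abs_selLam_le {R : ℕ} (hR : 1 ≤ R) (d : ℕ) : |selLam R d| ≤ d := by
  have hG := selG_pos hR
  have h1 : |(ArithmeticFunction.moebius d : ℝ)| ≤ 1 := by
    exact_mod_cast ArithmeticFunction.abs_moebius_le_one (n := d)
  have h2 : (∑ k ∈ sqf R, if d ∣ k then (1 : ℝ) / (Nat.totient k) else 0) ≤ selG R := by
    apply Finset.sum_le_sum
    intro k _
    split_ifs <;> first | exact le_rfl | positivity
  have h3 : 0 ≤ (∑ k ∈ sqf R, if d ∣ k then (1 : ℝ) / (Nat.totient k) else 0) := by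
    apply Finset.sum_nonneg
    intro k _
    split_ifs <;> positivity
  rw [selLam, abs_div, abs_mul, abs_mul, abs_of_pos hG, abs_of_nonneg h3, div_le_iff₀ hG,
    Nat.abs_cast]
  calc _ ≤ 1 * (d : ℝ) * selG R := by gcongr
    _ = _ := by ring

/-- Möbius inversion on the divisor poset, between `m` and `k`. -/
lemma sum_moebius_between {R m k : ℕ} (hm : m ∈ sqf R) (hk : k ∈ sqf R) :
    (∑ d ∈ sqf R, if m ∣ d ∧ d ∣ k then (ArithmeticFunction.moebius d : ℝ) else 0)
      = if k = m then (ArithmeticFunction.moebius m : ℝ) else 0 := by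
  rw [mem_sqf] at hm hk
  by_cases hmk : m ∣ k
  · obtain ⟨e, rfl⟩ := hmk
    have hm0 : 0 < m := hm.1.1
    have he0 : e ≠ 0 := by rintro rfl; simp at hk
    have hcop : Nat.Coprime m e := Nat.coprime_of_squarefree_mul hk.2
    rw [← Finset.sum_filter]
    have hset : (sqf R).filter (fun d => m ∣ d ∧ d ∣ m * e) = e.divisors.image (m * ·) := by
      ext d
      simp only [Finset.mem_filter, Finset.mem_image, Nat.mem_divisors, mem_sqf]
      constructor
      · rintro ⟨_, ⟨a, rfl⟩, h⟩
        exact ⟨a, ⟨Nat.dvd_of_mul_dvd_mul_left hm0 h, he0⟩, rfl⟩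
      · rintro ⟨a, ⟨ha, _⟩, rfl⟩
        have hd : m * a ∣ m * e := Nat.mul_dvd_mul_left m ha
        have ha0 : 0 < a := Nat.pos_of_dvd_of_pos ha (Nat.pos_of_ne_zero he0)
        exact ⟨⟨⟨Nat.mul_pos hm0 ha0, (Nat.le_of_dvd hk.1.1 hd).trans hk.1.2⟩,
          hk.2.squarefree_of_dvd hd⟩, dvd_mul_right _ _, hd⟩
    rw [hset, Finset.sum_image (by
      intro a _ b _ h
      exact Nat.eq_of_mul_eq_mul_left hm0 h)]
    have h1 : ∀ a ∈ e.divisors, ((ArithmeticFunction.moebius (m * a) : ℤ) : ℝ)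
        = (ArithmeticFunction.moebius m : ℝ) * (ArithmeticFunction.moebius a : ℝ) := by
      intro a ha
      rw [ArithmeticFunction.isMultiplicative_moebius.map_mul_of_coprime
        (hcop.coprime_dvd_right (Nat.dvd_of_mem_divisors ha))]
      push_cast; rfl
    rw [Finset.sum_congr rfl h1, ← Finset.mul_sum]
    have h2 : (∑ a ∈ e.divisors, (ArithmeticFunction.moebius a : ℝ)) = if e = 1 then 1 else 0 := by
      have := congrArg (fun f : ArithmeticFunction ℤ => f e) ArithmeticFunction.moebius_mul_coe_zeta
      simp only [ArithmeticFunction.coe_mul_zeta_apply, ArithmeticFunction.one_apply] at this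
      exact_mod_cast this
    rw [h2]
    by_cases h : e = 1
    · simp [h]
    · have : m * e ≠ m := by
        intro h'; apply h
        exact Nat.eq_of_mul_eq_mul_left hm0 (by simpa using h')
      simp [h, this]
  · rw [if_neg (by rintro rfl; exact hmk dvd_rfl)]
    apply Finset.sum_eq_zero
    intro d _
    rw [if_neg]
    rintro ⟨h1, h2⟩
    exact hmk (h1.trans h2)

/-- The diagonalising variables `∑_{m ∣ d} λ_d/d` of the sieve quadratic form. -/
lemma selY {R m : ℕ} (hm : m ∈ sqf R) :
    (∑ d ∈ sqf R, if m ∣ d then selLam R d / d else 0)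
      = (ArithmeticFunction.moebius m : ℝ) / (Nat.totient m) / selG R := by
  have h1 : ∀ d ∈ sqf R, (if m ∣ d then selLam R d / d else 0)
      = ∑ k ∈ sqf R, (1 : ℝ) / (Nat.totient k) / selG R *
        (if m ∣ d ∧ d ∣ k then (ArithmeticFunction.moebius d : ℝ) else 0) := by
    intro d hd
    have hd0 : (d : ℝ) ≠ 0 := by
      have := (mem_sqf.1 hd).1.1
      positivity
    by_cases h : m ∣ d
    · simp only [h, if_true, true_and, selLam]
      have hcalc : ∀ u w : ℝ, u * d * w / selG R / d = w * (u / selG R) := by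
        intro u w
        field_simp
      rw [hcalc, Finset.sum_mul]
      apply Finset.sum_congr rfl
      intro k _
      split_ifs <;> ring
    · simp [h]
  rw [Finset.sum_congr rfl h1, Finset.sum_comm]
  have h2 : ∀ k ∈ sqf R, (∑ d ∈ sqf R, (1 : ℝ) / (Nat.totient k) / selG R *
        (if m ∣ d ∧ d ∣ k then (ArithmeticFunction.moebius d : ℝ) else 0))
      = if k = m then (ArithmeticFunction.moebius m : ℝ) / (Nat.totient m) / selG R else 0 := by
    intro k hk
    rw [← Finset.mul_sum, sum_moebius_between hm hk]
    split_ifs with h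
    · subst h; ring
    · simp
  rw [Finset.sum_congr rfl h2, Finset.sum_ite_eq' (sqf R) m]
  simp [hm]

/-- The value of the sieve quadratic form, obtained from `1/lcm(d,e) = ∑_{m ∣ d, m ∣ e} φ(m)/(de)`. -/
lemma selQuad {R : ℕ} (hR : 1 ≤ R) :
    (∑ d ∈ sqf R, ∑ e ∈ sqf R, selLam R d * selLam R e / (Nat.lcm d e : ℝ)) = 1 / selG R := by
  have hG := (selG_pos hR).ne'
  have h1 : ∀ d ∈ sqf R, ∀ e ∈ sqf R, selLam R d * selLam R e / (Nat.lcm d e : ℝ)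
      = ∑ m ∈ sqf R, (Nat.totient m : ℝ) * ((if m ∣ d then selLam R d / d else 0) *
          (if m ∣ e then selLam R e / e else 0)) := by
    intro d hd e he
    have hd' := mem_sqf.1 hd
    have he' := mem_sqf.1 he
    have hd0 : (d : ℝ) ≠ 0 := by have := hd'.1.1; positivity
    have he0 : (e : ℝ) ≠ 0 := by have := he'.1.1; positivity
    have hl0 : (Nat.lcm d e : ℝ) ≠ 0 := by
      have := Nat.lcm_pos hd'.1.1 he'.1.1
      positivity
    have hg : (Nat.gcd d e : ℝ) = ∑ m ∈ sqf R, if m ∣ d ∧ m ∣ e then (Nat.totient m : ℝ) else 0 := by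
      rw [← Finset.sum_filter]
      have hset : (sqf R).filter (fun m => m ∣ d ∧ m ∣ e) = (Nat.gcd d e).divisors := by
        ext m
        simp only [Finset.mem_filter, Nat.mem_divisors, mem_sqf, Nat.dvd_gcd_iff]
        constructor
        · rintro ⟨_, h⟩
          exact ⟨h, (Nat.gcd_pos_of_pos_left _ hd'.1.1).ne'⟩
        · rintro ⟨h, _⟩
          exact ⟨⟨⟨Nat.pos_of_dvd_of_pos h.1 hd'.1.1, (Nat.le_of_dvd hd'.1.1 h.1).trans hd'.1.2⟩,
            hd'.2.squarefree_of_dvd h.1⟩, h⟩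
      rw [hset]
      exact_mod_cast (Nat.sum_totient (Nat.gcd d e)).symm
    have hgl : (Nat.gcd d e : ℝ) * (Nat.lcm d e : ℝ) = d * e := by
      exact_mod_cast Nat.gcd_mul_lcm d e
    have : selLam R d * selLam R e / (Nat.lcm d e : ℝ)
        = (Nat.gcd d e : ℝ) * (selLam R d / d * (selLam R e / e)) := by
      field_simp
      linear_combination (-selLam R d * selLam R e) * hgl
    rw [this, hg, Finset.sum_mul]
    apply Finset.sum_congr rfl
    intro m _
    by_cases h1 : m ∣ d <;> by_cases h2 : m ∣ e <;> simp [h1, h2]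
  rw [Finset.sum_congr rfl (fun d hd => Finset.sum_congr rfl (h1 d hd))]
  have h2 : ∀ d ∈ sqf R, (∑ e ∈ sqf R, ∑ m ∈ sqf R,
      (Nat.totient m : ℝ) * ((if m ∣ d then selLam R d / d else 0) *
          (if m ∣ e then selLam R e / e else 0)))
      = ∑ m ∈ sqf R, (Nat.totient m : ℝ) * ((if m ∣ d then selLam R d / d else 0) *
          ((ArithmeticFunction.moebius m : ℝ) / (Nat.totient m) / selG R)) := by
    intro d _
    rw [Finset.sum_comm]
    apply Finset.sum_congr rfl
    intro m hm
    rw [← Finset.mul_sum, ← Finset.mul_sum, selY hm]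
  rw [Finset.sum_congr rfl h2, Finset.sum_comm]
  have h3 : ∀ m ∈ sqf R, (∑ d ∈ sqf R, (Nat.totient m : ℝ) * ((if m ∣ d then selLam R d / d else 0) *
          ((ArithmeticFunction.moebius m : ℝ) / (Nat.totient m) / selG R)))
        = 1 / (Nat.totient m : ℝ) / selG R ^ 2 := by
    intro m hm
    rw [← Finset.mul_sum, ← Finset.sum_mul, selY hm]
    have hm' := mem_sqf.1 hm
    have ht : (Nat.totient m : ℝ) ≠ 0 := by
      have : 0 < Nat.totient m := Nat.totient_pos.2 hm'.1.1
      positivity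
    have hsq : (ArithmeticFunction.moebius m : ℝ) ^ 2 = 1 := by
      exact_mod_cast ArithmeticFunction.moebius_sq_eq_one_of_squarefree hm'.2
    field_simp
    linear_combination hsq
  rw [Finset.sum_congr rfl h3, ← Finset.sum_div]
  change selG R / selG R ^ 2 = _
  field_simp

lemma log_le_selG {R : ℕ} (hR : 1 ≤ R) : Real.log R ≤ 2 * selG R := by
  have h0 : Real.log R ≤ ∑ n ∈ Finset.Icc 1 R, (1 : ℝ) / n := by
    have h := log_add_one_le_harmonic R
    rw [harmonic_eq_sum_Icc] at h
    push_cast at h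
    have h' : Real.log R ≤ Real.log (R + 1) := by
      apply Real.log_le_log <;> [positivity; linarith]
    simpa [one_div] using h'.trans h
  have h1 : ∑ n ∈ Finset.Icc 1 R, (1 : ℝ) / n
      ≤ ∑ q ∈ sqf R ×ˢ Finset.Icc 1 R, (1 : ℝ) / (q.1 * q.2 ^ 2 : ℕ) := by
    have hsurj : Finset.Icc 1 R ⊆ (sqf R ×ˢ Finset.Icc 1 R).image (fun q : ℕ × ℕ => q.1 * q.2 ^ 2) := by
      intro n hn
      rw [Finset.mem_Icc] at hn
      obtain ⟨a, b, hab, ha⟩ := Nat.sq_mul_squarefree n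
      have ha0 : 0 < a := Nat.pos_of_ne_zero (by rintro rfl; simp at hab; omega)
      have hb0 : 0 < b := Nat.pos_of_ne_zero (by rintro rfl; simp at hab; omega)
      have haR : a ≤ R := by nlinarith [Nat.pow_pos (n := 2) hb0]
      have hbR : b ≤ R := by nlinarith [Nat.pow_pos (n := 2) hb0, Nat.le_mul_of_pos_right (b^2) ha0]
      simp only [Finset.mem_image, Finset.mem_product, mem_sqf, Finset.mem_Icc, Prod.exists]
      exact ⟨a, b, ⟨⟨⟨ha0, haR⟩, ha⟩, hb0, hbR⟩, by rw [mul_comm]; exact hab⟩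
    calc _ ≤ ∑ n ∈ (sqf R ×ˢ Finset.Icc 1 R).image (fun q : ℕ × ℕ => q.1 * q.2 ^ 2),
          (1 : ℝ) / (n : ℕ) := by
          apply Finset.sum_le_sum_of_subset_of_nonneg hsurj
          intros; positivity
      _ ≤ _ := Finset.sum_image_le_of_nonneg (by intros; positivity)
  rw [Finset.sum_product] at h1
  have h2 : ∀ a ∈ sqf R, ∑ b ∈ Finset.Icc 1 R, (1 : ℝ) / (a * b ^ 2 : ℕ)
      ≤ 2 * (1 / (Nat.totient a : ℝ)) := by
    intro a ha
    have ha' := mem_sqf.1 ha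
    have hb : ∑ b ∈ Finset.Icc 1 R, (1 : ℝ) / (b : ℝ) ^ 2 ≤ 2 := by
      have := sum_Ioc_inv_sq_le_sub (α := ℝ) (k := 1) (n := R) one_ne_zero hR
      rw [← Finset.sum_Ioc_add_eq_sum_Icc hR]
      simp only [one_div]
      have hR0 : (0 : ℝ) ≤ (R : ℝ)⁻¹ := by positivity
      norm_num at this ⊢
      linarith
    have ht : 0 < Nat.totient a := Nat.totient_pos.2 ha'.1.1
    have h3 : ∀ b ∈ Finset.Icc 1 R, (1 : ℝ) / (a * b ^ 2 : ℕ) = 1 / a * (1 / (b : ℝ) ^ 2) := by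
      intro b _; push_cast; rw [div_mul_div_comm]; simp
    rw [Finset.sum_congr rfl h3, ← Finset.mul_sum]
    have h4 : (1 : ℝ) / a ≤ 1 / Nat.totient a := by
      apply one_div_le_one_div_of_le
      · exact_mod_cast ht
      · exact_mod_cast Nat.totient_le a
    calc _ ≤ (1 / (Nat.totient a : ℝ)) * 2 := by gcongr
      _ = _ := by ring
  calc _ ≤ _ := h0
    _ ≤ _ := h1
    _ ≤ ∑ a ∈ sqf R, 2 * (1 / (Nat.totient a : ℝ)) := Finset.sum_le_sum h2
    _ = _ := by rw [← Finset.mul_sum]; rfl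

/-- The upper-bound sieve: `R` accounts for the primes up to `R`, and `R⁴` for the rounding errors
in counting multiples, since `|λ_d| ≤ d`. -/
lemma sifted_le {R : ℕ} (hR : 1 ≤ R) (A B : ℕ) (hAB : A ≤ B) :
    (((Finset.Ioc A B).filter Nat.Prime).card : ℝ)
      ≤ R + ((B : ℝ) - A) / selG R + (R : ℝ) ^ 4 := by
  -- primes exceeding `R` are detected by the square of the Selberg weight
  have h1 : (((Finset.Ioc A B).filter Nat.Prime).card : ℝ)
      ≤ R + ∑ n ∈ Finset.Ioc A B, (∑ d ∈ sqf R, if d ∣ n then selLam R d else 0) ^ 2 := by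
    have hc : (((Finset.Ioc A B).filter Nat.Prime).card : ℝ)
        ≤ ((Finset.Ioc 0 R).card : ℝ)
          + (((Finset.Ioc A B).filter (fun p => Nat.Prime p ∧ R < p)).card : ℝ) := by
      have : (Finset.Ioc A B).filter Nat.Prime ⊆ (Finset.Ioc 0 R) ∪
          ((Finset.Ioc A B).filter (fun p => Nat.Prime p ∧ R < p)) := by
        intro p hp
        simp only [Finset.mem_filter, Finset.mem_union, Finset.mem_Ioc] at hp ⊢
        have := hp.2.pos
        by_cases h : R < p
        · exact Or.inr ⟨hp.1, hp.2, h⟩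
        · exact Or.inl ⟨this, not_lt.1 h⟩
      exact_mod_cast (Finset.card_le_card this).trans (Finset.card_union_le _ _)
    refine hc.trans ?_
    gcongr
    · simp
    · rw [Finset.card_filter]
      push_cast
      apply Finset.sum_le_sum
      intro p _
      split_ifs with h
      · have : (∑ d ∈ sqf R, if d ∣ p then selLam R d else 0) = 1 := by
          rw [Finset.sum_eq_single 1]
          · simp [selLam_one hR]
          · intro d hd hd1
            rw [if_neg]
            intro hdp
            rcases (Nat.dvd_prime h.1).1 hdp with h' | h'
            · exact hd1 h'
            · have := (mem_sqf.1 hd).1.2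
              omega
          · intro h'
            exact absurd (mem_sqf.2 ⟨⟨le_rfl, hR⟩, squarefree_one⟩) h'
        rw [this]; norm_num
      · positivity
  have h2 : ∑ n ∈ Finset.Ioc A B, (∑ d ∈ sqf R, if d ∣ n then selLam R d else 0) ^ 2
      = ∑ d ∈ sqf R, ∑ e ∈ sqf R, selLam R d * selLam R e *
        (((Finset.Ioc A B).filter (fun n => Nat.lcm d e ∣ n)).card : ℝ) := by
    have : ∀ n ∈ Finset.Ioc A B, (∑ d ∈ sqf R, if d ∣ n then selLam R d else 0) ^ 2
        = ∑ d ∈ sqf R, ∑ e ∈ sqf R, selLam R d * selLam R e *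
          (if Nat.lcm d e ∣ n then (1 : ℝ) else 0) := by
      intro n _
      rw [sq, Finset.sum_mul_sum]
      refine Finset.sum_congr rfl fun d _ => Finset.sum_congr rfl fun e _ => ?_
      by_cases h1 : d ∣ n <;> by_cases h2 : e ∣ n <;> simp [Nat.lcm_dvd_iff, h1, h2]
    rw [Finset.sum_congr rfl this, Finset.sum_comm]
    refine Finset.sum_congr rfl fun d _ => ?_
    rw [Finset.sum_comm]
    refine Finset.sum_congr rfl fun e _ => ?_
    rw [← Finset.mul_sum, Finset.card_filter]
    push_cast
    rfl
  have hcount : ∀ l : ℕ, 0 < l →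
      |(((Finset.Ioc A B).filter (fun n => l ∣ n)).card : ℝ) - ((B : ℝ) - A) / l| ≤ 1 := by
    intro l hl
    have hl' : (0 : ℝ) < l := by exact_mod_cast hl
    have hB := Nat.Ioc_filter_dvd_card_eq_div B l
    have hA := Nat.Ioc_filter_dvd_card_eq_div A l
    have hun : ((Finset.Ioc 0 B).filter (fun n => l ∣ n)).card
        = ((Finset.Ioc 0 A).filter (fun n => l ∣ n)).card
          + ((Finset.Ioc A B).filter (fun n => l ∣ n)).card := by
      rw [← Finset.card_union_of_disjoint, ← Finset.filter_union,
        Finset.Ioc_union_Ioc_eq_Ioc (Nat.zero_le _) hAB]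
      apply Finset.disjoint_filter_filter
      rw [Finset.disjoint_left]
      intro n hn hn'
      simp only [Finset.mem_Ioc] at hn hn'
      omega
    rw [hA, hB] at hun
    have e1 : ((B / l : ℕ) : ℝ) = ((A / l : ℕ) : ℝ)
        + (((Finset.Ioc A B).filter (fun n => l ∣ n)).card : ℝ) := by exact_mod_cast hun
    have b1 : ((B / l : ℕ) : ℝ) ≤ B / l := Nat.cast_div_le
    have a1 : ((A / l : ℕ) : ℝ) ≤ A / l := Nat.cast_div_le
    have b2 : (B : ℝ) / l < ((B / l : ℕ) : ℝ) + 1 := by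
      rw [div_lt_iff₀ hl', mul_comm]; exact_mod_cast Nat.lt_mul_div_succ B hl
    have a2 : (A : ℝ) / l < ((A / l : ℕ) : ℝ) + 1 := by
      rw [div_lt_iff₀ hl', mul_comm]; exact_mod_cast Nat.lt_mul_div_succ A hl
    rw [sub_div, abs_le]
    constructor <;> linarith
  have h3 : ∑ d ∈ sqf R, ∑ e ∈ sqf R, selLam R d * selLam R e *
        (((Finset.Ioc A B).filter (fun n => Nat.lcm d e ∣ n)).card : ℝ)
      ≤ ∑ d ∈ sqf R, ∑ e ∈ sqf R, (((B : ℝ) - A) * (selLam R d * selLam R e / (Nat.lcm d e : ℝ))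
        + (R : ℝ) * R) := by
    refine Finset.sum_le_sum fun d hd => Finset.sum_le_sum fun e he => ?_
    have hd' := mem_sqf.1 hd
    have he' := mem_sqf.1 he
    have hc := hcount (Nat.lcm d e) (Nat.lcm_pos hd'.1.1 he'.1.1)
    set c : ℝ := (((Finset.Ioc A B).filter (fun n => Nat.lcm d e ∣ n)).card : ℝ)
    have hd1 : |selLam R d| ≤ R := (abs_selLam_le hR d).trans (by exact_mod_cast hd'.1.2)
    have he1 : |selLam R e| ≤ R := (abs_selLam_le hR e).trans (by exact_mod_cast he'.1.2)
    have hp : |selLam R d * selLam R e * (c - ((B : ℝ) - A) / (Nat.lcm d e : ℕ))| ≤ R * R * 1 := by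
      rw [abs_mul, abs_mul]
      gcongr
    have := le_of_abs_le hp
    have e2 : selLam R d * selLam R e * c = selLam R d * selLam R e *
        (c - ((B : ℝ) - A) / (Nat.lcm d e : ℕ))
        + ((B : ℝ) - A) * (selLam R d * selLam R e / (Nat.lcm d e : ℝ)) := by ring
    rw [e2]; linarith
  have hcard : ((sqf R).card : ℝ) ≤ R := by
    have : (sqf R).card ≤ (Finset.Icc 1 R).card := Finset.card_filter_le _ _
    simp at this
    exact_mod_cast this
  have h4 : ∑ d ∈ sqf R, ∑ e ∈ sqf R, (((B : ℝ) - A) * (selLam R d * selLam R e / (Nat.lcm d e : ℝ))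
        + (R : ℝ) * R) ≤ ((B : ℝ) - A) / selG R + (R : ℝ) ^ 4 := by
    simp only [Finset.sum_add_distrib, ← Finset.mul_sum, selQuad hR, Finset.sum_const, nsmul_eq_mul]
    have : ((sqf R).card : ℝ) * (((sqf R).card : ℝ) * ((R : ℝ) * R)) ≤ R * (R * (R * R)) := by
      gcongr
    have e : ((B : ℝ) - A) * (1 / selG R) = ((B : ℝ) - A) / selG R := by ring
    rw [e]
    nlinarith
  linarith

/-- Brun–Titchmarsh up to a constant: an interval of length `H` contains `≪ H / log H` primes. -/
lemma primes_short : ∃ C : ℝ, 0 < C ∧ ∀ (A B : ℕ) (H : ℝ), A ≤ B → 2 ≤ H → (B : ℝ) - A ≤ H →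
    (((Finset.Ioc A B).filter Nat.Prime).card : ℝ) ≤ C * (H / Real.log H) := by
  refine ⟨64, by norm_num, ?_⟩
  intro A B H hAB hH hBA
  have hH0 : 0 < H := by linarith
  have hlog : 0 < Real.log H := Real.log_pos (by linarith)
  by_cases hbig : H < 2 ^ 16
  · have h1 : (((Finset.Ioc A B).filter Nat.Prime).card : ℝ) ≤ H := by
      have : ((Finset.Ioc A B).filter Nat.Prime).card ≤ (Finset.Ioc A B).card :=
        Finset.card_filter_le _ _
      have h2 : (((Finset.Ioc A B).filter Nat.Prime).card : ℝ) ≤ ((B - A : ℕ) : ℝ) := by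
        simp at this
        exact_mod_cast this
      rw [Nat.cast_sub hAB] at h2
      linarith
    have h2 : Real.log H ≤ 64 := by
      calc Real.log H ≤ Real.log (2 ^ 16) := Real.log_le_log hH0 hbig.le
        _ = 16 * Real.log 2 := by rw [Real.log_pow]; norm_num
        _ ≤ 64 := by linarith [Real.log_two_lt_d9]
    refine h1.trans ?_
    rw [← mul_div_assoc, le_div_iff₀ hlog]
    nlinarith
  · push Not at hbig
    set z : ℝ := H ^ (1 / 8 : ℝ) with hz
    have hz8 : z ^ 8 = H := by
      rw [hz, ← Real.rpow_natCast, ← Real.rpow_mul hH0.le]; norm_num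
    have hz0 : 0 < z := Real.rpow_pos_of_pos hH0 _
    have hz4 : 4 ≤ z := by
      by_contra h
      push Not at h
      have : z ^ 8 < 4 ^ 8 := pow_lt_pow_left₀ h hz0.le (by norm_num)
      rw [hz8] at this
      norm_num at this hbig
      linarith
    set R := ⌊z⌋₊ with hRdef
    have hRz : (R : ℝ) ≤ z := Nat.floor_le hz0.le
    have hzR : z < R + 1 := Nat.lt_floor_add_one z
    have hR1 : (1 : ℝ) ≤ R := by linarith
    have hR : 1 ≤ R := by exact_mod_cast hR1
    have hRlog : Real.log H ≤ 16 * Real.log R := by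
      have : H ≤ (R : ℝ) ^ 16 := by
        rw [← hz8]
        have : z ≤ (R : ℝ) ^ 2 := by nlinarith
        calc z ^ 8 ≤ ((R : ℝ) ^ 2) ^ 8 := by gcongr
          _ = _ := by ring
      calc Real.log H ≤ Real.log ((R : ℝ) ^ 16) := Real.log_le_log hH0 this
        _ = _ := by rw [Real.log_pow]; norm_num
    have hG : Real.log H / 32 ≤ selG R := by linarith [log_le_selG hR]
    have h1 := sifted_le hR A B hAB
    have h2 : ((B : ℝ) - A) / selG R ≤ 32 * (H / Real.log H) := by
      calc ((B : ℝ) - A) / selG R ≤ H / (Real.log H / 32) := by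
            apply div_le_div₀ hH0.le hBA (by positivity) hG
        _ = _ := by field_simp
    have h3 : (R : ℝ) + (R : ℝ) ^ 4 ≤ 2 * z ^ 4 := by
      have a : (R : ℝ) ^ 4 ≤ z ^ 4 := by gcongr
      have b : (R : ℝ) ≤ (R : ℝ) ^ 4 := le_self_pow₀ hR1 (by norm_num)
      linarith
    have h4 : Real.log H ≤ 8 * z ^ 4 := by
      rw [← hz8, Real.log_pow]
      have := Real.log_le_self hz0.le
      have b : z ≤ z ^ 4 := le_self_pow₀ (by linarith) (by norm_num)
      push_cast
      linarith
    have h5 : 2 * z ^ 4 ≤ 16 * (H / Real.log H) := by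
      rw [← mul_div_assoc, le_div_iff₀ hlog]
      calc 2 * z ^ 4 * Real.log H ≤ 2 * z ^ 4 * (8 * z ^ 4) := by gcongr
        _ = 16 * z ^ 8 := by ring
        _ = 16 * H := by rw [hz8]
    have : 0 ≤ H / Real.log H := by positivity
    linarith

/-- The `log p / p`-mass of primes in `(y/(1+δ), y]` is `≪ δ` as soon as `y ≥ 16/δ²`. -/
lemma primes_log_short : ∃ C : ℝ, 0 < C ∧ ∀ δ y : ℝ, 0 < δ → δ ≤ 1 → 16 / δ ^ 2 ≤ y →
    ∑ p ∈ (Finset.Ioc ⌊y / (1 + δ)⌋₊ ⌊y⌋₊).filter Nat.Prime, Real.log p / p ≤ C * δ := by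
  obtain ⟨C, hC, h⟩ := primes_short
  refine ⟨16 * C, by positivity, ?_⟩
  intro δ y hδ hδ1 hy
  have hy16 : 16 ≤ y := by
    refine le_trans ?_ hy
    rw [le_div_iff₀ (by positivity)]
    nlinarith
  have hy0 : 0 < y := by linarith
  have hsq : 4 ≤ δ * Real.sqrt y := by
    have h1 : Real.sqrt (16 / δ ^ 2) ≤ Real.sqrt y := Real.sqrt_le_sqrt hy
    have h2 : Real.sqrt (16 / δ ^ 2) = 4 / δ := by
      rw [show (16 : ℝ) / δ ^ 2 = (4 / δ) ^ 2 by rw [div_pow]; norm_num]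
      exact Real.sqrt_sq (by positivity)
    rw [h2, div_le_iff₀ hδ] at h1
    linarith
  have hs := Real.sq_sqrt hy0.le
  have hs0 : 0 < Real.sqrt y := Real.sqrt_pos.2 hy0
  have hyd : y - y / (1 + δ) ≤ δ * y := by
    rw [sub_le_iff_le_add, ← sub_le_iff_le_add', le_div_iff₀ (by linarith)]
    nlinarith [mul_pos hδ hδ]
  have hydle : y / (1 + δ) ≤ y := by
    rw [div_le_iff₀ (by linarith)]; nlinarith
  set H := 2 * (δ * y) with hH
  have hHs : Real.sqrt y ≤ H := by nlinarith
  have hH8 : 8 ≤ H := by nlinarith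
  have hfl : (⌊y⌋₊ : ℝ) - ⌊y / (1 + δ)⌋₊ ≤ H := by
    have h1 := Nat.floor_le hy0.le
    have h2 := Nat.lt_floor_add_one (y / (1 + δ))
    linarith
  have hcard := h ⌊y / (1 + δ)⌋₊ ⌊y⌋₊ H (Nat.floor_le_floor hydle) (by linarith) hfl
  have hlogy : 0 < Real.log y := Real.log_pos (by linarith)
  have hlogH : Real.log y / 2 ≤ Real.log H := by
    rw [← Real.log_sqrt hy0.le]
    exact Real.log_le_log hs0 hHs
  have hterm : ∀ p ∈ (Finset.Ioc ⌊y / (1 + δ)⌋₊ ⌊y⌋₊).filter Nat.Prime,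
      Real.log p / p ≤ 2 * Real.log y / y := by
    intro p hp
    simp only [Finset.mem_filter, Finset.mem_Ioc] at hp
    have hpy : (p : ℝ) ≤ y := (Nat.le_floor_iff hy0.le).1 hp.1.2
    have hp0 : (0 : ℝ) < p := by exact_mod_cast hp.2.pos
    have hpl : y / 2 ≤ p := by
      have h1 : y / (1 + δ) < p := (Nat.floor_lt (by positivity)).1 hp.1.1
      have h2 : y / 2 ≤ y / (1 + δ) := by gcongr; linarith
      linarith
    calc Real.log p / p ≤ Real.log y / (y / 2) := by
          apply div_le_div₀ hlogy.le (Real.log_le_log hp0 hpy) (by positivity) hpl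
      _ = _ := by field_simp
  calc _ ≤ ∑ p ∈ (Finset.Ioc ⌊y / (1 + δ)⌋₊ ⌊y⌋₊).filter Nat.Prime, 2 * Real.log y / y :=
        Finset.sum_le_sum hterm
    _ = (((Finset.Ioc ⌊y / (1 + δ)⌋₊ ⌊y⌋₊).filter Nat.Prime).card : ℝ) * (2 * Real.log y / y) := by
        rw [Finset.sum_const, nsmul_eq_mul]
    _ ≤ C * (H / (Real.log y / 2)) * (2 * Real.log y / y) := by
        gcongr
        exact hcard.trans (by gcongr)
    _ = 8 * C * δ := by rw [hH]; field_simp; norm_num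
    _ ≤ _ := by nlinarith [mul_pos hC hδ]

/-! ### Bounds for the Dirichlet series of `1`, `log` and `Λ` to the right of the line `Re = 1` -/

lemma inv_mul_sqrt_le_telescope {k : ℝ} (hk : 1 ≤ k) :
    1 / (k * √k) ≤ 4 * (1 / √k - 1 / √(k + 1)) := by
  have hk0 : 0 < k := by linarith
  set a := √k with ha
  set b := √(k + 1) with hb
  have ha0 : 0 < a := Real.sqrt_pos.2 hk0
  have hb0 : 0 < b := Real.sqrt_pos.2 (by linarith)
  have ha2 : a ^ 2 = k := Real.sq_sqrt hk0.le
  have hb2 : b ^ 2 = k + 1 := Real.sq_sqrt (by linarith)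
  have hab : b ≤ 3 / 2 * a := by
    nlinarith
  have hab' : a ≤ b := Real.sqrt_le_sqrt (by linarith)
  have hd : (b - a) * (b + a) = 1 := by nlinarith
  have e : 1 / a - 1 / b = 1 / (a * b * (b + a)) := by
    field_simp
    nlinarith
  rw [e, ← ha2, mul_one_div, div_le_div_iff₀ (by positivity) (by positivity), one_mul]
  have h1 : b * (b + a) ≤ 4 * a ^ 2 := by nlinarith
  nlinarith [mul_le_mul_of_nonneg_left h1 ha0.le]

/-- Comparison of a tail of a series with an antiderivative `Φ` vanishing at infinity. -/
lemma tail_compare (φ φ' Φ : ℝ → ℂ) (N : ℕ) (hN : 1 ≤ N) (B : ℝ) (hB : 0 ≤ B)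
    (h1 : ∀ u : ℝ, N ≤ u → HasDerivAt Φ (φ u) u)
    (h2 : ∀ u : ℝ, N ≤ u → HasDerivAt φ (φ' u) u)
    (h3 : ∀ u : ℝ, N ≤ u → ‖φ' u‖ ≤ B * (1 / (u * √u)))
    (hΦ : Filter.Tendsto Φ Filter.atTop (nhds 0)) (hs : Summable fun n : ℕ => φ (n : ℝ)) :
    ‖∑' n : ℕ, φ ((n + (N + 1) : ℕ) : ℝ) + Φ N‖ ≤ 4 * B / √N := by
  have hN1 : (1 : ℝ) ≤ N := by exact_mod_cast hN
  have step : ∀ k : ℝ, (N : ℝ) ≤ k →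
      ‖φ (k + 1) - (Φ (k + 1) - Φ k)‖ ≤ B * (4 * (1 / √k - 1 / √(k + 1))) := by
    intro k hk
    have hk1 : 1 ≤ k := hN1.trans hk
    have hk0 : 0 < k := by linarith
    have d1 : ∀ u ∈ Set.Icc k (k + 1), ‖φ u - φ (k + 1)‖ ≤ B * (1 / (k * √k)) := by
      intro u hu
      have := Convex.norm_image_sub_le_of_norm_hasDerivWithin_le (f := φ) (f' := φ')
        (s := Set.Icc k (k + 1)) (x := k + 1) (y := u) (C := B * (1 / (k * √k)))
        (fun v hv => (h2 v (hk.trans hv.1)).hasDerivWithinAt)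
        (fun v hv => (h3 v (hk.trans hv.1)).trans (by
          have := hv.1
          have hv0 : 0 ≤ v := hk0.le.trans this
          gcongr)) (convex_Icc _ _)
        (by constructor <;> linarith) hu
      refine this.trans ?_
      have h : ‖u - (k + 1)‖ ≤ 1 := by
        rw [Real.norm_eq_abs, abs_le]; constructor <;> linarith [hu.1, hu.2]
      exact mul_le_of_le_one_right (by positivity) h
    have d2 := Convex.norm_image_sub_le_of_norm_hasDerivWithin_le
      (f := fun u : ℝ => Φ u - u * φ (k + 1)) (f' := fun u => φ u - φ (k + 1))
      (s := Set.Icc k (k + 1)) (x := k) (y := k + 1) (C := B * (1 / (k * √k)))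
      (fun v hv => ((h1 v (hk.trans hv.1)).sub
        (by simpa using (Complex.ofRealCLM.hasDerivAt (x := v)).mul_const (φ (k + 1)))).hasDerivWithinAt)
      d1 (convex_Icc _ _) (by constructor <;> linarith) (by constructor <;> linarith)
    have e : Φ (k + 1) - ((k + 1 : ℝ) : ℂ) * φ (k + 1) - (Φ k - (k : ℂ) * φ (k + 1))
        = -(φ (k + 1) - (Φ (k + 1) - Φ k)) := by push_cast; ring
    rw [e, norm_neg] at d2
    refine d2.trans ?_
    have : ‖k + 1 - k‖ = 1 := by simp
    rw [this, mul_one]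
    exact mul_le_mul_of_nonneg_left (inv_mul_sqrt_le_telescope hk1) hB
  have part : ∀ m : ℕ, ‖∑ n ∈ range m, φ ((n + (N + 1) : ℕ) : ℝ) - (Φ ((N + m : ℕ) : ℝ) - Φ N)‖
      ≤ B * (4 * (1 / √N - 1 / √((N + m : ℕ) : ℝ))) := by
    intro m
    induction m with
    | zero => simp
    | succ m ih =>
      have hst := step ((N + m : ℕ) : ℝ) (by push_cast; linarith [(Nat.cast_nonneg m : (0:ℝ) ≤ m)])
      have c1 : (((N + m : ℕ) : ℝ) + 1) = ((N + (m + 1) : ℕ) : ℝ) := by push_cast; ring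
      have c2 : ((m + (N + 1) : ℕ) : ℝ) = ((N + (m + 1) : ℕ) : ℝ) := by push_cast; ring
      rw [c1] at hst
      rw [Finset.sum_range_succ, c2]
      calc _ = ‖(∑ n ∈ range m, φ ((n + (N + 1) : ℕ) : ℝ) - (Φ ((N + m : ℕ) : ℝ) - Φ N))
            + (φ ((N + (m + 1) : ℕ) : ℝ)
              - (Φ ((N + (m + 1) : ℕ) : ℝ) - Φ ((N + m : ℕ) : ℝ)))‖ := by
            congr 1; ring
        _ ≤ _ := (norm_add_le _ _).trans (add_le_add ih hst)
        _ = _ := by ring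
  have hlim : Filter.Tendsto
      (fun m : ℕ => ‖∑ n ∈ range m, φ ((n + (N + 1) : ℕ) : ℝ) - (Φ ((N + m : ℕ) : ℝ) - Φ N)‖)
      Filter.atTop (nhds ‖∑' n : ℕ, φ ((n + (N + 1) : ℕ) : ℝ) - (0 - Φ N)‖) := by
    have hs' : Summable fun n : ℕ => φ ((n + (N + 1) : ℕ) : ℝ) :=
      (summable_nat_add_iff (f := fun n : ℕ => φ (n : ℝ)) (N + 1)).2 hs
    refine (hs'.hasSum.tendsto_sum_nat.sub (Filter.Tendsto.sub ?_ tendsto_const_nhds)).norm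
    refine hΦ.comp ?_
    exact tendsto_natCast_atTop_atTop.comp
      (Filter.tendsto_atTop_mono (fun m => Nat.le_add_left m N) Filter.tendsto_id)
  have := le_of_tendsto hlim (Filter.Eventually.of_forall fun m => (part m).trans
    (show _ ≤ 4 * B / √N from by
      have : 0 ≤ 1 / √((N + m : ℕ) : ℝ) := by positivity
      have h4 : 4 * B / √N = B * (4 * (1 / √N)) := by ring
      rw [h4]
      gcongr
      linarith))
  simpa [sub_eq_add_neg] using this

lemma norm_cpow_neg_le {u : ℝ} (hu : 1 ≤ u) {z : ℂ} {r : ℝ} (hz : z.re ≤ r) :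
    ‖(u : ℂ) ^ z‖ ≤ u ^ r := by
  rw [Complex.norm_cpow_eq_rpow_re_of_pos (by linarith)]
  exact Real.rpow_le_rpow_of_exponent_le hu hz

lemma tendsto_cpow_neg {s : ℂ} (hs : 0 < s.re) :
    Filter.Tendsto (fun u : ℝ => (u : ℂ) ^ (-s)) Filter.atTop (nhds 0) := by
  rw [tendsto_zero_iff_norm_tendsto_zero]
  refine (tendsto_rpow_neg_atTop hs).congr' ?_
  filter_upwards [Filter.eventually_gt_atTop 0] with u hu
  rw [Complex.norm_cpow_eq_rpow_re_of_pos hu]; simp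

lemma tendsto_log_mul_cpow_neg {s : ℂ} (hs : 0 < s.re) :
    Filter.Tendsto (fun u : ℝ => (Real.log u : ℂ) * (u : ℂ) ^ (-s)) Filter.atTop (nhds 0) := by
  rw [tendsto_zero_iff_norm_tendsto_zero]
  have := (isLittleO_log_rpow_atTop hs).tendsto_div_nhds_zero.norm
  rw [norm_zero] at this
  refine this.congr' ?_
  filter_upwards [Filter.eventually_gt_atTop 0] with u hu
  rw [norm_mul, Complex.norm_cpow_eq_rpow_re_of_pos hu, norm_div, Complex.norm_real,
    Complex.neg_re, Real.rpow_neg hu.le, div_eq_mul_inv, Real.norm_of_nonneg (by positivity : 0 ≤ u ^ s.re)]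

lemma sum_range_inv_le (N : ℕ) : ∑ n ∈ range (N + 1), (1 : ℝ) / n ≤ 1 + Real.log N := by
  have := harmonic_le_one_add_log N
  rw [harmonic_eq_sum_Icc] at this
  push_cast at this
  refine le_trans (le_of_eq ?_) this
  rw [Finset.range_eq_Ico, Finset.sum_eq_sum_Ico_succ_bot (by omega)]
  simp only [Nat.cast_zero, div_zero, zero_add, one_div]
  rfl

lemma one_le_log_three_add (t : ℝ) : 1 ≤ Real.log (3 + |t|) := by
  rw [Real.le_log_iff_exp_le (by positivity)]
  linarith [Real.exp_one_lt_d9, abs_nonneg t]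

lemma log_ceil_le (t : ℝ) : Real.log (⌈(2 + |t|) ^ 2⌉₊ : ℝ) ≤ 2 * Real.log (3 + |t|) := by
  have h := abs_nonneg t
  have : (⌈(2 + |t|) ^ 2⌉₊ : ℝ) ≤ (3 + |t|) ^ 2 := by
    have := Nat.ceil_lt_add_one (show 0 ≤ (2 + |t|) ^ 2 by positivity)
    nlinarith
  have h0 : (0 : ℝ) < (⌈(2 + |t|) ^ 2⌉₊ : ℝ) := by
    refine lt_of_lt_of_le ?_ (Nat.le_ceil _); positivity
  calc _ ≤ Real.log ((3 + |t|) ^ 2) := Real.log_le_log h0 this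
    _ = _ := by rw [Real.log_pow]; norm_num

lemma norm_one_add_le {s : ℂ} (hs : 0 < s.re) (hs1 : s.re ≤ 1) : ‖1 + s‖ ≤ 2 + |s.im| := by
  refine (Complex.norm_le_abs_re_add_abs_im _).trans ?_
  simp only [Complex.add_re, Complex.one_re, Complex.add_im, Complex.one_im, zero_add]
  gcongr
  rw [abs_of_pos (by linarith)]; linarith

lemma one_le_norm_one_add {s : ℂ} (hs : 0 < s.re) : 1 ≤ ‖1 + s‖ := by
  refine le_trans ?_ (Complex.re_le_norm _)
  simp only [Complex.add_re, Complex.one_re]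
  linarith

lemma four_mul_div_sqrt_ceil_le {s : ℂ} (hs : 0 < s.re) (hs1 : s.re ≤ 1) :
    4 * (3 * ‖1 + s‖) / √(⌈(2 + |s.im|) ^ 2⌉₊ : ℝ) ≤ 12 := by
  have h1 := norm_one_add_le hs hs1
  have h2 : 2 + |s.im| ≤ √(⌈(2 + |s.im|) ^ 2⌉₊ : ℝ) :=
    Real.le_sqrt_of_sq_le (Nat.le_ceil _)
  have h3 : 0 < √(⌈(2 + |s.im|) ^ 2⌉₊ : ℝ) := lt_of_lt_of_le (by positivity) h2
  rw [div_le_iff₀ h3]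
  linarith

lemma rpow_neg_two_le {u : ℝ} (hu : 1 ≤ u) : u ^ (-2 : ℝ) ≤ 1 / (u * √u) := by
  have h0 : 0 < u := by linarith
  rw [Real.rpow_neg h0.le, ← one_div]
  norm_num
  rw [← mul_inv]
  gcongr
  rw [sq]
  gcongr
  rw [Real.sqrt_le_left h0.le]
  nlinarith

lemma log_mul_rpow_neg_two_le {u : ℝ} (hu : 1 ≤ u) :
    Real.log u * u ^ (-2 : ℝ) ≤ 2 * (1 / (u * √u)) := by
  have h0 : 0 < u := by linarith
  have hs : 0 < √u := Real.sqrt_pos.2 h0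
  have h1 : Real.log u ≤ 2 * √u := by
    have h := Real.log_le_sub_one_of_pos hs
    rw [Real.log_sqrt h0.le] at h
    linarith
  have h2 : u ^ (-2 : ℝ) = 1 / (u * √u) * (1 / √u) := by
    have : √u * √u = u := Real.mul_self_sqrt h0.le
    rw [Real.rpow_neg h0.le]
    norm_num
    field_simp
    rw [sq, this]
  rw [h2]
  calc _ ≤ 2 * √u * (1 / (u * √u) * (1 / √u)) := by gcongr
    _ = _ := by field_simp

/-- `ζ(1+s) ≪ log(3+|t|) + 1/|s|`. -/
lemma zeta_bound {s : ℂ} (hs : 0 < s.re) (hs1 : s.re ≤ 1) :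
    ‖riemannZeta (1 + s)‖ ≤ 15 * Real.log (3 + |s.im|) + 1 / ‖s‖ := by
  have hsne : s ≠ 0 := by rintro rfl; simp at hs
  have h1s : (-1 - s) ≠ 0 := by
    intro h; have := congrArg Complex.re h; simp at this; linarith
  set N := ⌈(2 + |s.im|) ^ 2⌉₊ with hN
  have hN1 : 1 ≤ N := Nat.ceil_pos.2 (by positivity)
  have hN1' : (1 : ℝ) ≤ N := by exact_mod_cast hN1
  have hz : 1 < (1 + s).re := by simpa using hs
  have hsum : Summable fun n : ℕ => ((n : ℝ) : ℂ) ^ (-1 - s) := by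
    have := Complex.summable_one_div_nat_cpow.2 hz
    refine this.congr fun n => ?_
    rw [one_div, ← Complex.cpow_neg]; push_cast; ring_nf
  have htail := tail_compare (fun u : ℝ => (u : ℂ) ^ (-1 - s))
    (fun u => (-1 - s) * (u : ℂ) ^ (-1 - s - 1)) (fun u => (u : ℂ) ^ (-s) * (-1 / s)) N hN1
    (3 * ‖1 + s‖) (by positivity)
    (by
      intro u hu
      have hu0 : u ≠ 0 := by intro h; rw [h] at hu; linarith
      have := (hasDerivAt_ofReal_cpow_const hu0 (neg_ne_zero.2 hsne)).mul_const (-1 / s)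
      refine HasDerivAt.congr_deriv this ?_
      rw [show -1 - s = -s - 1 by ring]
      field_simp)
    (by
      intro u hu
      have hu0 : u ≠ 0 := by intro h; rw [h] at hu; linarith
      exact hasDerivAt_ofReal_cpow_const hu0 h1s)
    (by
      intro u hu
      have hu1 : 1 ≤ u := hN1'.trans hu
      have h1 : ‖-1 - s‖ = ‖1 + s‖ := by rw [← norm_neg]; congr 1; ring
      rw [norm_mul, h1]
      have h2 := norm_cpow_neg_le hu1 (z := -1 - s - 1) (r := -2) (by simp; linarith)
      have h3 := rpow_neg_two_le hu1
      have h4 : 0 ≤ 1 / (u * √u) := by positivity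
      have h5 : ‖1 + s‖ * ‖(u : ℂ) ^ (-1 - s - 1)‖ ≤ ‖1 + s‖ * (1 / (u * √u)) := by
        gcongr; exact h2.trans h3
      nlinarith [mul_nonneg (norm_nonneg (1 + s)) h4])
    (by simpa using (tendsto_cpow_neg hs).mul_const (-1 / s)) hsum
  have hζ : riemannZeta (1 + s) = ∑' n : ℕ, ((n : ℝ) : ℂ) ^ (-1 - s) := by
    rw [zeta_eq_tsum_one_div_nat_cpow hz]
    refine tsum_congr fun n => ?_
    rw [one_div, ← Complex.cpow_neg]; push_cast; ring_nf
  rw [hζ, ← hsum.sum_add_tsum_nat_add (N + 1)]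
  have hhead : ‖∑ n ∈ range (N + 1), ((n : ℝ) : ℂ) ^ (-1 - s)‖ ≤ 1 + Real.log N := by
    refine (norm_sum_le _ _).trans (le_trans (Finset.sum_le_sum fun n _ => ?_) (sum_range_inv_le N))
    rcases Nat.eq_zero_or_pos n with rfl | hn
    · simp [Complex.zero_cpow h1s]
    · have hn1 : (1 : ℝ) ≤ n := by exact_mod_cast hn
      refine (norm_cpow_neg_le hn1 (r := -1) (by simp; linarith)).trans ?_
      rw [Real.rpow_neg_one, one_div]
  have hΦ : ‖((N : ℝ) : ℂ) ^ (-s) * (-1 / s)‖ ≤ 1 / ‖s‖ := by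
    rw [norm_mul, norm_div, norm_neg, norm_one]
    have := norm_cpow_neg_le hN1' (z := -s) (r := 0) (by simp; linarith)
    rw [Real.rpow_zero] at this
    exact mul_le_of_le_one_left (by positivity) this
  have h12 := htail.trans (four_mul_div_sqrt_ceil_le hs hs1)
  have hl := log_ceil_le s.im
  have hl1 := one_le_log_three_add s.im
  set S := ∑' n : ℕ, (((n + (N + 1) : ℕ) : ℝ) : ℂ) ^ (-1 - s)
  have hS : ‖S‖ ≤ 12 + 1 / ‖s‖ := by
    have : S = (S + ((N : ℝ) : ℂ) ^ (-s) * (-1 / s)) - ((N : ℝ) : ℂ) ^ (-s) * (-1 / s) := by ring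
    rw [this]
    exact (norm_sub_le _ _).trans (add_le_add h12 hΦ)
  refine (norm_add_le _ _).trans ?_
  linarith

/-- `ζ'(1+s) ≪ log²(3+|t|) + 1/|s|²`, stated for the Dirichlet series of `log`. -/
lemma Llog_bound {s : ℂ} (hs : 0 < s.re) (hs1 : s.re ≤ 1) :
    ‖∑' n : ℕ, (Real.log n : ℂ) * (n : ℂ) ^ (-1 - s)‖
      ≤ 19 * Real.log (3 + |s.im|) ^ 2 + 2 / ‖s‖ ^ 2 := by
  have hsne : s ≠ 0 := by rintro rfl; simp at hs
  have h1s : (-1 - s) ≠ 0 := by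
    intro h; have := congrArg Complex.re h; simp at this; linarith
  set N := ⌈(2 + |s.im|) ^ 2⌉₊ with hN
  have hN1 : 1 ≤ N := Nat.ceil_pos.2 (by positivity)
  have hN1' : (1 : ℝ) ≤ N := by exact_mod_cast hN1
  have hsum : Summable fun n : ℕ => (Real.log ((n : ℝ)) : ℂ) * ((n : ℝ) : ℂ) ^ (-1 - s) := by
    have : LSeriesSummable (LSeries.logMul 1) (1 + s) := by
      apply LSeriesSummable_logMul_of_lt_re
      have : LSeries.abscissaOfAbsConv (1 : ℕ → ℂ) = 1 := by
        simpa using ArithmeticFunction.abscissaOfAbsConv_zeta ▸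
          (LSeries.abscissaOfAbsConv_congr (f := (1 : ℕ → ℂ)) (g := fun n => (ArithmeticFunction.zeta n : ℂ))
            (fun {n} hn => by simp [hn]))
      rw [this]
      exact_mod_cast (by simpa using hs : (1:ℝ) < (1 + s).re)
    refine Summable.congr this fun n => ?_
    rw [LSeries.term_def]
    rcases Nat.eq_zero_or_pos n with rfl | hn
    · simp
    · rw [if_neg hn.ne', LSeries.logMul, div_eq_mul_inv, ← Complex.cpow_neg]
      simp only [Pi.one_apply, mul_one, Complex.natCast_log, Complex.ofReal_natCast]
      ring_nf
  have htail := tail_compare (fun u : ℝ => (Real.log u : ℂ) * (u : ℂ) ^ (-1 - s))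
    (fun u => (1 + Real.log u * (-1 - s)) * (u : ℂ) ^ (-1 - s - 1))
    (fun u => ((Real.log u : ℂ) * (u : ℂ) ^ (-s)) * (-1 / s) + (u : ℂ) ^ (-s) * (-1 / s ^ 2)) N hN1
    (3 * ‖1 + s‖) (by positivity)
    (by
      intro u hu
      have hu0 : 0 < u := by linarith
      have hl : HasDerivAt (fun u : ℝ => (Real.log u : ℂ)) ((u⁻¹ : ℝ) : ℂ) u :=
        (Real.hasDerivAt_log hu0.ne').ofReal_comp
      have hp := hasDerivAt_ofReal_cpow_const hu0.ne' (neg_ne_zero.2 hsne)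
      have := ((hl.mul hp).mul_const (-1 / s)).add (hp.mul_const (-1 / s ^ 2))
      refine HasDerivAt.congr_deriv this ?_
      rw [show -1 - s = -s - 1 by ring, show (u : ℂ) ^ (-s) = (u : ℂ) ^ (-s - 1) * u by
        rw [Complex.cpow_sub _ _ (by exact_mod_cast hu0.ne'), Complex.cpow_one]
        field_simp [(by exact_mod_cast hu0.ne' : (u : ℂ) ≠ 0)]]
      have hu' : (u : ℂ) ≠ 0 := by exact_mod_cast hu0.ne'
      push_cast
      field_simp
      ring)
    (by
      intro u hu
      have hu0 : 0 < u := by linarith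
      have hl : HasDerivAt (fun u : ℝ => (Real.log u : ℂ)) ((u⁻¹ : ℝ) : ℂ) u :=
        (Real.hasDerivAt_log hu0.ne').ofReal_comp
      have hp := hasDerivAt_ofReal_cpow_const hu0.ne' h1s
      refine HasDerivAt.congr_deriv (hl.mul hp) ?_
      have hu' : (u : ℂ) ≠ 0 := by exact_mod_cast hu0.ne'
      rw [show (u : ℂ) ^ (-1 - s) = (u : ℂ) ^ (-1 - s - 1) * u by
        rw [Complex.cpow_sub _ 1 hu', Complex.cpow_one]
        field_simp]
      push_cast
      field_simp)
    (by
      intro u hu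
      have hu1 : 1 ≤ u := hN1'.trans hu
      have hl0 : 0 ≤ Real.log u := Real.log_nonneg hu1
      have h1 : ‖1 + Real.log u * (-1 - s)‖ ≤ 1 + Real.log u * ‖1 + s‖ := by
        refine (norm_add_le _ _).trans ?_
        rw [norm_one, norm_mul, Complex.norm_real, Real.norm_of_nonneg hl0]
        rw [show -1 - s = -(1 + s) by ring, norm_neg]
      rw [norm_mul]
      have h2 := norm_cpow_neg_le hu1 (z := -1 - s - 1) (r := -2) (by simp; linarith)
      have h3 := rpow_neg_two_le hu1
      have h4 := log_mul_rpow_neg_two_le hu1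
      have h5 := one_le_norm_one_add hs
      have hu0 : 0 < u := by linarith
      have h6 : 0 ≤ 1 / (u * √u) := by positivity
      calc _ ≤ (1 + Real.log u * ‖1 + s‖) * u ^ (-2 : ℝ) := by gcongr
        _ = u ^ (-2 : ℝ) + ‖1 + s‖ * (Real.log u * u ^ (-2 : ℝ)) := by ring
        _ ≤ 1 / (u * √u) + ‖1 + s‖ * (2 * (1 / (u * √u))) := by gcongr
        _ ≤ _ := by nlinarith)
    (by simpa using ((tendsto_log_mul_cpow_neg hs).mul_const (-1 / s)).add
          ((tendsto_cpow_neg hs).mul_const (-1 / s ^ 2))) hsum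
  have hcast : ∑' n : ℕ, (Real.log n : ℂ) * (n : ℂ) ^ (-1 - s)
      = ∑' n : ℕ, (Real.log ((n : ℝ)) : ℂ) * ((n : ℝ) : ℂ) ^ (-1 - s) := by simp
  rw [hcast, ← hsum.sum_add_tsum_nat_add (N + 1)]
  have hl := log_ceil_le s.im
  have hl1 := one_le_log_three_add s.im
  have hlN : 0 ≤ Real.log N := Real.log_nonneg hN1'
  have hhead : ‖∑ n ∈ range (N + 1), (Real.log ((n : ℝ)) : ℂ) * ((n : ℝ) : ℂ) ^ (-1 - s)‖
      ≤ Real.log N * (1 + Real.log N) := by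
    refine (norm_sum_le _ _).trans (le_trans (Finset.sum_le_sum fun n hn' => ?_)
      (mul_le_mul_of_nonneg_left (sum_range_inv_le N) hlN |> (le_of_eq (Finset.mul_sum _ _ _).symm).trans))
    rcases Nat.eq_zero_or_pos n with rfl | hn
    · simp
    · have hn1 : (1 : ℝ) ≤ n := by exact_mod_cast hn
      have hnN : (n : ℝ) ≤ N := by
        have := Finset.mem_range.1 hn'
        exact_mod_cast (by omega : n ≤ N)
      rw [norm_mul, Complex.norm_real, Real.norm_of_nonneg (Real.log_nonneg hn1)]
      have h := (norm_cpow_neg_le hn1 (z := -1 - s) (r := -1) (by simp; linarith))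
      rw [Real.rpow_neg_one, ← one_div] at h
      gcongr
  have hp := norm_cpow_neg_le hN1' (z := -s) (r := 0) (by simp; linarith)
  rw [Real.rpow_zero] at hp
  have hsn : 0 < ‖s‖ := norm_pos_iff.2 hsne
  have hΦ : ‖((Real.log N : ℂ) * ((N : ℝ) : ℂ) ^ (-s)) * (-1 / s) + ((N : ℝ) : ℂ) ^ (-s) * (-1 / s ^ 2)‖
      ≤ Real.log N * (1 / ‖s‖) + (1 / ‖s‖) ^ 2 := by
    refine (norm_add_le _ _).trans ?_
    rw [norm_mul, norm_mul, norm_mul, norm_div, norm_div, norm_neg, norm_one, norm_pow, Complex.norm_real,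
      Real.norm_of_nonneg hlN, one_div_pow]
    have h1 : Real.log N * ‖((N : ℝ) : ℂ) ^ (-s)‖ ≤ Real.log N := mul_le_of_le_one_right hlN hp
    have h2 : ‖((N : ℝ) : ℂ) ^ (-s)‖ * (1 / ‖s‖ ^ 2) ≤ 1 / ‖s‖ ^ 2 :=
      mul_le_of_le_one_left (by positivity) hp
    gcongr
  have h12 := htail.trans (four_mul_div_sqrt_ceil_le hs hs1)
  set S := ∑' n : ℕ, (Real.log (((n + (N + 1) : ℕ) : ℝ)) : ℂ) * (((n + (N + 1) : ℕ) : ℝ) : ℂ) ^ (-1 - s)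
  have hS : ‖S‖ ≤ 12 + (Real.log N * (1 / ‖s‖) + (1 / ‖s‖) ^ 2) := by
    have : S = (S + (((Real.log N : ℂ) * ((N : ℝ) : ℂ) ^ (-s)) * (-1 / s) + ((N : ℝ) : ℂ) ^ (-s) * (-1 / s ^ 2)))
      - (((Real.log N : ℂ) * ((N : ℝ) : ℂ) ^ (-s)) * (-1 / s) + ((N : ℝ) : ℂ) ^ (-s) * (-1 / s ^ 2)) := by ring
    rw [this]
    exact (norm_sub_le _ _).trans (add_le_add h12 hΦ)
  refine (norm_add_le _ _).trans ?_
  rw [show 2 / ‖s‖ ^ 2 = 2 * (1 / ‖s‖) ^ 2 by rw [one_div_pow]; ring]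
  set y := 1 / ‖s‖
  have hy : 0 < y := by positivity
  set l := Real.log (3 + |s.im|)
  nlinarith [sq_nonneg (l - y), mul_nonneg hlN hy.le, mul_le_mul_of_nonneg_right hl hy.le, mul_le_mul hl hl hlN (by positivity)]

/-! ### Dirichlet series of `Λ` and sums over primes -/

lemma neg_one_sub_ne {s : ℂ} (hs : 0 < s.re) : (-1 - s) ≠ 0 := by
  intro h; have := congrArg Complex.re h; simp at this; linarith

lemma term_eq_LSeries_term {s : ℂ} (hs : 0 < s.re) (c : ℕ → ℂ) (n : ℕ) :
    LSeries.term c (1 + s) n = c n * (n : ℂ) ^ (-1 - s) := by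
  rw [LSeries.term_def]
  rcases Nat.eq_zero_or_pos n with rfl | hn
  · simp [Complex.zero_cpow (neg_one_sub_ne hs)]
  · rw [if_neg hn.ne', div_eq_mul_inv, ← Complex.cpow_neg]
    ring_nf

lemma LSeries_eq_tsum {s : ℂ} (hs : 0 < s.re) (c : ℕ → ℂ) :
    LSeries c (1 + s) = ∑' n : ℕ, c n * (n : ℂ) ^ (-1 - s) :=
  tsum_congr fun n => term_eq_LSeries_term hs c n

/-- The Dirichlet series of `Λ` is `≪ 1/|s|` near the pole. -/
lemma Lambda_bound : ∃ C : ℝ, 0 < C ∧ ∀ s : ℂ, 0 < s.re → s.re ≤ 1 → |s.im| ≤ 1 →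
    ‖∑' n : ℕ, (ArithmeticFunction.vonMangoldt n : ℂ) * (n : ℂ) ^ (-1 - s)‖ ≤ C / ‖s‖ := by
  have hcont := ArithmeticFunction.vonMangoldt.continuousOn_LFunctionResidueClassAux (q := 1) 1
  have hK : IsCompact (Set.Icc (1 : ℝ) 2 ×ℂ Set.Icc (-1 : ℝ) 1) :=
    isCompact_Icc.reProdIm isCompact_Icc
  obtain ⟨C, hC⟩ := hK.exists_bound_of_continuousOn
    (hcont.mono (fun z hz => (Complex.mem_reProdIm.1 hz).1.1))
  have hC0 : 0 ≤ C := (norm_nonneg _).trans (hC 1 (by simp [Complex.mem_reProdIm]))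
  refine ⟨2 * C + 1, by positivity, ?_⟩
  intro s hs hs1 him
  have hsne : s ≠ 0 := by rintro rfl; simp at hs
  have hmem : 1 + s ∈ (Set.Icc (1 : ℝ) 2 ×ℂ Set.Icc (-1 : ℝ) 1) := by
    rw [Complex.mem_reProdIm]
    simp only [Complex.add_re, Complex.one_re, Complex.add_im, Complex.one_im, zero_add]
    exact ⟨⟨by linarith, by linarith⟩, abs_le.1 him⟩
  have h1 := hC _ hmem
  have h2 := ArithmeticFunction.vonMangoldt.eqOn_LFunctionResidueClassAux (q := 1) (a := 1)
    isUnit_one (show 1 < (1 + s).re by simpa using hs)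
  rw [h2] at h1
  have h3 : (fun n => ((ArithmeticFunction.vonMangoldt.residueClass (1 : ZMod 1) n : ℝ) : ℂ))
      = fun n => (ArithmeticFunction.vonMangoldt n : ℂ) := by
    funext n
    rw [ArithmeticFunction.vonMangoldt.residueClass, Set.indicator_of_mem]
    exact Subsingleton.elim _ _
  beta_reduce at h1
  rw [h3, LSeries_eq_tsum hs] at h1
  simp only [Nat.totient_one, Nat.cast_one, inv_one, add_sub_cancel_left] at h1
  set S := ∑' n : ℕ, (ArithmeticFunction.vonMangoldt n : ℂ) * (n : ℂ) ^ (-1 - s)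
  have hn : 0 < ‖s‖ := norm_pos_iff.2 hsne
  have hn2 : ‖s‖ ≤ 2 := (Complex.norm_le_abs_re_add_abs_im s).trans (by
    rw [abs_of_pos hs]; linarith)
  have : ‖S‖ ≤ C + 1 / ‖s‖ := by
    have e : S = (S - 1 / s) + 1 / s := by ring
    rw [e]
    refine (norm_add_le _ _).trans (add_le_add h1 ?_)
    rw [norm_div, norm_one]
  refine this.trans ?_
  rw [le_div_iff₀ hn, add_mul, one_div_mul_cancel hn.ne']
  nlinarith

lemma summable_Lambda_rpow {σ : ℝ} (hσ : 0 < σ) :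
    Summable fun n : ℕ => ArithmeticFunction.vonMangoldt n * (n : ℝ) ^ (-1 - σ) := by
  have h := ArithmeticFunction.LSeriesSummable_vonMangoldt (s := 1 + (σ : ℂ)) (by simpa using hσ)
  have h2 := h.norm
  refine h2.congr fun n => ?_
  rw [term_eq_LSeries_term (by simpa using hσ)]
  rcases Nat.eq_zero_or_pos n with rfl | hn
  · simp
  · rw [norm_mul, Complex.norm_real, Real.norm_of_nonneg ArithmeticFunction.vonMangoldt_nonneg]
    congr 1
    have := Complex.norm_cpow_eq_rpow_re_of_pos (x := n) (by exact_mod_cast hn) (-1 - (σ : ℂ))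
    simpa using this

lemma sum_Lambda_le : ∃ C : ℝ, 0 < C ∧ ∀ σ : ℝ, 0 < σ → σ ≤ 1 →
    ∑' n : ℕ, ArithmeticFunction.vonMangoldt n * (n : ℝ) ^ (-1 - σ) ≤ C / σ := by
  obtain ⟨C, hC, h⟩ := Lambda_bound
  refine ⟨C, hC, fun σ h0 h1 => ?_⟩
  have := h σ (by simpa using h0) (by simpa using h1) (by simp)
  rw [Complex.norm_real, Real.norm_of_nonneg h0.le] at this
  refine le_trans ?_ this
  have e : ∑' n : ℕ, (ArithmeticFunction.vonMangoldt n : ℂ) * (n : ℂ) ^ (-1 - (σ : ℂ))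
      = ((∑' n : ℕ, ArithmeticFunction.vonMangoldt n * (n : ℝ) ^ (-1 - σ) : ℝ) : ℂ) := by
    rw [Complex.ofReal_tsum]
    refine tsum_congr fun n => ?_
    rw [Complex.ofReal_mul, Complex.ofReal_cpow (Nat.cast_nonneg n)]
    push_cast
    rfl
  rw [e, Complex.norm_real]
  exact le_abs_self _

/-- `∑_{p ∈ S} (log p / p) p^{-σ} ≪ 1/σ` over any finite set of primes. -/
lemma sum_primes_rpow_le : ∃ C : ℝ, 0 < C ∧ ∀ σ : ℝ, 0 < σ → σ ≤ 1 → ∀ S : Finset ℕ,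
    (∀ p ∈ S, p.Prime) → ∑ p ∈ S, Real.log p / p * (p : ℝ) ^ (-σ) ≤ C / σ := by
  obtain ⟨C, hC, h⟩ := sum_Lambda_le
  refine ⟨C, hC, fun σ h0 h1 S hS => ?_⟩
  refine le_trans ?_ ((summable_Lambda_rpow h0).sum_le_tsum S (fun n _ => ?_) |>.trans (h σ h0 h1))
  · refine le_of_eq (Finset.sum_congr rfl fun p hp => ?_)
    have hp0 : (0 : ℝ) < p := by exact_mod_cast (hS p hp).pos
    rw [ArithmeticFunction.vonMangoldt_apply_prime (hS p hp), sub_eq_add_neg, Real.rpow_add hp0,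
      Real.rpow_neg_one]
    ring
  · exact mul_nonneg ArithmeticFunction.vonMangoldt_nonneg (by positivity)

lemma mem_primesUpTo {y : ℝ} {p : ℕ} (hy : 0 ≤ y) : p ∈ primesUpTo y ↔ (p : ℝ) ≤ y ∧ p.Prime := by
  rw [primesUpTo, Finset.mem_filter, Finset.mem_Iic, Nat.le_floor_iff hy]

/-- Upper bound in Mertens' first theorem. -/
lemma sum_log_div_le : ∃ C : ℝ, 0 < C ∧ ∀ y : ℝ, 1 ≤ y →
    ∑ p ∈ primesUpTo y, Real.log p / p ≤ C * (1 + Real.log y) := by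
  obtain ⟨C, hC, h⟩ := sum_primes_rpow_le
  refine ⟨Real.exp 1 * C, by positivity, fun y hy => ?_⟩
  have hl : 0 ≤ Real.log y := Real.log_nonneg hy
  have h1 : 0 < 1 + Real.log y := by linarith
  have := h (1 / (1 + Real.log y)) (by positivity) (by rw [div_le_one h1]; linarith)
    (primesUpTo y) (fun p hp => ((mem_primesUpTo (by linarith)).1 hp).2)
  rw [div_div_eq_mul_div, div_one] at this
  rw [mul_assoc, ← div_le_iff₀' (Real.exp_pos 1), Finset.sum_div]
  refine le_trans (Finset.sum_le_sum fun p hp => ?_) this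
  obtain ⟨hpy, hp⟩ := (mem_primesUpTo (by linarith)).1 hp
  have hp0 : (0 : ℝ) < p := by exact_mod_cast hp.pos
  have hp1 : (1 : ℝ) ≤ p := by exact_mod_cast hp.one_lt.le
  rw [div_eq_mul_inv _ (Real.exp 1), ← Real.exp_neg]
  have : 0 ≤ Real.log p := Real.log_nonneg hp1
  gcongr
  rw [Real.rpow_def_of_pos hp0]
  apply Real.exp_le_exp.2
  have : Real.log p ≤ Real.log y := Real.log_le_log hp0 hpy
  rw [mul_neg, mul_one_div, neg_le_neg_iff, div_le_one h1]
  linarith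

/-- Convergence of `∑ 1/(p log p)`, uniformly over finite sets of primes. -/
lemma sum_inv_mul_log_le : ∃ C : ℝ, 0 < C ∧ ∀ S : Finset ℕ, (∀ p ∈ S, p.Prime) →
    ∑ p ∈ S, 1 / (p * Real.log p) ≤ C := by
  obtain ⟨C, hC, h⟩ := sum_primes_rpow_le
  refine ⟨16 * Real.exp 1 * (C * 2), by positivity, fun S hS => ?_⟩
  have hgeo : HasSum (fun j : ℕ => C * (1 / 2 : ℝ) ^ j) (C * 2) := hasSum_geometric_two.mul_left C
  have hterm : ∀ p ∈ S, ∀ j : ℕ, 0 ≤ Real.log p / p * ((1 / 4 : ℝ) ^ j * (p : ℝ) ^ (-(1 / 2 : ℝ) ^ j)) := by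
    intro p hp j
    have hp1 : (1 : ℝ) ≤ p := by exact_mod_cast (hS p hp).one_lt.le
    have := Real.log_nonneg hp1
    positivity
  have hsumm : ∀ p ∈ S, Summable fun j : ℕ =>
      Real.log p / p * ((1 / 4 : ℝ) ^ j * (p : ℝ) ^ (-(1 / 2 : ℝ) ^ j)) := by
    intro p hp
    apply Summable.mul_left
    have hp1 : (1 : ℝ) ≤ p := by exact_mod_cast (hS p hp).one_lt.le
    refine Summable.of_nonneg_of_le (fun j => by positivity) (fun j => ?_)
      (summable_geometric_of_lt_one (r := (1 / 4 : ℝ)) (by norm_num) (by norm_num))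
    refine mul_le_of_le_one_right (by positivity) ?_
    exact Real.rpow_le_one_of_one_le_of_nonpos hp1 (by simp)
  have hpt : ∀ p ∈ S, 1 / (p * Real.log p) ≤ 16 * Real.exp 1 *
      ∑' j : ℕ, Real.log p / p * ((1 / 4 : ℝ) ^ j * (p : ℝ) ^ (-(1 / 2 : ℝ) ^ j)) := by
    intro p hp
    have hp2 : (2 : ℝ) ≤ p := by exact_mod_cast (hS p hp).two_le
    have hp0 : (0 : ℝ) < p := by linarith
    have hl : 1 / 2 ≤ Real.log p := by
      have := Real.log_le_log (by norm_num) hp2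
      linarith [Real.log_two_gt_d9]
    obtain ⟨j, hj1, hj2⟩ : ∃ j : ℕ, Real.log p ≤ 2 ^ j ∧ (2 : ℝ) ^ j ≤ 4 * Real.log p := by
      have hex : ∃ j : ℕ, Real.log p ≤ 2 ^ j := by
        obtain ⟨j, hj⟩ := pow_unbounded_of_one_lt (Real.log p) (by norm_num : (1 : ℝ) < 2)
        exact ⟨j, hj.le⟩
      classical
      refine ⟨Nat.find hex, Nat.find_spec hex, ?_⟩
      rcases Nat.eq_zero_or_pos (Nat.find hex) with h0 | h0
      · rw [h0]; linarith
      · have := Nat.find_min hex (Nat.sub_lt h0 one_pos)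
        push Not at this
        have e : (2 : ℝ) ^ Nat.find hex = 2 ^ (Nat.find hex - 1) * 2 := by
          rw [← pow_succ]; congr 1; omega
        rw [e]
        linarith
    have hle := (hsumm p hp).le_tsum j (fun i _ => hterm p hp i)
    refine le_trans ?_ (mul_le_mul_of_nonneg_left hle (by positivity))
    have h1 : Real.exp (-1) ≤ (p : ℝ) ^ (-(1 / 2 : ℝ) ^ j) := by
      rw [Real.rpow_def_of_pos hp0]
      apply Real.exp_le_exp.2
      rw [mul_neg, neg_le_neg_iff, one_div_pow, mul_one_div, div_le_one (by positivity)]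
      exact hj1
    have h2 : 1 / (16 * Real.log p ^ 2) ≤ (1 / 4 : ℝ) ^ j := by
      rw [one_div_pow]
      apply one_div_le_one_div_of_le (by positivity)
      rw [show (4 : ℝ) = 2 ^ 2 by norm_num, ← pow_mul, mul_comm, pow_mul]
      calc ((2 : ℝ) ^ j) ^ 2 ≤ (4 * Real.log p) ^ 2 := by gcongr
        _ = _ := by ring
    calc 1 / (p * Real.log p) = 16 * Real.exp 1 * (Real.log p / p * (1 / (16 * Real.log p ^ 2) * Real.exp (-1))) := by
          rw [Real.exp_neg]
          field_simp
      _ ≤ _ := by gcongr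
  calc _ ≤ ∑ p ∈ S, 16 * Real.exp 1 *
      ∑' j : ℕ, Real.log p / p * ((1 / 4 : ℝ) ^ j * (p : ℝ) ^ (-(1 / 2 : ℝ) ^ j)) :=
        Finset.sum_le_sum hpt
    _ = 16 * Real.exp 1 * ∑' j : ℕ, ∑ p ∈ S, Real.log p / p * ((1 / 4 : ℝ) ^ j * (p : ℝ) ^ (-(1 / 2 : ℝ) ^ j)) := by
        rw [← Finset.mul_sum, Summable.tsum_finsetSum hsumm]
    _ ≤ 16 * Real.exp 1 * ∑' j : ℕ, C * (1 / 2 : ℝ) ^ j := by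
        gcongr 16 * Real.exp 1 * ?_
        refine Summable.tsum_le_tsum (fun j => ?_) (summable_sum hsumm) hgeo.summable
        have := h ((1 / 2 : ℝ) ^ j) (by positivity) (pow_le_one₀ (by norm_num) (by norm_num)) S hS
        calc _ = (1 / 4 : ℝ) ^ j * ∑ p ∈ S, Real.log p / p * (p : ℝ) ^ (-(1 / 2 : ℝ) ^ j) := by
              rw [Finset.mul_sum]; exact Finset.sum_congr rfl fun p _ => by ring
          _ ≤ (1 / 4 : ℝ) ^ j * (C / (1 / 2 : ℝ) ^ j) := by gcongr
          _ = _ := by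
              rw [show (1 / 4 : ℝ) = 1 / 2 * (1 / 2) by norm_num, mul_pow]
              field_simp
    _ = _ := by rw [hgeo.tsum_eq]

open MeasureTheory

/-! ### The kernel `k` and its Laplace transform -/

/-- The kernel expressing `L_f(x) - M̃_g(w₀x)` as `∑ f(n)/n · k(log x - log n)`. -/
noncomputable def kk (w : ℝ) : ℝ :=
  (if 0 ≤ w then 1 else 0) - ⌊w0 * Real.exp w⌋₊ / (w0 * Real.exp w)

lemma w0_pos : 0 < w0 := Real.exp_pos _

lemma log_w0 : Real.log w0 = 1 - Real.eulerMascheroniConstant := Real.log_exp _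

lemma log_w0_pos : 0 < Real.log w0 := by
  rw [log_w0]; linarith [Real.eulerMascheroniConstant_lt_two_thirds]

lemma log_w0_lt : Real.log w0 < 1 / 2 := by
  rw [log_w0]; linarith [Real.one_half_lt_eulerMascheroniConstant]

lemma one_le_w0 : 1 ≤ w0 := by
  rw [w0, Real.one_le_exp_iff, ← log_w0]; exact log_w0_pos.le

lemma w0_lt_two : w0 < 2 := by
  rw [← Real.exp_log w0_pos]
  have : Real.exp (Real.log w0) < Real.exp (1 / 2) := Real.exp_lt_exp.2 log_w0_lt
  have h2 : Real.exp (1 / 2) ≤ 2 := by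
    have h3 : Real.exp (1 / 2) * Real.exp (1 / 2) = Real.exp 1 := by rw [← Real.exp_add]; norm_num
    nlinarith [Real.exp_one_lt_d9, Real.exp_pos (1 / 2)]
  linarith

lemma kk_eq_zero {w : ℝ} (hw : w < -Real.log w0) : kk w = 0 := by
  have h1 : ¬ 0 ≤ w := by linarith [log_w0_pos]
  have h2 : w0 * Real.exp w < 1 := by
    nth_rewrite 1 [← Real.exp_log w0_pos]
    rw [← Real.exp_add, Real.exp_lt_one_iff]
    linarith
  rw [kk, if_neg h1, Nat.floor_eq_zero.2 h2]
  simp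

lemma abs_kk_le (w : ℝ) : |kk w| ≤ 1 ∧ |kk w| ≤ Real.exp (-w) := by
  have hp : 0 < w0 * Real.exp w := mul_pos w0_pos (Real.exp_pos w)
  have hf1 := Nat.floor_le hp.le
  have hf2 := Nat.lt_floor_add_one (w0 * Real.exp w)
  set F : ℝ := (⌊w0 * Real.exp w⌋₊ : ℝ)
  have hF0 : 0 ≤ F := Nat.cast_nonneg _
  have hq1 : F / (w0 * Real.exp w) ≤ 1 := (div_le_one hp).2 hf1
  have hq0 : 0 ≤ F / (w0 * Real.exp w) := by positivity
  rw [kk]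
  split_ifs with h
  · have hk : |1 - F / (w0 * Real.exp w)| ≤ Real.exp (-w) := by
      rw [abs_of_nonneg (by linarith)]
      have : 1 - F / (w0 * Real.exp w) ≤ 1 / (w0 * Real.exp w) := by
        rw [← sub_nonneg, show 1 / (w0 * Real.exp w) - (1 - F / (w0 * Real.exp w))
          = (F + 1 - w0 * Real.exp w) / (w0 * Real.exp w) by
            rw [sub_eq_iff_eq_add', one_sub_div hp.ne', ← add_div]; ring]
        exact div_nonneg (by linarith) hp.le
      refine this.trans ?_
      rw [Real.exp_neg, ← one_div]
      apply one_div_le_one_div_of_le (Real.exp_pos w)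
      nlinarith [one_le_w0, Real.exp_pos w]
    exact ⟨hk.trans (Real.exp_le_one_iff.2 (by linarith)), hk⟩
  · have : |0 - F / (w0 * Real.exp w)| ≤ 1 := by
      rw [zero_sub, abs_neg, abs_of_nonneg hq0]; exact hq1
    exact ⟨this, this.trans (Real.one_le_exp (by linarith))⟩

lemma measurable_kk : Measurable kk := by
  unfold kk
  refine Measurable.sub (Measurable.ite measurableSet_Ici measurable_const measurable_const) ?_
  refine Measurable.div ?_ (by fun_prop)
  exact measurable_from_nat.comp (Nat.measurable_floor.comp (by fun_prop))

lemma norm_kk_mul_exp (s : ℂ) (w : ℝ) :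
    ‖(kk w : ℂ) * Complex.exp (-s * w)‖ = |kk w| * Real.exp (-s.re * w) := by
  rw [norm_mul, Complex.norm_real, Real.norm_eq_abs, Complex.norm_exp]
  simp

lemma norm_kk_mul_exp_le {s : ℂ} (hs1 : s.re ≤ 1) (hs : 0 < s.re) (w : ℝ) :
    |kk w| * Real.exp (-s.re * w) ≤ Real.exp 1 := by
  rcases lt_or_ge w (-Real.log w0) with h | h
  · rw [kk_eq_zero h]; simp [Real.exp_nonneg]
  · have h2 : Real.exp (-s.re * w) ≤ Real.exp 1 := by
      apply Real.exp_le_exp.2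
      have := log_w0_lt
      nlinarith
    calc _ ≤ 1 * Real.exp 1 := mul_le_mul (abs_kk_le w).1 h2 (Real.exp_nonneg _) zero_le_one
      _ = _ := one_mul _

lemma integrable_kk {s : ℂ} (hs : 0 < s.re) :
    Integrable fun w : ℝ => (kk w : ℂ) * Complex.exp (-s * w) := by
  have hi : Integrable ((Set.Ioi (-1 : ℝ)).indicator fun w => Real.exp (-s.re * w)) :=
    (integrable_indicator_iff measurableSet_Ioi).2 (exp_neg_integrableOn_Ioi _ hs)
  refine hi.mono' ?_ (Filter.Eventually.of_forall fun w => ?_)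
  · exact ((Complex.measurable_ofReal.comp measurable_kk).mul (by fun_prop)).aestronglyMeasurable
  · rw [norm_kk_mul_exp]
    by_cases h : w ∈ Set.Ioi (-1 : ℝ)
    · rw [Set.indicator_of_mem h]
      exact mul_le_of_le_one_left (Real.exp_nonneg _) (abs_kk_le w).1
    · rw [Set.indicator_of_notMem h]
      simp only [Set.mem_Ioi, not_lt] at h
      rw [kk_eq_zero (by linarith [log_w0_lt])]
      simp

/-- The Laplace transform of the kernel. -/
noncomputable def KL (s : ℂ) : ℂ := ∫ w : ℝ, (kk w : ℂ) * Complex.exp (-s * w)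

lemma integral_floor_part {s : ℂ} (hs : 0 < s.re) :
    ∫ w : ℝ, (((⌊w0 * Real.exp w⌋₊ : ℝ) / (w0 * Real.exp w) : ℝ) : ℂ) * Complex.exp (-s * w)
      = Complex.exp (s * Real.log w0) * riemannZeta (1 + s) / (1 + s) := by
  have hz : 1 < (1 + s).re := by simpa using hs
  have h1s : 1 + s ≠ 0 := by
    intro h; have := congrArg Complex.re h; simp at this; linarith
  have hL := LSeries_eq_mul_integral (1 : ℕ → ℂ) (r := 1) zero_le_one hz
    (LSeriesSummable_one_iff.2 hz) (by
      simp only [Pi.one_apply, Finset.sum_const, Nat.card_Icc, add_tsub_cancel_right, nsmul_eq_mul,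
        mul_one, Real.rpow_one]
      exact Asymptotics.isBigO_of_le _ (fun n => by simp))
  rw [LSeries_one_eq_riemannZeta hz] at hL
  rw [hL, mul_left_comm, mul_div_cancel_left₀ _ h1s]
  have himg : (fun w => w0 * Real.exp w) '' Set.Ici (-Real.log w0) = Set.Ici 1 := by
    ext u
    simp only [Set.mem_image, Set.mem_Ici]
    constructor
    · rintro ⟨w, hw, rfl⟩
      nth_rewrite 1 [← Real.exp_log w0_pos]
      rw [← Real.exp_add, Real.one_le_exp_iff]; linarith
    · intro hu
      refine ⟨Real.log u - Real.log w0, by linarith [Real.log_nonneg hu], ?_⟩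
      rw [Real.exp_sub, Real.exp_log w0_pos, Real.exp_log (by linarith)]
      field_simp [w0_pos.ne']
  rw [← integral_Ici_eq_integral_Ioi, ← himg,
    integral_image_eq_integral_abs_deriv_smul (f' := fun w => w0 * Real.exp w) measurableSet_Ici
      (fun w _ => ((Real.hasDerivAt_exp w).const_mul w0).hasDerivWithinAt)
      (fun a _ b _ hab => Real.exp_injective (mul_left_cancel₀ w0_pos.ne' hab)),
    ← integral_const_mul]
  rw [← setIntegral_eq_integral_of_forall_compl_eq_zero (s := Set.Ici (-Real.log w0))]
  · refine setIntegral_congr_fun measurableSet_Ici fun w _ => ?_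
    have hp : 0 < w0 * Real.exp w := mul_pos w0_pos (Real.exp_pos w)
    have hlog : Real.log (w0 * Real.exp w) = Real.log w0 + w := by
      rw [Real.log_mul w0_pos.ne' (Real.exp_ne_zero _), Real.log_exp]
    rw [abs_of_pos hp]
    set u := w0 * Real.exp w with hu
    have hune : (u : ℂ) ≠ 0 := by exact_mod_cast hp.ne'
    have hpow : (u : ℂ) ^ (-(1 + s + 1))
        = (u : ℂ)⁻¹ * (u : ℂ)⁻¹ * (Complex.exp (-(s * Real.log w0)) * Complex.exp (-s * w)) := by
      rw [← Complex.exp_add, show -(1 + s + 1) = -1 + -1 + -s by ring, Complex.cpow_add _ _ hune,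
        Complex.cpow_add _ _ hune, Complex.cpow_neg_one, Complex.cpow_def_of_ne_zero hune,
        ← Complex.ofReal_log hp.le, hlog]
      push_cast
      ring_nf
    rw [hpow]
    simp only [Pi.one_apply, Finset.sum_const, Nat.card_Icc, add_tsub_cancel_right, nsmul_eq_mul,
        mul_one, Complex.real_smul]
    have he : Complex.exp (s * Real.log w0) * Complex.exp (-(s * Real.log w0)) = 1 := by
      rw [← Complex.exp_add]; simp
    rw [show Complex.exp (s * Real.log w0) * ((u : ℂ) * ((⌊u⌋₊ : ℂ) * ((u : ℂ)⁻¹ * (u : ℂ)⁻¹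
        * (Complex.exp (-(s * Real.log w0)) * Complex.exp (-s * w)))))
        = (Complex.exp (s * Real.log w0) * Complex.exp (-(s * Real.log w0))) *
          (((⌊u⌋₊ : ℂ) * (u : ℂ)⁻¹ * ((u : ℂ) * (u : ℂ)⁻¹)) * Complex.exp (-s * w)) by ring, he,
        mul_inv_cancel₀ hune]
    push_cast
    ring
  · intro w hw
    simp only [Set.mem_Ici, not_le] at hw
    have h2 : w0 * Real.exp w < 1 := by
      nth_rewrite 1 [← Real.exp_log w0_pos]
      rw [← Real.exp_add, Real.exp_lt_one_iff]
      linarith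
    rw [Nat.floor_eq_zero.2 h2]
    simp

/-- The Laplace transform of the kernel: the two terms come from the step function and from the
floor function. -/
lemma KL_eq {s : ℂ} (hs : 0 < s.re) :
    KL s = 1 / s - Complex.exp (s * Real.log w0) * riemannZeta (1 + s) / (1 + s) := by
  have hneg : (-s).re < 0 := by simpa using hs
  have hind : Integrable ((Set.Ici (0 : ℝ)).indicator fun w : ℝ => Complex.exp (-s * w)) := by
    rw [integrable_indicator_iff measurableSet_Ici, integrableOn_Ici_iff_integrableOn_Ioi]
    exact integrableOn_exp_mul_complex_Ioi hneg 0
  have hval : ∫ w, (Set.Ici (0 : ℝ)).indicator (fun w : ℝ => Complex.exp (-s * w)) w = 1 / s := by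
    rw [integral_indicator measurableSet_Ici, integral_Ici_eq_integral_Ioi,
      integral_exp_mul_complex_Ioi hneg]
    simp
  have hdecomp : ∀ w : ℝ, (kk w : ℂ) * Complex.exp (-s * w)
      = (Set.Ici (0 : ℝ)).indicator (fun w : ℝ => Complex.exp (-s * w)) w
        - (((⌊w0 * Real.exp w⌋₊ : ℝ) / (w0 * Real.exp w) : ℝ) : ℂ) * Complex.exp (-s * w) := by
    intro w
    rw [kk]
    by_cases h : 0 ≤ w
    · rw [if_pos h, Set.indicator_of_mem (show w ∈ Set.Ici 0 from h)]; push_cast; ring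
    · rw [if_neg h, Set.indicator_of_notMem (show w ∉ Set.Ici 0 from h)]; push_cast; ring
  have hfl : Integrable fun w : ℝ =>
      (((⌊w0 * Real.exp w⌋₊ : ℝ) / (w0 * Real.exp w) : ℝ) : ℂ) * Complex.exp (-s * w) := by
    refine (hind.sub (integrable_kk hs)).congr (Filter.Eventually.of_forall fun w => ?_)
    simp only [Pi.sub_apply, hdecomp w]; ring
  rw [KL]
  simp_rw [hdecomp]
  rw [integral_sub hind hfl, hval, integral_floor_part hs]

/-- The entire function `(1+s) - w₀^s (1 + s ζ₀(1+s))`, with a double zero at `0`. -/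
noncomputable def GK (s : ℂ) : ℂ :=
  (1 + s) - Complex.exp (s * Real.log w0) * (1 + s * riemannZeta₀ (1 + s))

lemma differentiable_GK : Differentiable ℂ GK := by
  unfold GK
  have := differentiable_riemannZeta₀
  fun_prop

/-- This is where the value `log w₀ = 1 - γ` is used. -/
lemma deriv_GK_zero : deriv GK 0 = 0 := by
  have h1 : HasDerivAt (fun s : ℂ => Complex.exp (s * Real.log w0)) (Real.log w0 : ℂ) 0 := by
    have := ((hasDerivAt_id (0 : ℂ)).mul_const (Real.log w0 : ℂ)).cexp
    simpa using this
  have h2 : HasDerivAt (fun s : ℂ => riemannZeta₀ (1 + s)) (deriv riemannZeta₀ 1) 0 := by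
    have := (differentiable_riemannZeta₀ 1).hasDerivAt
    have h3 : HasDerivAt (fun s : ℂ => 1 + s) 1 0 := (hasDerivAt_id (0 : ℂ)).const_add 1
    have h5 : HasDerivAt riemannZeta₀ (deriv riemannZeta₀ 1) (1 + 0) := by
      rw [add_zero]; exact this
    have h4 := HasDerivAt.comp (h₂ := riemannZeta₀) (0 : ℂ) h5 h3
    exact h4.congr_deriv (mul_one _)
  have h3 := ((hasDerivAt_id (0 : ℂ)).const_add 1).sub
    (h1.mul (((hasDerivAt_id (0 : ℂ)).mul h2).const_add 1))
  have h4 := h3.deriv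
  have h5 : deriv GK 0 = _ := h4
  rw [h5]
  simp [log_w0]

/-- Besides the decay in `Im s`, the factor `s/(1+s)` records that the transform vanishes at `s = 0`;
this cancels the possible pole of `F` there. -/
lemma KL_bound : ∃ C : ℝ, 0 < C ∧ ∀ s : ℂ, 0 < s.re → s.re ≤ 1 →
    ‖KL s‖ ≤ C * Real.log (3 + |s.im|) / (1 + |s.im|) * ‖s / (1 + s)‖ := by
  have hG0 : GK 0 = 0 := by simp [GK]
  have hd1 : Differentiable ℂ (dslope GK 0) := by
    rw [← differentiableOn_univ, Complex.differentiableOn_dslope Filter.univ_mem, differentiableOn_univ]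
    exact differentiable_GK
  have hd2 : Differentiable ℂ (dslope (dslope GK 0) 0) := by
    rw [← differentiableOn_univ, Complex.differentiableOn_dslope Filter.univ_mem, differentiableOn_univ]
    exact hd1
  have hK : IsCompact (Set.Icc (0 : ℝ) 1 ×ℂ Set.Icc (-1 : ℝ) 1) :=
    isCompact_Icc.reProdIm isCompact_Icc
  obtain ⟨C, hC⟩ := hK.exists_bound_of_continuousOn hd2.continuous.continuousOn
  have hC0 : 0 ≤ C := (norm_nonneg _).trans (hC 0 (by simp [Complex.mem_reProdIm]))
  refine ⟨2 * C + 100, by positivity, ?_⟩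
  intro s hs hs1
  have hsne : s ≠ 0 := by rintro rfl; simp at hs
  have h1s : 1 + s ≠ 0 := by
    intro h; have := congrArg Complex.re h; simp at this; linarith
  have hl1 := one_le_log_three_add s.im
  have hfac : KL s = (GK s / s ^ 2) * (s / (1 + s)) := by
    rw [KL_eq hs, GK, riemannZeta_eq_inv_sub_add (by simpa using hsne)]
    rw [show 1 + s - 1 = s by ring]
    field_simp
  rw [hfac, norm_mul]
  refine mul_le_mul_of_nonneg_right ?_ (norm_nonneg _)
  have ht0 : 0 ≤ |s.im| := abs_nonneg _
  rw [le_div_iff₀ (by positivity)]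
  rcases le_total |s.im| 1 with ht | ht
  · have e : GK s / s ^ 2 = dslope (dslope GK 0) 0 s := by
      rw [dslope_of_ne _ hsne, slope_def_field, dslope_of_ne _ hsne, slope_def_field, dslope_same,
        deriv_GK_zero, hG0]
      field_simp
      ring
    rw [e]
    have := hC s (by rw [Complex.mem_reProdIm]; exact ⟨⟨hs.le, hs1⟩, abs_le.1 ht⟩)
    calc _ ≤ C * 2 := by gcongr; linarith
      _ ≤ (2 * C + 100) * 1 := by linarith
      _ ≤ _ := by gcongr
  · have hn : |s.im| ≤ ‖s‖ := Complex.abs_im_le_norm s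
    have hn0 : 0 < ‖s‖ := by linarith
    have e : GK s / s ^ 2 = (1 + s) / s ^ 2
        - Complex.exp (s * Real.log w0) * riemannZeta (1 + s) / s := by
      rw [GK, riemannZeta_eq_inv_sub_add (by simpa using hsne)]
      rw [show 1 + s - 1 = s by ring]
      field_simp
    have b1 : ‖(1 + s) / s ^ 2‖ ≤ 3 / |s.im| := by
      rw [norm_div, norm_pow]
      have := norm_one_add_le hs hs1
      rw [div_le_div_iff₀ (by positivity) (by linarith)]
      nlinarith
    have b2 : ‖Complex.exp (s * Real.log w0)‖ ≤ 2 := by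
      rw [Complex.norm_exp]
      have : (s * (Real.log w0 : ℂ)).re = s.re * Real.log w0 := by simp
      rw [this]
      calc _ ≤ Real.exp (Real.log w0) := by
            apply Real.exp_le_exp.2; nlinarith [log_w0_pos]
        _ ≤ 2 := by rw [Real.exp_log w0_pos]; exact w0_lt_two.le
    have b3 := zeta_bound hs hs1
    have b4 : 1 / ‖s‖ ≤ 1 := by rw [div_le_one hn0]; linarith
    have b5 : ‖Complex.exp (s * Real.log w0) * riemannZeta (1 + s) / s‖
        ≤ 32 * Real.log (3 + |s.im|) / |s.im| := by
      rw [norm_div, norm_mul]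
      apply div_le_div₀ (by positivity) _ (by linarith) hn
      calc _ ≤ 2 * (15 * Real.log (3 + |s.im|) + 1) := by
            apply mul_le_mul b2 (by linarith) (norm_nonneg _) (by norm_num)
        _ ≤ _ := by linarith
    have b6 : ‖GK s / s ^ 2‖ ≤ 35 * Real.log (3 + |s.im|) / |s.im| := by
      rw [e]
      refine (norm_sub_le _ _).trans ((add_le_add b1 b5).trans ?_)
      rw [← add_div]
      gcongr
      linarith
    calc _ ≤ 35 * Real.log (3 + |s.im|) / |s.im| * (2 * |s.im|) := by
          apply mul_le_mul b6 (by linarith) (by linarith) (by positivity)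
      _ = 70 * Real.log (3 + |s.im|) := by field_simp; ring
      _ ≤ _ := by gcongr; linarith

/-! ### A majorant principle for mean squares of Dirichlet polynomials -/

/-- The generalized Dirichlet polynomial `∑ c_n e^{-it log n}` over a finite set. -/
noncomputable def dpoly (S : Finset ℕ) (c : ℕ → ℂ) (t : ℝ) : ℂ :=
  ∑ n ∈ S, c n * Complex.exp (-Complex.I * t * Real.log n)

lemma continuous_dpoly (S : Finset ℕ) (c : ℕ → ℂ) : Continuous (dpoly S c) := by
  unfold dpoly; fun_prop

/-- The factor `e^{-ia(log n - log m)}` that separates the variables in `‖A(a-b)‖²`. -/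
noncomputable def uchar (n m : ℕ) (a : ℝ) : ℂ :=
  Complex.exp (-Complex.I * a * (Real.log n - Real.log m))

lemma continuous_uchar (n m : ℕ) : Continuous (uchar n m) := by
  unfold uchar; fun_prop

lemma conj_uchar (n m : ℕ) (a : ℝ) : starRingEnd ℂ (uchar n m a) = uchar n m (-a) := by
  rw [uchar, uchar, ← Complex.exp_conj]
  simp only [map_mul, map_neg, Complex.conj_I, map_sub, Complex.conj_ofReal, Complex.ofReal_neg]
  congr 1
  ring

lemma normSq_dpoly (S : Finset ℕ) (c : ℕ → ℂ) (a b : ℝ) :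
    ((‖dpoly S c (a - b)‖ ^ 2 : ℝ) : ℂ) = ∑ n ∈ S, ∑ m ∈ S,
      c n * starRingEnd ℂ (c m) * (uchar n m a * starRingEnd ℂ (uchar n m b)) := by
  rw [Complex.ofReal_pow, ← Complex.mul_conj', dpoly, map_sum, sum_mul_sum]
  refine sum_congr rfl fun n _ => sum_congr rfl fun m _ => ?_
  rw [conj_uchar, map_mul, ← Complex.exp_conj, uchar, uchar, ← Complex.exp_add, mul_mul_mul_comm,
    ← Complex.exp_add]
  congr 2
  simp only [map_mul, map_neg, Complex.conj_I, Complex.conj_ofReal, Complex.ofReal_neg,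
    Complex.ofReal_sub, map_sub]
  ring

/-- Averaging over differences `a - b` makes the weights of the quadratic form in `c` nonnegative. -/
lemma double_integral_dpoly (S : Finset ℕ) (c : ℕ → ℂ) (L : ℝ) :
    ((∫ b in (0:ℝ)..L, ∫ a in (0:ℝ)..L, ‖dpoly S c (a - b)‖ ^ 2 : ℝ) : ℂ) =
      ∑ n ∈ S, ∑ m ∈ S, c n * starRingEnd ℂ (c m) *
        ((‖∫ a in (0:ℝ)..L, uchar n m a‖ ^ 2 : ℝ) : ℂ) := by
  rw [← intervalIntegral.integral_ofReal]
  have h1 : ∀ b : ℝ, ((∫ a in (0:ℝ)..L, ‖dpoly S c (a - b)‖ ^ 2 : ℝ) : ℂ)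
      = ∑ n ∈ S, ∑ m ∈ S, c n * starRingEnd ℂ (c m) * (∫ a in (0:ℝ)..L, uchar n m a) *
        starRingEnd ℂ (uchar n m b) := by
    intro b
    rw [← intervalIntegral.integral_ofReal]
    simp_rw [normSq_dpoly]
    rw [intervalIntegral.integral_finsetSum]
    · refine sum_congr rfl fun n _ => ?_
      rw [intervalIntegral.integral_finsetSum]
      · refine sum_congr rfl fun m _ => ?_
        rw [intervalIntegral.integral_const_mul, intervalIntegral.integral_mul_const]
        ring
      · intro m _
        apply Continuous.intervalIntegrable
        have := continuous_uchar n m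
        fun_prop
    · intro n _
      apply Continuous.intervalIntegrable
      refine continuous_finsetSum _ fun m _ => ?_
      have := continuous_uchar n m
      fun_prop
  simp_rw [h1]
  have hc : ∀ n m, Continuous fun b => starRingEnd ℂ (uchar n m b) := fun n m =>
    Complex.continuous_conj.comp (continuous_uchar n m)
  rw [intervalIntegral.integral_finsetSum]
  · refine sum_congr rfl fun n _ => ?_
    rw [intervalIntegral.integral_finsetSum]
    · refine sum_congr rfl fun m _ => ?_
      have : ∫ b in (0:ℝ)..L, starRingEnd ℂ (uchar n m b)
          = starRingEnd ℂ (∫ b in (0:ℝ)..L, uchar n m b) := by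
        simp only [intervalIntegral]
        rw [map_sub, integral_conj, integral_conj]
      rw [intervalIntegral.integral_const_mul, this, mul_assoc, Complex.mul_conj']
      simp
    · intro m _
      apply Continuous.intervalIntegrable
      have := hc n m
      fun_prop
  · intro n _
    apply Continuous.intervalIntegrable
    refine continuous_finsetSum _ fun m _ => ?_
    have := hc n m
    fun_prop

/-- The majorant principle for the weight on `[-L, L]` given by the differences `a - v`. -/
lemma double_integral_le (S : Finset ℕ) (c : ℕ → ℂ) (b : ℕ → ℝ) (hb : ∀ n, ‖c n‖ ≤ b n) (L : ℝ) :
    ∫ v in (0:ℝ)..L, ∫ a in (0:ℝ)..L, ‖dpoly S c (a - v)‖ ^ 2 ≤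
      ∫ v in (0:ℝ)..L, ∫ a in (0:ℝ)..L, ‖dpoly S (fun n => (b n : ℂ)) (a - v)‖ ^ 2 := by
  have h1 := double_integral_dpoly S c L
  have h2 := double_integral_dpoly S (fun n => (b n : ℂ)) L
  have h3 : (∫ v in (0:ℝ)..L, ∫ a in (0:ℝ)..L, ‖dpoly S (fun n => (b n : ℂ)) (a - v)‖ ^ 2)
      = ∑ n ∈ S, ∑ m ∈ S, b n * b m * ‖∫ a in (0:ℝ)..L, uchar n m a‖ ^ 2 := by
    simp only [Complex.conj_ofReal] at h2
    exact_mod_cast h2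
  rw [h3]
  refine (le_abs_self _).trans ?_
  rw [← Real.norm_eq_abs, ← Complex.norm_real, h1]
  refine (norm_sum_le _ _).trans (sum_le_sum fun n _ => (norm_sum_le _ _).trans
    (sum_le_sum fun m _ => ?_))
  rw [norm_mul, norm_mul, RCLike.norm_conj, Complex.norm_real, Real.norm_of_nonneg (by positivity)]
  have := (norm_nonneg _).trans (hb n)
  gcongr
  exacts [hb n, hb m]

lemma double_integral_lower {φ : ℝ → ℝ} (hφ : Continuous φ) (h0 : ∀ t, 0 ≤ φ t) {K : ℝ}
    (hK : 0 < K) : 2 * K * ∫ t in (-K)..K, φ t ≤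
      ∫ v in (0:ℝ)..(4 * K), ∫ a in (0:ℝ)..(4 * K), φ (a - v) := by
  have hc : Continuous fun v : ℝ => ∫ a in (0:ℝ)..(4 * K), φ (a - v) :=
    intervalIntegral.continuous_parametric_intervalIntegral_of_continuous' (by fun_prop) _ _
  calc 2 * K * ∫ t in (-K)..K, φ t = ∫ v in K..(3 * K), ∫ t in (-K)..K, φ t := by
        rw [intervalIntegral.integral_const, smul_eq_mul]; ring
    _ ≤ ∫ v in K..(3 * K), ∫ a in (0:ℝ)..(4 * K), φ (a - v) := by
        refine intervalIntegral.integral_mono_on (by linarith)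
          (intervalIntegrable_const) (hc.intervalIntegrable _ _) fun v hv => ?_
        rw [intervalIntegral.integral_comp_sub_right]
        exact intervalIntegral.integral_mono_interval (by linarith [hv.1]) (by linarith)
          (by linarith [hv.2]) (Filter.Eventually.of_forall h0) (hφ.intervalIntegrable _ _)
    _ ≤ _ := by
        refine intervalIntegral.integral_mono_interval (by linarith) (by linarith) (by linarith)
          (Filter.Eventually.of_forall fun v => ?_) (hc.intervalIntegrable _ _)
        exact intervalIntegral.integral_nonneg (by linarith) fun _ _ => h0 _

lemma double_integral_upper {φ : ℝ → ℝ} (hφ : Continuous φ) (h0 : ∀ t, 0 ≤ φ t) {K : ℝ}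
    (hK : 0 < K) : ∫ v in (0:ℝ)..(4 * K), ∫ a in (0:ℝ)..(4 * K), φ (a - v) ≤
      4 * K * ∫ t in (-(4 * K))..(4 * K), φ t := by
  have hc : Continuous fun v : ℝ => ∫ a in (0:ℝ)..(4 * K), φ (a - v) :=
    intervalIntegral.continuous_parametric_intervalIntegral_of_continuous' (by fun_prop) _ _
  calc _ ≤ ∫ v in (0:ℝ)..(4 * K), ∫ t in (-(4 * K))..(4 * K), φ t := by
        refine intervalIntegral.integral_mono_on (by linarith)
          (hc.intervalIntegrable _ _) (intervalIntegrable_const) fun v hv => ?_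
        rw [intervalIntegral.integral_comp_sub_right]
        exact intervalIntegral.integral_mono_interval (by linarith [hv.2]) (by linarith)
          (by linarith [hv.1]) (Filter.Eventually.of_forall h0) (hφ.intervalIntegrable _ _)
    _ = _ := by rw [intervalIntegral.integral_const, smul_eq_mul]; ring

/-- The majorant principle for sharp intervals, at the cost of a constant and a longer interval. -/
lemma majorant_finite (S : Finset ℕ) (c : ℕ → ℂ) (b : ℕ → ℝ) (hb : ∀ n, ‖c n‖ ≤ b n) {K : ℝ}
    (hK : 0 < K) : ∫ t in (-K)..K, ‖dpoly S c t‖ ^ 2 ≤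
      2 * ∫ t in (-(4 * K))..(4 * K), ‖dpoly S (fun n => (b n : ℂ)) t‖ ^ 2 := by
  have h1 := double_integral_lower (φ := fun t => ‖dpoly S c t‖ ^ 2)
    ((continuous_dpoly S c).norm.pow 2) (fun _ => by positivity) hK
  have h2 := double_integral_upper (φ := fun t => ‖dpoly S (fun n => (b n : ℂ)) t‖ ^ 2)
    ((continuous_dpoly S _).norm.pow 2) (fun _ => by positivity) hK
  have h3 := (h1.trans (double_integral_le S c b hb (4 * K))).trans h2
  rw [show 4 * K * ∫ t in (-(4 * K))..(4 * K), ‖dpoly S (fun n => (b n : ℂ)) t‖ ^ 2 =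
    2 * K * (2 * ∫ t in (-(4 * K))..(4 * K), ‖dpoly S (fun n => (b n : ℂ)) t‖ ^ 2) by ring] at h3
  exact le_of_mul_le_mul_left h3 (by positivity)

lemma norm_char (n : ℕ) (t : ℝ) : ‖Complex.exp (-Complex.I * t * Real.log n)‖ = 1 := by
  rw [show -Complex.I * (t:ℂ) * (Real.log n : ℂ) = ((-(t * Real.log n) : ℝ) : ℂ) * Complex.I by
    push_cast; ring]
  exact Complex.norm_exp_ofReal_mul_I _

lemma summable_char {c : ℕ → ℂ} {b : ℕ → ℝ} (hb : ∀ n, ‖c n‖ ≤ b n) (hs : Summable b) (t : ℝ) :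
    Summable fun n : ℕ => c n * Complex.exp (-Complex.I * t * Real.log n) := by
  refine Summable.of_norm_bounded hs fun n => ?_
  rw [norm_mul, norm_char, mul_one]
  exact hb n

lemma tendsto_dpoly_sq {c : ℕ → ℂ} {b : ℕ → ℝ} (hb : ∀ n, ‖c n‖ ≤ b n) (hs : Summable b)
    (u v : ℝ) : Filter.Tendsto (fun N => ∫ t in u..v, ‖dpoly (range N) c t‖ ^ 2) Filter.atTop
      (nhds (∫ t in u..v, ‖∑' n : ℕ, c n * Complex.exp (-Complex.I * t * Real.log n)‖ ^ 2)) := by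
  refine intervalIntegral.tendsto_integral_filter_of_dominated_convergence
    (fun _ => (∑' n, b n) ^ 2) ?_ ?_ intervalIntegrable_const ?_
  · exact Filter.Eventually.of_forall fun N =>
      ((continuous_dpoly (range N) c).norm.pow 2).aestronglyMeasurable
  · refine Filter.Eventually.of_forall fun N => Filter.Eventually.of_forall fun t _ => ?_
    rw [Real.norm_of_nonneg (by positivity)]
    gcongr
    refine (norm_sum_le _ _).trans ?_
    refine (sum_le_sum fun n _ => ?_).trans
      (hs.sum_le_tsum (range N) fun n _ => (norm_nonneg _).trans (hb n))
    rw [norm_mul, norm_char, mul_one]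
    exact hb n
  · refine Filter.Eventually.of_forall fun t _ => ?_
    exact ((summable_char hb hs t).hasSum.tendsto_sum_nat.norm).pow 2

/-- Mean squares of a Dirichlet series over any interval of length `2K` are controlled by the mean
square, over an interval centred at `0`, of any Dirichlet series majorizing its coefficients. -/
lemma majorant {c : ℕ → ℂ} {b : ℕ → ℝ} (hb : ∀ n, ‖c n‖ ≤ b n) (hs : Summable b) {K : ℝ}
    (hK : 0 < K) (t₀ : ℝ) :
    ∫ t in (t₀ - K)..(t₀ + K), ‖∑' n : ℕ, c n * Complex.exp (-Complex.I * t * Real.log n)‖ ^ 2 ≤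
      2 * ∫ t in (-(4 * K))..(4 * K),
        ‖∑' n : ℕ, (b n : ℂ) * Complex.exp (-Complex.I * t * Real.log n)‖ ^ 2 := by
  set c' : ℕ → ℂ := fun n => c n * Complex.exp (-Complex.I * t₀ * Real.log n) with hc'
  have hb' : ∀ n, ‖c' n‖ ≤ b n := fun n => by
    rw [hc', norm_mul, norm_char, mul_one]; exact hb n
  have hbb : ∀ n, ‖(b n : ℂ)‖ ≤ b n := fun n => by
    rw [Complex.norm_real, Real.norm_of_nonneg ((norm_nonneg _).trans (hb n))]
  have h1 := tendsto_dpoly_sq hb' hs (-K) K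
  have h2 := (tendsto_dpoly_sq hbb hs (-(4 * K)) (4 * K)).const_mul 2
  have h3 := le_of_tendsto_of_tendsto' h1 h2 fun N => majorant_finite (range N) c' b hb' hK
  refine le_trans (le_of_eq ?_) h3
  have h4 := intervalIntegral.integral_comp_add_right (a := -K) (b := K)
    (fun t : ℝ => ‖∑' n : ℕ, c n * Complex.exp (-Complex.I * t * Real.log n)‖ ^ 2) t₀
  rw [show t₀ - K = -K + t₀ by ring, show t₀ + K = K + t₀ by ring, ← h4]
  refine intervalIntegral.integral_congr fun t _ => ?_
  simp only [hc']
  congr 3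
  funext n
  rw [mul_assoc (c n), ← Complex.exp_add]
  congr 2
  push_cast
  ring

/-! ### Plancherel inequality -/

open scoped FourierTransform SchwartzMap InnerProductSpace in
/-- One half of Plancherel's theorem for `L¹ ∩ L²`, obtained by duality from Schwartz functions. -/
lemma plancherel_toLp {h : ℝ → ℂ} (h1 : Integrable h) (h2 : MemLp h 2) (hH : MemLp (𝓕 h) 2) :
    ‖h2.toLp h‖ ≤ ‖hH.toLp (𝓕 h)‖ := by
  have hs2 : MemLp (fun x => starRingEnd ℂ (h x)) 2 := h2.star
  have hsH : MemLp (fun x => starRingEnd ℂ (𝓕 h x)) 2 := hH.star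
  have e1 : ‖hs2.toLp _‖ = ‖h2.toLp h‖ := by
    rw [Lp.norm_toLp, Lp.norm_toLp]
    congr 1
    exact eLpNorm_congr_norm_ae (Filter.Eventually.of_forall fun x => RCLike.norm_conj _)
  have e2 : ‖hsH.toLp _‖ = ‖hH.toLp (𝓕 h)‖ := by
    rw [Lp.norm_toLp, Lp.norm_toLp]
    congr 1
    exact eLpNorm_congr_norm_ae (Filter.Eventually.of_forall fun x => RCLike.norm_conj _)
  set k := hs2.toLp _ with hk
  have key : ∀ u : Lp ℂ 2 (volume : Measure ℝ), ‖⟪k, u⟫_ℂ‖ ≤ ‖hH.toLp (𝓕 h)‖ * ‖u‖ := by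
    intro u
    refine DenseRange.induction_on (e := SchwartzMap.toLpCLM ℝ ℂ 2 (volume : Measure ℝ))
      (SchwartzMap.denseRange_toLpCLM ENNReal.ofNat_ne_top) u
      (isClosed_le (by fun_prop) (by fun_prop)) fun φ => ?_
    set ψ : 𝓢(ℝ, ℂ) := 𝓕⁻ φ with hψ
    have hφ : φ = 𝓕 ψ := (FourierTransform.fourier_fourierInv_eq φ).symm
    have hφ' : SchwartzMap.toLpCLM ℝ ℂ 2 (volume : Measure ℝ) φ = φ.toLp 2 := rfl
    have hn : ‖φ.toLp 2‖ = ‖ψ.toLp 2‖ := by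
      rw [hφ]; exact SchwartzMap.norm_fourier_toL2_eq ψ
    have i1 : ⟪k, φ.toLp 2⟫_ℂ = ∫ x, φ x * h x := by
      rw [L2.inner_def]
      refine integral_congr_ae ?_
      filter_upwards [hs2.coeFn_toLp, φ.coeFn_toLp 2] with x hx1 hx2
      rw [hx1, hx2]
      simp
    have i2 : ⟪hsH.toLp _, ψ.toLp 2⟫_ℂ = ∫ x, ψ x * 𝓕 h x := by
      rw [L2.inner_def]
      refine integral_congr_ae ?_
      filter_upwards [hsH.coeFn_toLp, ψ.coeFn_toLp 2] with x hx1 hx2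
      rw [hx1, hx2]
      simp
    have i3 : ∫ x, φ x * h x = ∫ x, ψ x * 𝓕 h x := by
      rw [hφ]
      have := VectorFourier.integral_fourierIntegral_smul_eq_flip (L := innerₗ ℝ)
        (μ := volume) (ν := volume) (e := Real.fourierChar) (f := ψ) (g := h)
        Real.continuous_fourierChar continuous_inner ψ.integrable h1
      simp only [flip_innerₗ, smul_eq_mul] at this
      exact this
    rw [hφ', i1, i3, ← i2, hn, ← e2]
    exact norm_inner_le_norm _ _
  have := key k
  rw [inner_self_eq_norm_sq_to_K] at this
  have h3 : ‖k‖ * ‖k‖ ≤ ‖hH.toLp (𝓕 h)‖ * ‖k‖ := by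
    refine le_trans (le_of_eq ?_) this
    simp [sq]
  rw [← e1]
  by_contra hlt
  push Not at hlt
  have hk0 : 0 < ‖k‖ := (norm_nonneg _).trans_lt hlt
  nlinarith

open scoped FourierTransform in
/-- The Plancherel inequality for integrals of squares. -/
lemma plancherel_le {h : ℝ → ℂ} (h1 : Integrable h) (h2 : MemLp h 2) (hH : MemLp (𝓕 h) 2) :
    ∫ x, ‖h x‖ ^ 2 ≤ ∫ x, ‖𝓕 h x‖ ^ 2 := by
  have key := plancherel_toLp h1 h2 hH
  have e : ∀ {φ : ℝ → ℂ} (hφ : MemLp φ 2), ‖hφ.toLp φ‖ ^ 2 = ∫ x, ‖φ x‖ ^ 2 := by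
    intro φ hφ
    have h4 := inner_self_eq_norm_sq_to_K (𝕜 := ℂ) (hφ.toLp φ)
    rw [L2.inner_def] at h4
    have h5 : ∫ x, inner ℂ ((hφ.toLp φ : ℝ → ℂ) x) ((hφ.toLp φ : ℝ → ℂ) x)
        = ((∫ x, ‖φ x‖ ^ 2 : ℝ) : ℂ) := by
      rw [← integral_complex_ofReal]
      refine integral_congr_ae ?_
      filter_upwards [hφ.coeFn_toLp] with x hx
      rw [hx, inner_self_eq_norm_sq_to_K]
      simp
    rw [h5] at h4
    apply Complex.ofReal_injective
    rw [h4]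
    simp
  rw [← e h2, ← e hH]
  gcongr

/-! ### The mean square of the smoothed sums -/

/-- The kernel damped by `e^{-αw}`. -/
noncomputable def kd (α w : ℝ) : ℝ := kk w * Real.exp (-α * w)

lemma measurable_kd (α : ℝ) : Measurable (kd α) := by
  unfold kd; exact measurable_kk.mul (by fun_prop)

lemma ofReal_kd (α w : ℝ) : (kd α w : ℂ) = (kk w : ℂ) * Complex.exp (-(α : ℂ) * w) := by
  unfold kd; push_cast; rfl

lemma integrable_kd {α : ℝ} (hα : 0 < α) : Integrable (kd α) := by
  have := integrable_kk (s := (α : ℂ)) (by simpa using hα)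
  simp_rw [← ofReal_kd] at this
  simpa using this.re

lemma abs_kd_le {α : ℝ} (hα : 0 < α) (hα1 : α ≤ 1) (w : ℝ) : |kd α w| ≤ Real.exp 1 := by
  have := norm_kk_mul_exp_le (s := (α : ℂ)) (by simpa using hα1) (by simpa using hα) w
  rw [kd, abs_mul, abs_of_pos (Real.exp_pos _)]
  simpa using this

/-- The damped smoothed sum with coefficients `B`. -/
noncomputable def hsum (B : ℕ → ℝ) (α v : ℝ) : ℝ := ∑' n : ℕ, B n * kd α (v - Real.log n)

lemma hsum_norm_le {B : ℕ → ℝ} {α : ℝ} (hα : 0 < α) (hα1 : α ≤ 1) (v : ℝ) (n : ℕ) :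
    ‖B n * kd α (v - Real.log n)‖ ≤ |B n| * Real.exp 1 := by
  rw [norm_mul, Real.norm_eq_abs, Real.norm_eq_abs]
  gcongr
  exact abs_kd_le hα hα1 _

lemma hsum_summable {B : ℕ → ℝ} (hB : Summable fun n => |B n|) {α : ℝ} (hα : 0 < α) (hα1 : α ≤ 1)
    (v : ℝ) : Summable fun n : ℕ => B n * kd α (v - Real.log n) :=
  Summable.of_norm_bounded (hB.mul_right (Real.exp 1)) (hsum_norm_le hα hα1 v)

lemma measurable_hsum {B : ℕ → ℝ} (hB : Summable fun n => |B n|) {α : ℝ} (hα : 0 < α)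
    (hα1 : α ≤ 1) : Measurable (hsum B α) := by
  refine measurable_of_tendsto_metrizable
    (f := fun N v => ∑ n ∈ range N, B n * kd α (v - Real.log n)) (fun N => ?_) ?_
  · refine Finset.measurable_fun_sum _ fun n _ => ?_
    exact ((measurable_kd α).comp (measurable_id.sub_const _)).const_mul _
  · rw [tendsto_pi_nhds]
    exact fun v => (hsum_summable hB hα hα1 v).hasSum.tendsto_sum_nat

lemma abs_hsum_le {B : ℕ → ℝ} (hB : Summable fun n => |B n|) {α : ℝ} (hα : 0 < α)
    (hα1 : α ≤ 1) (v : ℝ) : ‖hsum B α v‖ ≤ ∑' n, |B n| * Real.exp 1 :=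
  tsum_of_norm_bounded (hB.mul_right (Real.exp 1)).hasSum (hsum_norm_le hα hα1 v)

lemma integrable_term (B : ℕ → ℝ) {α : ℝ} (hα : 0 < α) (n : ℕ) :
    Integrable fun v : ℝ => B n * kd α (v - Real.log n) :=
  ((integrable_kd hα).comp_sub_right (Real.log n)).const_mul (B n)

lemma integral_norm_term (B : ℕ → ℝ) (α : ℝ) (n : ℕ) :
    ∫ v : ℝ, ‖B n * kd α (v - Real.log n)‖ = |B n| * ∫ v, ‖kd α v‖ := by
  simp_rw [norm_mul]
  rw [integral_const_mul, Real.norm_eq_abs]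
  congr 1
  exact integral_sub_right_eq_self (fun v => ‖kd α v‖) _

lemma integrable_hsum {B : ℕ → ℝ} (hB : Summable fun n => |B n|) {α : ℝ} (hα : 0 < α)
    (hα1 : α ≤ 1) : Integrable (hsum B α) := by
  refine ⟨(measurable_hsum hB hα hα1).aestronglyMeasurable, ?_⟩
  rw [hasFiniteIntegral_iff_enorm]
  calc ∫⁻ v, ‖hsum B α v‖ₑ ≤ ∫⁻ v, ∑' n : ℕ, ‖B n * kd α (v - Real.log n)‖ₑ := by
        refine lintegral_mono fun v => ?_
        exact enorm_tsum_le_tsum_enorm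
    _ = ∑' n : ℕ, ∫⁻ v, ‖B n * kd α (v - Real.log n)‖ₑ := by
        refine lintegral_tsum fun n => ?_
        exact (integrable_term B hα n).aestronglyMeasurable.enorm
    _ = ∑' n : ℕ, ENNReal.ofReal (|B n| * ∫ v, ‖kd α v‖) := by
        congr 1
        funext n
        rw [← ofReal_integral_norm_eq_lintegral_enorm (integrable_term B hα n), integral_norm_term]
    _ < ⊤ := by
        rw [← ENNReal.ofReal_tsum_of_nonneg (fun n => by positivity) (hB.mul_right _)]
        exact ENNReal.ofReal_lt_top

lemma integrable_hsum_sq {B : ℕ → ℝ} (hB : Summable fun n => |B n|) {α : ℝ} (hα : 0 < α)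
    (hα1 : α ≤ 1) : Integrable fun v => hsum B α v ^ 2 := by
  have h := integrable_hsum hB hα hα1
  refine (h.norm.const_mul (∑' n, |B n| * Real.exp 1)).mono'
    ((measurable_hsum hB hα hα1).pow_const 2).aestronglyMeasurable
    (Filter.Eventually.of_forall fun v => ?_)
  rw [norm_pow, sq]
  gcongr
  exact abs_hsum_le hB hα hα1 v

open scoped FourierTransform in
/-- The Fourier transform of the damped smoothed sum is a Dirichlet series times the Laplace
transform of the kernel. -/
lemma fourier_hsum {B : ℕ → ℝ} (hB : Summable fun n => |B n|) {α : ℝ} (hα : 0 < α)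
    (ξ : ℝ) : 𝓕 (fun v => (hsum B α v : ℂ)) ξ =
      (∑' n : ℕ, (B n : ℂ) * Complex.exp (-Complex.I * (2 * Real.pi * ξ : ℝ) * Real.log n)) *
        KL (α + Complex.I * (2 * Real.pi * ξ : ℝ)) := by
  rw [Real.fourier_real_eq_integral_exp_smul]
  set t : ℝ := 2 * Real.pi * ξ with ht
  have e1 : ∀ v : ℝ, Complex.exp (↑(-2 * Real.pi * v * ξ) * Complex.I) • (hsum B α v : ℂ)
      = ∑' n : ℕ, Complex.exp (-Complex.I * t * v) * ((B n * kd α (v - Real.log n) : ℝ) : ℂ) := by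
    intro v
    rw [hsum, Complex.ofReal_tsum, smul_eq_mul, tsum_mul_left]
    congr 2
    rw [ht]; push_cast; ring
  simp_rw [e1]
  clear_value t
  have hnorm : ∀ (n : ℕ) (v : ℝ),
      ‖Complex.exp (-Complex.I * t * v) * ((B n * kd α (v - Real.log n) : ℝ) : ℂ)‖
        = ‖B n * kd α (v - Real.log n)‖ := by
    intro n v
    rw [norm_mul, Complex.norm_real, show -Complex.I * (t:ℂ) * (v:ℂ) = ((-(t * v) : ℝ) : ℂ) * Complex.I
      by push_cast; ring, Complex.norm_exp_ofReal_mul_I, one_mul]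
  have hinteg : ∀ n : ℕ, Integrable fun v : ℝ =>
      Complex.exp (-Complex.I * t * v) * ((B n * kd α (v - Real.log n) : ℝ) : ℂ) := by
    intro n
    refine (integrable_term B hα n).norm.mono' ?_
      (Filter.Eventually.of_forall fun v => (hnorm n v).le)
    refine AEStronglyMeasurable.mul ?_ (integrable_term B hα n).ofReal.aestronglyMeasurable
    exact Continuous.aestronglyMeasurable (by fun_prop)
  have hsumm : Summable fun n : ℕ => ∫ v : ℝ,
      ‖Complex.exp (-Complex.I * t * v) * ((B n * kd α (v - Real.log n) : ℝ) : ℂ)‖ := by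
    simp_rw [hnorm, integral_norm_term]
    exact hB.mul_right _
  rw [← (hasSum_integral_of_summable_integral_norm hinteg hsumm).tsum_eq, ← tsum_mul_right]
  congr 1
  funext n
  rw [← integral_sub_right_eq_self (μ := volume) (fun v : ℝ =>
    Complex.exp (-Complex.I * t * v) * ((B n * kd α (v - Real.log n) : ℝ) : ℂ)) (-Real.log n), KL,
    ← integral_const_mul]
  congr 1
  funext w
  simp only [sub_neg_eq_add, add_sub_cancel_right]
  rw [Complex.ofReal_mul (B n), ofReal_kd]
  have : Complex.exp (-Complex.I * t * ((w + Real.log n : ℝ) : ℂ))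
      = Complex.exp (-Complex.I * t * Real.log n) * Complex.exp (-Complex.I * t * w) := by
    rw [← Complex.exp_add]; congr 1; push_cast; ring
  have h2 : Complex.exp (-(↑α + Complex.I * ↑t) * ↑w)
      = Complex.exp (-(α:ℂ) * w) * Complex.exp (-Complex.I * t * w) := by
    rw [← Complex.exp_add]; congr 1; ring
  rw [this, h2]
  ring

open scoped FourierTransform in
/-- Plancherel for `hsum`: its mean square is controlled by that of (Dirichlet series) × (transform of
the kernel) on the line `Re s = α`, for which only uniform bounds on `[-R, R]` are needed. -/
lemma mean_square {B : ℕ → ℝ} (hB : Summable fun n => |B n|) {α : ℝ} (hα : 0 < α)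
    (hα1 : α ≤ 1) {Q : ℝ} (hQ : ∀ R : ℝ, 1 ≤ R → ∫ t in (-R)..R,
      ‖(∑' n : ℕ, (B n : ℂ) * Complex.exp (-Complex.I * t * Real.log n)) *
        KL (α + Complex.I * t)‖ ^ 2 ≤ Q) :
    ∫ v, hsum B α v ^ 2 ≤ Q := by
  set h : ℝ → ℂ := fun v => (hsum B α v : ℂ) with hh
  have h1 : Integrable h := (integrable_hsum hB hα hα1).ofReal
  have hn : ∀ v, ‖h v‖ ^ 2 = hsum B α v ^ 2 := fun v => by
    rw [hh, Complex.norm_real, Real.norm_eq_abs, sq_abs]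
  have h2 : MemLp h 2 := by
    rw [memLp_two_iff_integrable_sq_norm h1.aestronglyMeasurable]
    simp_rw [hn]
    exact integrable_hsum_sq hB hα hα1
  have hc : Continuous (𝓕 h) :=
    VectorFourier.fourierIntegral_continuous Real.continuous_fourierChar
      (by exact continuous_inner) h1
  have hbd : ∀ R : ℝ, 1 ≤ R → ∫ ξ in (-R)..R, ‖𝓕 h ξ‖ ^ 2 ≤ Q := by
    intro R hR
    have hpi : 1 ≤ 2 * Real.pi := by linarith [Real.pi_gt_three]
    have h3 := hQ (2 * Real.pi * R) (by nlinarith)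
    have h4 := intervalIntegral.mul_integral_comp_mul_left (a := -R) (b := R) (c := 2 * Real.pi)
      (f := fun t : ℝ => ‖(∑' n : ℕ, (B n : ℂ) * Complex.exp (-Complex.I * t * Real.log n)) *
        KL (α + Complex.I * t)‖ ^ 2)
    rw [mul_neg] at h4
    rw [← h4] at h3
    simp_rw [← fourier_hsum hB hα] at h3
    refine le_trans ?_ h3
    apply le_mul_of_one_le_left _ hpi
    exact intervalIntegral.integral_nonneg (by linarith) fun _ _ => by positivity
  have hNt : Filter.Tendsto (fun N : ℕ => (N : ℝ)) Filter.atTop Filter.atTop :=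
    tendsto_natCast_atTop_atTop
  have hNb : Filter.Tendsto (fun N : ℕ => -(N : ℝ)) Filter.atTop Filter.atBot :=
    Filter.tendsto_neg_atTop_atBot.comp hNt
  have hev : ∀ᶠ N : ℕ in Filter.atTop, ∫ ξ in (-(N:ℝ))..N, ‖𝓕 h ξ‖ ^ 2 ≤ Q := by
    filter_upwards [Filter.eventually_ge_atTop 1] with N hN
    exact hbd N (by exact_mod_cast hN)
  have hinteg : Integrable fun ξ => ‖𝓕 h ξ‖ ^ 2 := by
    refine integrable_of_intervalIntegral_norm_bounded Q (fun N => ?_) hNb hNt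
      (by simpa using hev)
    exact ((hc.norm.pow 2).integrableOn_Icc).mono_set Set.Ioc_subset_Icc_self
  have hH : MemLp (𝓕 h) 2 := (memLp_two_iff_integrable_sq_norm hc.aestronglyMeasurable).2 hinteg
  have key := plancherel_le h1 h2 hH
  simp_rw [hn] at key
  refine key.trans ?_
  exact le_of_tendsto (intervalIntegral_tendsto_integral hinteg hNb hNt) hev

/-! ### Comparison of `F` with `ζ` near the line `Re = 1` -/

/-- The Dirichlet series `∑ f(n) n^{-1-s}`. -/
noncomputable def Fs (f : ℕ → ℝ) (s : ℂ) : ℂ := ∑' n : ℕ, (f n : ℂ) * (n : ℂ) ^ (-1 - s)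

lemma norm_one_add_le_exp (u : ℂ) : ‖1 + u‖ ≤ Real.exp (u.re + ‖u‖ ^ 2 / 2) := by
  have h : ‖1 + u‖ ^ 2 = 1 + 2 * u.re + ‖u‖ ^ 2 := by
    rw [Complex.sq_norm, Complex.sq_norm, Complex.normSq_apply, Complex.normSq_apply]
    simp; ring
  have h2 : ‖1 + u‖ ^ 2 ≤ Real.exp (u.re + ‖u‖ ^ 2 / 2) ^ 2 := by
    rw [h, ← Real.exp_nat_mul]
    have := Real.add_one_le_exp (((2:ℕ):ℝ) * (u.re + ‖u‖ ^ 2 / 2))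
    push_cast at this ⊢
    linarith
  exact le_of_sq_le_sq h2 (Real.exp_nonneg _)

lemma norm_natpow {p : ℕ} (hp : 0 < p) (s : ℂ) : ‖(p : ℂ) ^ (-1 - s)‖ = (p : ℝ) ^ (-1 - s.re) := by
  rw [Complex.norm_natCast_cpow_of_pos hp]; simp

lemma re_natpow {p : ℕ} (hp : 0 < p) (σ t : ℝ) :
    ((p : ℂ) ^ (-1 - (σ + t * Complex.I : ℂ))).re
      = (p : ℝ) ^ (-1 - σ) * Real.cos (t * Real.log p) := by
  have hp' : (p : ℂ) ≠ 0 := by exact_mod_cast hp.ne'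
  have e : (Real.log p : ℂ) * (-1 - (σ + t * Complex.I : ℂ))
      = ((Real.log p * (-1 - σ) : ℝ) : ℂ) + ((-(t * Real.log p) : ℝ) : ℂ) * Complex.I := by
    push_cast; ring
  rw [Complex.cpow_def_of_ne_zero hp', ← Complex.natCast_log, e, Complex.exp_add,
    ← Complex.ofReal_exp, Complex.re_ofReal_mul, Complex.exp_ofReal_mul_I_re, Real.cos_neg,
    Real.rpow_def_of_pos (by exact_mod_cast hp)]

/-- One Euler factor of `F/ζ`. -/
lemma euler_factor_le {f : ℕ → ℝ} (hf : ∀ n, f n ∈ Set.Icc (-1 : ℝ) 1) (hf1 : f 1 = 1) {p : ℕ}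
    (hp : p.Prime) {s : ℂ} (hs : 0 < s.re) :
    ‖∑' e : ℕ, (f (p ^ e) : ℂ) * ((p ^ e : ℕ) : ℂ) ^ (-1 - s)‖ ≤
      Real.exp (-((1 - f p) * ((p : ℂ) ^ (-1 - s)).re) + 12 / (p : ℝ) ^ 2) *
        ‖(1 - (p : ℂ) ^ (-1 - s))⁻¹‖ := by
  set q : ℂ := (p : ℂ) ^ (-1 - s) with hq
  have hp0 : (0 : ℝ) < p := by exact_mod_cast hp.pos
  have hp2 : (2 : ℝ) ≤ p := by exact_mod_cast hp.two_le
  have hqn : ‖q‖ ≤ 1 / p := by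
    rw [hq, norm_natpow hp.pos, one_div, ← Real.rpow_neg_one]
    exact Real.rpow_le_rpow_of_exponent_le (by linarith) (by linarith)
  have hpi : 1 / (p : ℝ) ≤ 1 / 2 := one_div_le_one_div_of_le (by norm_num) hp2
  have hq1 : ‖q‖ < 1 := by linarith
  have hterm : ∀ e : ℕ, (f (p ^ e) : ℂ) * ((p ^ e : ℕ) : ℂ) ^ (-1 - s) = (f (p ^ e) : ℂ) * q ^ e := by
    intro e
    rw [hq, ← Complex.cpow_nat_mul, Nat.cast_pow, ← Complex.natCast_cpow_natCast_mul]
  have habs : ∀ n, ‖(f n : ℂ)‖ ≤ 1 := fun n => by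
    rw [Complex.norm_real]; exact abs_le.2 (hf n)
  have hb : ∀ e : ℕ, ‖(f (p ^ e) : ℂ) * q ^ e‖ ≤ ‖q‖ ^ e := fun e => by
    rw [norm_mul, norm_pow]
    exact mul_le_of_le_one_left (by positivity) (habs _)
  have hsum : Summable fun e : ℕ => (f (p ^ e) : ℂ) * q ^ e :=
    Summable.of_norm_bounded (summable_geometric_of_lt_one (norm_nonneg _) hq1) hb
  simp_rw [hterm]
  set r : ℂ := ∑' e : ℕ, (f (p ^ (e + 2)) : ℂ) * q ^ (e + 2) with hr
  have hE : ∑' e : ℕ, (f (p ^ e) : ℂ) * q ^ e = 1 + f p * q + r := by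
    rw [← hsum.sum_add_tsum_nat_add 2, hr]
    simp [sum_range_succ, hf1]
  have hr2 : ‖r‖ ≤ 2 * ‖q‖ ^ 2 := by
    have hg : HasSum (fun e : ℕ => ‖q‖ ^ 2 * ‖q‖ ^ e) (‖q‖ ^ 2 * (1 - ‖q‖)⁻¹) :=
      (hasSum_geometric_of_lt_one (norm_nonneg _) hq1).mul_left _
    refine (tsum_of_norm_bounded hg fun e => ?_).trans ?_
    · rw [← pow_add, add_comm 2 e]; exact hb (e + 2)
    · have : (1 - ‖q‖)⁻¹ ≤ 2 := by
        rw [inv_le_comm₀ (by linarith) (by norm_num)]; linarith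
      nlinarith [sq_nonneg ‖q‖]
  have h1q : 1 - q ≠ 0 := by
    intro h
    have : q = 1 := (sub_eq_zero.1 h).symm
    rw [this] at hq1; simp at hq1
  rw [norm_inv, ← div_eq_mul_inv, le_div_iff₀ (norm_pos_iff.2 h1q), ← norm_mul, hE]
  set w : ℂ := r - f p * q ^ 2 - r * q with hw
  have hmul : (1 + f p * q + r) * (1 - q) = 1 + (-((1 - f p) * q) + w) := by rw [hw]; ring
  have hqq : ‖q‖ ^ 2 ≤ 1 / (p : ℝ) ^ 2 := by
    rw [← one_div_pow]; gcongr
  have hwn : ‖w‖ ≤ 4 / (p : ℝ) ^ 2 := by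
    have a1 : ‖(f p : ℂ) * q ^ 2‖ ≤ ‖q‖ ^ 2 := by
      rw [norm_mul, norm_pow]; exact mul_le_of_le_one_left (by positivity) (habs _)
    have a2 : ‖r * q‖ ≤ ‖q‖ ^ 2 := by
      rw [norm_mul]
      calc ‖r‖ * ‖q‖ ≤ (2 * ‖q‖ ^ 2) * (1 / 2) := by gcongr; linarith
        _ = _ := by ring
    calc ‖w‖ ≤ ‖r‖ + ‖(f p : ℂ) * q ^ 2‖ + ‖r * q‖ :=
          (norm_sub_le _ _).trans (add_le_add_left (norm_sub_le _ _) _)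
      _ ≤ 4 * ‖q‖ ^ 2 := by linarith
      _ ≤ 4 * (1 / (p : ℝ) ^ 2) := by gcongr
      _ = _ := by ring
  have hfp : ‖(1 - f p : ℂ)‖ ≤ 2 := by
    calc _ ≤ ‖(1:ℂ)‖ + ‖(f p : ℂ)‖ := norm_sub_le _ _
      _ ≤ 1 + 1 := by gcongr; simp; exact habs p
      _ = 2 := by norm_num
  have hu : ‖-((1 - f p) * q) + w‖ ≤ 4 / p := by
    have a3 : 4 / (p : ℝ) ^ 2 ≤ 2 / p := by
      rw [div_le_div_iff₀ (by positivity) hp0]; nlinarith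
    calc _ ≤ ‖-((1 - f p) * q)‖ + ‖w‖ := norm_add_le _ _
      _ ≤ 2 * (1 / p) + 2 / p := by
          rw [norm_neg, norm_mul]
          gcongr
          exact hwn.trans a3
      _ = 4 / p := by ring
  rw [hmul]
  refine (norm_one_add_le_exp _).trans (Real.exp_le_exp.2 ?_)
  have hre : (-((1 - f p : ℂ) * q) + w).re = -((1 - f p) * q.re) + w.re := by
    rw [Complex.add_re, Complex.neg_re,
      show (1 - (f p : ℂ)) = ((1 - f p : ℝ) : ℂ) by push_cast; rfl, Complex.re_ofReal_mul]
  have hwre : w.re ≤ 4 / (p : ℝ) ^ 2 := (Complex.re_le_norm w).trans hwn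
  have hu2 : ‖-((1 - f p) * q) + w‖ ^ 2 / 2 ≤ 8 / (p : ℝ) ^ 2 := by
    calc _ ≤ (4 / (p : ℝ)) ^ 2 / 2 := by gcongr
      _ = _ := by ring
  have : 12 / (p : ℝ) ^ 2 = 4 / (p : ℝ) ^ 2 + 8 / (p : ℝ) ^ 2 := by ring
  rw [hre, this]
  linarith

/-! ### Bounds for `F` in terms of `M(x;T)` -/

lemma MxT_le (f : ℕ → ℝ) {x T t : ℝ} (ht : |t| ≤ T) :
    MxT f x T ≤ ∑ p ∈ primesUpTo x, (1 - f p) * Real.cos (t * Real.log p) / p := by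
  refine csInf_le ?_ (Set.mem_image_of_mem _ (abs_le.1 ht))
  exact (isCompact_Icc.image (by fun_prop)).bddBelow

/-- The sums defining `M(x;T)` may be extended beyond `x` and damped by `p^{-1/log x}` at a bounded
cost; the terms `12/p²` are the error terms of the Euler factors. -/
lemma prime_exponent_le : ∃ K : ℝ, 0 < K ∧ ∀ f : ℕ → ℝ, (∀ n, f n ∈ Set.Icc (-1 : ℝ) 1) →
    ∀ x T t : ℝ, 3 ≤ x → |t| ≤ T → ∀ S : Finset ℕ, (∀ p ∈ S, p.Prime) → primesUpTo x ⊆ S →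
    ∑ p ∈ S, (-((1 - f p) * ((p : ℝ) ^ (-1 - 1 / Real.log x) * Real.cos (t * Real.log p)))
      + 12 / (p : ℝ) ^ 2) ≤ -MxT f x T + K := by
  obtain ⟨C1, hC1, h1⟩ := sum_primes_rpow_le
  obtain ⟨C2, hC2, h2⟩ := sum_log_div_le
  have hsq : Summable fun n : ℕ => 12 / (n : ℝ) ^ 2 := by
    have := (Real.summable_one_div_nat_pow (p := 2)).2 (by norm_num)
    simpa [div_eq_mul_inv] using this.mul_left 12
  refine ⟨4 * C2 + 2 * C1 + ∑' n : ℕ, 12 / (n : ℝ) ^ 2, ?_, ?_⟩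
  · have : 0 ≤ ∑' n : ℕ, 12 / (n : ℝ) ^ 2 := tsum_nonneg fun n => by positivity
    positivity
  intro f hf x T t hx ht S hS hsub
  have hlog : 1 ≤ Real.log x := by
    rw [Real.le_log_iff_exp_le (by linarith)]; linarith [Real.exp_one_lt_d9]
  set σ := 1 / Real.log x with hσ
  have hσ0 : 0 < σ := by positivity
  have hσ1 : σ ≤ 1 := by rw [hσ, div_le_one (by linarith)]; exact hlog
  have hσl : σ * Real.log x = 1 := by rw [hσ]; field_simp
  have hf2 : ∀ p, 0 ≤ 1 - f p ∧ 1 - f p ≤ 2 := fun p => ⟨by linarith [(hf p).2], by linarith [(hf p).1]⟩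
  have hrp : ∀ p : ℕ, p.Prime → (p : ℝ) ^ (-1 - σ) = 1 / p * (p : ℝ) ^ (-σ) := by
    intro p hp
    have : (0 : ℝ) < p := by exact_mod_cast hp.pos
    rw [show -1 - σ = -1 + -σ by ring, Real.rpow_add this, Real.rpow_neg_one, one_div]
  rw [sum_add_distrib]
  have hA : ∑ p ∈ S, 12 / (p : ℝ) ^ 2 ≤ ∑' n : ℕ, 12 / (n : ℝ) ^ 2 :=
    hsq.sum_le_tsum S fun n _ => by positivity
  rw [← sum_sdiff hsub]
  have hbig : ∑ p ∈ S \ primesUpTo x,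
      -((1 - f p) * ((p : ℝ) ^ (-1 - σ) * Real.cos (t * Real.log p))) ≤ 2 * C1 := by
    calc _ ≤ ∑ p ∈ S \ primesUpTo x, 2 * σ * (Real.log p / p * (p : ℝ) ^ (-σ)) := by
          refine sum_le_sum fun p hp => ?_
          rw [mem_sdiff] at hp
          have hpp := hS p hp.1
          have hp0 : (0 : ℝ) < p := by exact_mod_cast hpp.pos
          have hpx : x < p := by
            by_contra hle
            exact hp.2 ((mem_primesUpTo (by linarith)).2 ⟨not_lt.1 hle, hpp⟩)
          have hlp : 1 ≤ σ * Real.log p := by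
            rw [← hσl]; gcongr
          rw [hrp p hpp]
          have hr : 0 ≤ 1 / (p : ℝ) * (p : ℝ) ^ (-σ) := by positivity
          have hcos := Real.neg_one_le_cos (t * Real.log p)
          calc _ = (1 - f p) * (1 / (p : ℝ) * (p : ℝ) ^ (-σ)) * (-Real.cos (t * Real.log p)) := by
                ring
            _ ≤ (2 * (1 / (p : ℝ) * (p : ℝ) ^ (-σ))) * 1 := by
                have := mul_le_mul_of_nonneg_right (hf2 p).2 hr
                have h0 := mul_nonneg (hf2 p).1 hr
                nlinarith
            _ ≤ 2 * (1 / (p : ℝ) * (p : ℝ) ^ (-σ)) * (σ * Real.log p) := by gcongr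
            _ = _ := by ring
      _ = 2 * σ * ∑ p ∈ S \ primesUpTo x, Real.log p / p * (p : ℝ) ^ (-σ) := by rw [mul_sum]
      _ ≤ 2 * σ * (C1 / σ) := by
          gcongr
          exact h1 σ hσ0 hσ1 _ fun p hp => hS p (mem_sdiff.1 hp).1
      _ = 2 * C1 := by field_simp
  have hsmall : ∑ p ∈ primesUpTo x,
      -((1 - f p) * ((p : ℝ) ^ (-1 - σ) * Real.cos (t * Real.log p)))
      ≤ -MxT f x T + 4 * C2 := by
    calc _ ≤ ∑ p ∈ primesUpTo x, (-((1 - f p) * Real.cos (t * Real.log p) / p)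
            + 2 * σ * (Real.log p / p)) := by
          refine sum_le_sum fun p hp => ?_
          have hpp := ((mem_primesUpTo (by linarith)).1 hp).2
          have hp0 : (0 : ℝ) < p := by exact_mod_cast hpp.pos
          have hlp : 0 ≤ Real.log p := Real.log_natCast_nonneg p
          have hple : (p : ℝ) ^ (-σ) ≤ 1 :=
            Real.rpow_le_one_of_one_le_of_nonpos (by exact_mod_cast hpp.one_le) (by linarith)
          have hpge : 1 - (p : ℝ) ^ (-σ) ≤ σ * Real.log p := by
            rw [Real.rpow_def_of_pos hp0]
            have := Real.add_one_le_exp (Real.log p * -σ)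
            linarith
          rw [hrp p hpp]
          have hcos := Real.cos_le_one (t * Real.log p)
          have key : (1 - f p) * Real.cos (t * Real.log p) * (1 - (p : ℝ) ^ (-σ))
              ≤ 2 * (σ * Real.log p) := by
            have a1 : (1 - f p) * Real.cos (t * Real.log p) ≤ 2 := by
              nlinarith [hf2 p]
            nlinarith
          have : -((1 - f p) * (1 / (p:ℝ) * (p:ℝ) ^ (-σ) * Real.cos (t * Real.log p)))
              = -((1 - f p) * Real.cos (t * Real.log p) / p)
                + ((1 - f p) * Real.cos (t * Real.log p) * (1 - (p : ℝ) ^ (-σ))) / p := by ring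
          rw [this]
          refine add_le_add_right ?_ _
          calc _ ≤ 2 * (σ * Real.log p) / p := by gcongr
            _ = _ := by ring
      _ = -(∑ p ∈ primesUpTo x, (1 - f p) * Real.cos (t * Real.log p) / p)
            + 2 * σ * ∑ p ∈ primesUpTo x, Real.log p / p := by
          rw [sum_add_distrib, sum_neg_distrib, mul_sum]
      _ ≤ -MxT f x T + 2 * σ * (C2 * (1 + Real.log x)) := by
          gcongr
          · exact MxT_le f ht
          · exact h2 x (by linarith)
      _ ≤ _ := by
          have : 2 * σ * (C2 * (1 + Real.log x)) = 2 * C2 * (σ + σ * Real.log x) := by ring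
          rw [this, hσl]
          nlinarith
  linarith

lemma summable_f_term {f : ℕ → ℝ} (hf : ∀ n, f n ∈ Set.Icc (-1 : ℝ) 1) {s : ℂ} (hs : 0 < s.re) :
    Summable fun n : ℕ => ‖(f n : ℂ) * (n : ℂ) ^ (-1 - s)‖ := by
  have h := (Real.summable_nat_rpow (p := -1 - s.re)).2 (by linarith)
  refine Summable.of_nonneg_of_le (fun n => norm_nonneg _) (fun n => ?_) h
  rcases Nat.eq_zero_or_pos n with rfl | hn
  · rw [Nat.cast_zero, Complex.zero_cpow (neg_one_sub_ne hs)]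
    simp; positivity
  · rw [norm_mul, norm_natpow hn, Complex.norm_real]
    exact mul_le_of_le_one_left (by positivity) (abs_le.2 (hf n))

/-- On the line `Re s = 1/log x` and for `|t| ≤ T` one has `F ≪ e^{-M(x;T)} ζ`. -/
lemma F_le_zeta : ∃ C : ℝ, 0 < C ∧ ∀ f : ℕ → ℝ, (∀ n, f n ∈ Set.Icc (-1 : ℝ) 1) → IsMult f →
    ∀ x T t : ℝ, 3 ≤ x → |t| ≤ T →
    ‖Fs f ((1 / Real.log x : ℝ) + t * Complex.I)‖ ≤
      C * Real.exp (-MxT f x T) * ‖riemannZeta (1 + ((1 / Real.log x : ℝ) + t * Complex.I))‖ := by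
  obtain ⟨K, hK, hexp⟩ := prime_exponent_le
  refine ⟨Real.exp K, Real.exp_pos K, ?_⟩
  intro f hf hm x T t hx ht
  have hlog : 0 < Real.log x := Real.log_pos (by linarith)
  set σ : ℝ := 1 / Real.log x with hσ
  have hσ0 : 0 < σ := by positivity
  set s : ℂ := (σ : ℂ) + t * Complex.I with hs
  have hsre : s.re = σ := by simp [hs]
  have hs0 : 0 < s.re := by rw [hsre]; exact hσ0
  have hprodF := EulerProduct.eulerProduct_hasProd (f := fun n : ℕ => (f n : ℂ) * (n : ℂ) ^ (-1 - s))
    (by simp [hm.1]) (fun {m n} hmn => by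
      rw [hm.2 m n hmn, Nat.cast_mul, Complex.natCast_mul_natCast_cpow]
      push_cast; ring)
    (summable_f_term hf hs0) (by
      rw [Nat.cast_zero, Complex.zero_cpow (neg_one_sub_ne hs0), mul_zero])
  have hprodZ := riemannZeta_eulerProduct_hasProd (s := 1 + s) (by simp [hsre, hσ0])
  have hF := hprodF.norm
  have hZ := Filter.Tendsto.const_mul (Real.exp K * Real.exp (-MxT f x T)) hprodZ.norm
  refine le_of_tendsto_of_tendsto hF hZ ?_
  rw [SummationFilter.unconditional_filter]
  filter_upwards [Filter.eventually_ge_atTop ((primesUpTo x).subtype Nat.Prime)] with S hS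
  let ι : Nat.Primes ↪ ℕ := ⟨fun p => (p : ℕ), Subtype.val_injective⟩
  have hsub : primesUpTo x ⊆ S.map ι := by
    intro p hp
    have hpp := ((mem_primesUpTo (by linarith)).1 hp).2
    exact mem_map.2 ⟨⟨p, hpp⟩, hS (mem_subtype.2 hp), rfl⟩
  have hpr : ∀ p ∈ S.map ι, p.Prime := by
    intro p hp
    obtain ⟨q, _, rfl⟩ := mem_map.1 hp
    exact q.2
  have hE := hexp f hf x T t hx ht _ hpr hsub
  rw [sum_map] at hE
  calc _ ≤ ∏ p ∈ S, (Real.exp (-((1 - f p) * ((p : ℂ) ^ (-1 - s)).re) + 12 / (p : ℝ) ^ 2) *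
        ‖(1 - (p : ℂ) ^ (-1 - s))⁻¹‖) :=
        prod_le_prod (fun _ _ => norm_nonneg _) fun p _ => euler_factor_le hf hm.1 p.2 hs0
    _ = Real.exp (∑ p ∈ S, (-((1 - f p) * ((p : ℂ) ^ (-1 - s)).re) + 12 / (p : ℝ) ^ 2)) *
        ∏ p ∈ S, ‖(1 - (p : ℂ) ^ (-(1 + s)))⁻¹‖ := by
        rw [prod_mul_distrib, ← Real.exp_sum]
        simp_rw [show -(1 + s) = -1 - s by ring]
    _ ≤ _ := by
        refine mul_le_mul_of_nonneg_right ?_ (prod_nonneg fun _ _ => norm_nonneg _)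
        rw [← Real.exp_add, Real.exp_le_exp, add_comm K]
        refine le_trans (le_of_eq ?_) hE
        refine sum_congr rfl fun p _ => ?_
        rw [hs, re_natpow p.2.pos]
        rfl

lemma Fs_eq_LSeries {f : ℕ → ℝ} {s : ℂ} (hs : 0 < s.re) :
    Fs f s = LSeries (fun n => (f n : ℂ)) (1 + s) := by
  rw [LSeries_eq_tsum hs]; rfl

lemma differentiableAt_Fs {f : ℕ → ℝ} (hf : ∀ n, f n ∈ Set.Icc (-1 : ℝ) 1) {s : ℂ}
    (hs : 0 < s.re) : DifferentiableAt ℂ (Fs f) s := by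
  have habs : LSeries.abscissaOfAbsConv (fun n => (f n : ℂ)) ≤ 1 :=
    LSeries.abscissaOfAbsConv_le_of_le_const ⟨1, fun n _ => by
      rw [Complex.norm_real]; exact abs_le.2 (hf n)⟩
  have hlt : LSeries.abscissaOfAbsConv (fun n => (f n : ℂ)) < ((1 + s).re : EReal) := by
    refine lt_of_le_of_lt habs ?_
    have : (1 : ℝ) < (1 + s).re := by simp [hs]
    exact_mod_cast this
  have hd : DifferentiableAt ℂ (fun s => LSeries (fun n => (f n : ℂ)) (1 + s)) s := by
    have h1 := (LSeries_hasDerivAt hlt).differentiableAt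
    exact h1.comp s (by fun_prop)
  refine hd.congr_of_eventuallyEq ?_
  filter_upwards [(isOpen_lt continuous_const Complex.continuous_re).mem_nhds hs] with z hz
  exact Fs_eq_LSeries hz

lemma norm_Fs_le {f : ℕ → ℝ} (hf : ∀ n, f n ∈ Set.Icc (-1 : ℝ) 1) {s : ℂ} {σ : ℝ}
    (hσ : 0 < σ) (hσ1 : σ ≤ 1) (hs : σ ≤ s.re) : ‖Fs f s‖ ≤ 17 + 1 / σ := by
  have hs0 : 0 < s.re := hσ.trans_le hs
  have hsum := (Real.summable_nat_rpow (p := -1 - σ)).2 (by linarith)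
  have h1 : ‖Fs f s‖ ≤ ∑' n : ℕ, (n : ℝ) ^ (-1 - σ) := by
    refine tsum_of_norm_bounded hsum.hasSum fun n => ?_
    rcases Nat.eq_zero_or_pos n with rfl | hn
    · rw [Nat.cast_zero, Complex.zero_cpow (neg_one_sub_ne hs0)]
      simp; positivity
    · rw [norm_mul, norm_natpow hn, Complex.norm_real]
      refine (mul_le_of_le_one_left (by positivity) (abs_le.2 (hf n))).trans ?_
      exact Real.rpow_le_rpow_of_exponent_le (by exact_mod_cast hn) (by linarith)
  have h2 : riemannZeta (1 + (σ : ℂ)) = ((∑' n : ℕ, (n : ℝ) ^ (-1 - σ) : ℝ) : ℂ) := by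
    rw [zeta_eq_tsum_one_div_nat_cpow (by simp [hσ]), Complex.ofReal_tsum]
    refine tsum_congr fun n => ?_
    rw [Complex.ofReal_cpow (by positivity), one_div, ← Complex.cpow_neg]
    push_cast; ring_nf
  have h3 := zeta_bound (s := (σ : ℂ)) (by simpa using hσ) (by simpa using hσ1)
  rw [h2, Complex.norm_real, Real.norm_of_nonneg (tsum_nonneg fun n => by positivity)] at h3
  simp only [Complex.ofReal_im, abs_zero, add_zero, Complex.norm_real, Real.norm_eq_abs,
    abs_of_pos hσ] at h3
  have h4 : Real.log 3 ≤ 17 / 15 := by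
    rw [Real.log_le_iff_le_exp (by norm_num)]
    have := Real.exp_one_gt_d9
    have h5 : Real.exp (17 / 15) = Real.exp 1 * Real.exp (2 / 15) := by
      rw [← Real.exp_add]; norm_num
    have := Real.add_one_le_exp (2 / 15 : ℝ)
    rw [h5]; nlinarith
  linarith

/-- The bound for `F` on the line `Re s = 1/log x` is carried into the half-plane to its right by
the maximum principle, applied to `F(s)·s/(1+s)` times a kernel that localises near `α + it₀`. -/
lemma F_bound : ∃ C : ℝ, 0 < C ∧ ∀ f : ℕ → ℝ, (∀ n, f n ∈ Set.Icc (-1 : ℝ) 1) → IsMult f →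
    ∀ x T t α : ℝ, 3 ≤ x → 1 ≤ T → |t| ≤ T / 2 → 1 / Real.log x ≤ α → α ≤ 1 →
    ‖Fs f (α + t * Complex.I)‖ * ‖((α : ℂ) + t * Complex.I) / (1 + (α + t * Complex.I))‖ ≤
      C * Real.log (3 + |t|) * (Real.exp (-MxT f x T) + α * Real.log x / T) := by
  obtain ⟨C, hC, hFz⟩ := F_le_zeta
  refine ⟨64 * C + 80, by positivity, ?_⟩
  intro f hf hm x T t α hx hT ht hα hα1
  have hlog : 1 ≤ Real.log x := by
    rw [Real.le_log_iff_exp_le (by linarith)]; linarith [Real.exp_one_lt_d9]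
  set σ : ℝ := 1 / Real.log x with hσ
  have hσ0 : 0 < σ := by positivity
  have hσ1 : σ ≤ 1 := hα.trans hα1
  have hα0 : 0 < α := hσ0.trans_le hα
  set E := Real.exp (-MxT f x T) with hE
  have hE0 : 0 < E := Real.exp_pos _
  have hL1 := one_le_log_three_add t
  have hsum1 : ∀ {s : ℂ}, 0 < s.re → ‖s / (1 + s)‖ ≤ 1 := by
    intro s hs
    rw [norm_div]
    refine div_le_one_of_le₀ ?_ (norm_nonneg _)
    rw [Complex.norm_def, Complex.norm_def]
    refine Real.sqrt_le_sqrt ?_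
    simp only [Complex.normSq_apply, Complex.add_re, Complex.one_re, Complex.add_im,
      Complex.one_im, zero_add]
    nlinarith
  -- the last factor has modulus `≥ 1/2` at `z + σ = α + it` and `≤ 2α/T` on the line `Re z = 0`, `|Im z| > T`
  set Ψ : ℂ → ℂ := fun z => Fs f (z + σ) * ((z + σ) / (1 + (z + σ))) *
    (α / (z - t * Complex.I + α)) with hΨ
  have hker : ∀ z : ℂ, 0 ≤ z.re → α ≤ (z - t * Complex.I + α).re := by
    intro z hz; simp; exact hz
  have hkne : ∀ z : ℂ, 0 ≤ z.re → z - t * Complex.I + α ≠ 0 := by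
    intro z hz h0
    have := hker z hz
    rw [h0] at this; simp at this; linarith
  have hknorm : ∀ z : ℂ, 0 ≤ z.re → ‖(α : ℂ) / (z - t * Complex.I + α)‖ ≤ 1 := by
    intro z hz
    rw [norm_div, Complex.norm_real, Real.norm_of_nonneg hα0.le]
    refine div_le_one_of_le₀ ?_ (norm_nonneg _)
    exact (hker z hz).trans ((le_abs_self _).trans (Complex.abs_re_le_norm _))
  have hF18 : ∀ z : ℂ, 0 ≤ z.re → ‖Fs f (z + σ)‖ ≤ 18 * Real.log x := by
    intro z hz
    refine (norm_Fs_le hf hσ0 hσ1 (s := z + σ) (by simpa using hz)).trans ?_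
    rw [hσ, one_div_one_div]; linarith
  have hbdd : ∀ z : ℂ, 0 ≤ z.re → ‖Ψ z‖ ≤ 18 * Real.log x := by
    intro z hz
    rw [hΨ]; simp only [norm_mul]
    calc _ ≤ 18 * Real.log x * 1 * 1 := by
          gcongr
          · exact hF18 z hz
          · exact hsum1 (by simp; linarith)
          · exact hknorm z hz
      _ = _ := by ring
  have hdiff : DiffContOnCl ℂ Ψ {z | 0 < z.re} := by
    refine DifferentiableOn.diffContOnCl ?_
    rw [Complex.closure_setOfPred_lt_re]
    intro z hz
    simp only [Set.mem_ofPred_eq] at hz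
    refine DifferentiableAt.differentiableWithinAt ?_
    have hz' : 0 < (z + σ).re := by simp; linarith
    have hd1 : DifferentiableAt ℂ (fun z : ℂ => Fs f (z + σ)) z :=
      DifferentiableAt.comp (f := fun z : ℂ => z + (σ : ℂ)) z (differentiableAt_Fs hf hz')
        (by fun_prop)
    have hne : 1 + (z + σ) ≠ 0 := by
      intro h0
      have := congrArg Complex.re h0
      simp at this; linarith
    have hne2 := hkne z hz
    exact (hd1.mul ((by fun_prop : DifferentiableAt ℂ (fun z : ℂ => z + (σ : ℂ)) z).div
      (by fun_prop) hne)).mul ((by fun_prop :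
        DifferentiableAt ℂ (fun _ : ℂ => (α : ℂ)) z).div (by fun_prop) hne2)
  set B : ℝ := 32 * C * E * Real.log (3 + |t|) + 36 * (α * Real.log x / T) with hB
  have hline : ∀ u : ℝ, ‖Ψ (u * Complex.I)‖ ≤ B := by
    intro u
    have hu0 : 0 ≤ ((u : ℂ) * Complex.I).re := by simp
    have hk1 : |u - t| ≤ ‖(u : ℂ) * Complex.I - t * Complex.I + α‖ := by
      have := Complex.abs_im_le_norm ((u : ℂ) * Complex.I - t * Complex.I + α)
      simpa using this
    have hk0 : 0 < ‖(u : ℂ) * Complex.I - t * Complex.I + α‖ := norm_pos_iff.2 (hkne _ hu0)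
    have hkn : ‖(α : ℂ) / (u * Complex.I - t * Complex.I + α)‖ =
        α / ‖(u : ℂ) * Complex.I - t * Complex.I + α‖ := by
      rw [norm_div, Complex.norm_real, Real.norm_of_nonneg hα0.le]
    rw [hΨ]; simp only [norm_mul]
    rcases le_or_gt |u| T with hu | hu
    · have h1 := hFz f hf hm x T u hx hu
      rw [← hσ, add_comm (σ : ℂ) (u * Complex.I), ← hE] at h1
      set s : ℂ := u * Complex.I + σ with hs
      have hsre : s.re = σ := by simp [hs]
      have hsim : s.im = u := by simp [hs]
      have hs0 : 0 < s.re := by rw [hsre]; exact hσ0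
      have hz := zeta_bound hs0 (by rw [hsre]; exact hσ1)
      rw [hsim] at hz
      have hsn : 0 < ‖s‖ := norm_pos_iff.2 fun h => by rw [h] at hs0; simp at hs0
      have h1s := one_le_norm_one_add hs0
      have hLu := one_le_log_three_add u
      have hz2 : ‖riemannZeta (1 + s)‖ * ‖s / (1 + s)‖ ≤ 16 * Real.log (3 + |u|) := by
        calc _ ≤ (15 * Real.log (3 + |u|) + 1 / ‖s‖) * ‖s / (1 + s)‖ := by gcongr
          _ = 15 * Real.log (3 + |u|) * ‖s / (1 + s)‖ + 1 / ‖1 + s‖ := by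
              rw [norm_div]; field_simp
          _ ≤ 15 * Real.log (3 + |u|) * 1 + 1 := by
              gcongr
              · exact hsum1 hs0
              · rw [div_le_one (by linarith)]; exact h1s
          _ ≤ _ := by linarith
      have hlogu : Real.log (3 + |u|) ≤ Real.log (3 + |t|) + |u - t| := by
        have ha : 3 + |u| ≤ (3 + |t|) * (1 + |u - t|) := by
          have : |u| ≤ |t| + |u - t| := by
            calc |u| = |t + (u - t)| := by ring_nf
              _ ≤ _ := abs_add_le _ _
          nlinarith [abs_nonneg t, abs_nonneg (u - t), mul_nonneg (abs_nonneg t) (abs_nonneg (u - t))]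
        calc _ ≤ Real.log ((3 + |t|) * (1 + |u - t|)) := Real.log_le_log (by positivity) ha
          _ = Real.log (3 + |t|) + Real.log (1 + |u - t|) :=
              Real.log_mul (by positivity) (by positivity)
          _ ≤ _ := by
              have := Real.log_le_sub_one_of_pos (show 0 < 1 + |u - t| by positivity)
              linarith
      have hmain : Real.log (3 + |u|) * ‖(α : ℂ) / (u * Complex.I - t * Complex.I + α)‖ ≤
          2 * Real.log (3 + |t|) := by
        calc _ ≤ (Real.log (3 + |t|) + |u - t|) *
              ‖(α : ℂ) / (u * Complex.I - t * Complex.I + α)‖ := by gcongr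
          _ = Real.log (3 + |t|) * ‖(α : ℂ) / (u * Complex.I - t * Complex.I + α)‖ +
              |u - t| * (α / ‖(u : ℂ) * Complex.I - t * Complex.I + α‖) := by rw [add_mul, hkn]
          _ ≤ Real.log (3 + |t|) * 1 + 1 := by
              gcongr
              · exact hknorm _ hu0
              · rw [← mul_div_assoc, div_le_one hk0]
                nlinarith [abs_nonneg (u - t)]
          _ ≤ _ := by linarith
      calc _ ≤ C * E * ‖riemannZeta (1 + s)‖ * ‖s / (1 + s)‖ *
            ‖(α : ℂ) / (u * Complex.I - t * Complex.I + α)‖ := by gcongr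
        _ = C * E * (‖riemannZeta (1 + s)‖ * ‖s / (1 + s)‖) *
            ‖(α : ℂ) / (u * Complex.I - t * Complex.I + α)‖ := by ring
        _ ≤ C * E * (16 * Real.log (3 + |u|)) *
            ‖(α : ℂ) / (u * Complex.I - t * Complex.I + α)‖ := by gcongr
        _ = 16 * C * E * (Real.log (3 + |u|) *
            ‖(α : ℂ) / (u * Complex.I - t * Complex.I + α)‖) := by ring
        _ ≤ 16 * C * E * (2 * Real.log (3 + |t|)) := by gcongr
        _ ≤ B := by
            have : 0 ≤ 36 * (α * Real.log x / T) := by positivity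
            rw [hB]; linarith
    · have hut : T / 2 ≤ |u - t| := by
        have : |u| ≤ |t| + |u - t| := by
          calc |u| = |t + (u - t)| := by ring_nf
            _ ≤ _ := abs_add_le _ _
        linarith
      calc _ ≤ 18 * Real.log x * 1 * (α / (T / 2)) := by
            rw [hkn]
            gcongr
            · exact hF18 _ hu0
            · exact hsum1 (by simp [hσ0])
            · exact hut.trans hk1
        _ = 36 * (α * Real.log x / T) := by field_simp; ring
        _ ≤ B := by
            have : 0 ≤ 32 * C * E * Real.log (3 + |t|) := by positivity
            rw [hB]; linarith
  have hPL := PhragmenLindelof.right_half_plane_of_bounded_on_real (f := Ψ) (C := B)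
    (z := ((α - σ : ℝ) : ℂ) + t * Complex.I) hdiff
    ⟨1, by norm_num, 0, by
      refine Asymptotics.IsBigO.of_bound (18 * Real.log x) ?_
      refine Filter.Eventually.filter_mono inf_le_right ?_
      rw [Filter.eventually_principal]
      intro z hz
      simpa using hbdd z (le_of_lt hz)⟩
    ⟨18 * Real.log x, by
      rw [Filter.eventually_map]
      filter_upwards [Filter.eventually_ge_atTop 0] with u hu
      exact hbdd u (by simpa using hu)⟩ hline (by simp; exact hα)
  have hz1 : ((α - σ : ℝ) : ℂ) + t * Complex.I + σ = α + t * Complex.I := by push_cast; ring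
  have hz2 : ((α - σ : ℝ) : ℂ) + t * Complex.I - t * Complex.I + α = ((2 * α - σ : ℝ) : ℂ) := by
    push_cast; ring
  rw [hΨ] at hPL
  simp only [hz1, hz2, norm_mul] at hPL
  have hhalf : 1 / 2 ≤ ‖(α : ℂ) / ((2 * α - σ : ℝ) : ℂ)‖ := by
    rw [← Complex.ofReal_div, Complex.norm_real, Real.norm_of_nonneg (by
      apply div_nonneg <;> linarith), div_le_div_iff₀ (by norm_num) (by linarith)]
    linarith
  have hfin : ‖Fs f (α + t * Complex.I)‖ *
      ‖((α : ℂ) + t * Complex.I) / (1 + (α + t * Complex.I))‖ ≤ 2 * B := by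
    have h0 : 0 ≤ ‖Fs f (α + t * Complex.I)‖ *
      ‖((α : ℂ) + t * Complex.I) / (1 + (α + t * Complex.I))‖ := by positivity
    nlinarith
  refine hfin.trans ?_
  have hq : 0 ≤ α * Real.log x / T := by positivity
  have : 2 * B = 64 * C * E * Real.log (3 + |t|) + 72 * (α * Real.log x / T) := by
    rw [hB]; ring
  rw [this]
  have e1 : 0 ≤ Real.log (3 + |t|) * (α * Real.log x / T) * C := by positivity
  have e2 : α * Real.log x / T ≤ Real.log (3 + |t|) * (α * Real.log x / T) :=
    le_mul_of_one_le_left hq hL1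
  have e3 : 0 ≤ Real.log (3 + |t|) * E := by positivity
  nlinarith

/-- `M(x;T)` is bounded above: a minimum is at most the average over `0 ≤ t ≤ 1`. -/
lemma MxT_upper : ∃ C : ℝ, 0 < C ∧ ∀ f : ℕ → ℝ, (∀ n, f n ∈ Set.Icc (-1 : ℝ) 1) →
    ∀ x T : ℝ, 3 ≤ x → 1 ≤ T → MxT f x T ≤ C := by
  obtain ⟨C, hC, h⟩ := sum_inv_mul_log_le
  refine ⟨2 * C, by positivity, ?_⟩
  intro f hf x T hx hT
  have h1 : ∫ _ in (0:ℝ)..1, MxT f x T ≤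
      ∫ t in (0:ℝ)..1, ∑ p ∈ primesUpTo x, (1 - f p) * Real.cos (t * Real.log p) / p := by
    refine intervalIntegral.integral_mono_on zero_le_one (by simp)
      (Continuous.intervalIntegrable (by fun_prop) _ _) fun t ht => ?_
    exact MxT_le f (by rw [abs_of_nonneg ht.1]; linarith [ht.2])
  rw [intervalIntegral.integral_finsetSum
    (fun p _ => Continuous.intervalIntegrable (by fun_prop) _ _)] at h1
  simp only [intervalIntegral.integral_const, sub_zero, one_smul] at h1
  have hpr : ∀ p ∈ primesUpTo x, p.Prime := fun p hp => (mem_filter.1 hp).2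
  refine h1.trans ?_
  calc _ ≤ ∑ p ∈ primesUpTo x, 2 * (1 / ((p : ℝ) * Real.log p)) := by
        refine sum_le_sum fun p hp => ?_
        have hpp := hpr p hp
        have hp0 : (0 : ℝ) < p := by exact_mod_cast hpp.pos
        have hl : 0 < Real.log p := Real.log_pos (by exact_mod_cast hpp.one_lt)
        have hi : ∫ t in (0:ℝ)..1, (1 - f p) * Real.cos (t * Real.log p) / p =
            (1 - f p) / p * (Real.sin (Real.log p) / Real.log p) := by
          have : ∀ t : ℝ, (1 - f p) * Real.cos (t * Real.log p) / p =
            (1 - f p) / p * Real.cos (t * Real.log p) := fun t => by ring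
          simp_rw [this]
          rw [intervalIntegral.integral_const_mul,
            intervalIntegral.integral_comp_mul_right (f := Real.cos) hl.ne']
          simp only [zero_mul, one_mul, integral_cos, Real.sin_zero, sub_zero, smul_eq_mul]
          ring
        rw [hi]
        have e1 : Real.sin (Real.log p) / Real.log p ≤ 1 / Real.log p := by
          gcongr; exact Real.sin_le_one _
        have e2 : 0 ≤ (1 - f p) / p := div_nonneg (by linarith [(hf p).2]) hp0.le
        calc _ ≤ (1 - f p) / p * (1 / Real.log p) := by gcongr
          _ ≤ 2 / p * (1 / Real.log p) := by
              gcongr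
              linarith [(hf p).1]
          _ = _ := by field_simp
    _ = 2 * ∑ p ∈ primesUpTo x, 1 / ((p : ℝ) * Real.log p) := by rw [mul_sum]
    _ ≤ 2 * C := by
        gcongr
        exact h _ hpr

/-- Hence bounded terms can be absorbed into multiples of `e^{-M(x;T)}`. -/
lemma exp_MxT_lower : ∃ c : ℝ, 0 < c ∧ ∀ f : ℕ → ℝ, (∀ n, f n ∈ Set.Icc (-1 : ℝ) 1) →
    ∀ x T : ℝ, 3 ≤ x → 1 ≤ T → c ≤ Real.exp (-MxT f x T) := by
  obtain ⟨C, -, h⟩ := MxT_upper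
  exact ⟨Real.exp (-C), Real.exp_pos _, fun f hf x T hx hT =>
    Real.exp_le_exp.2 (neg_le_neg (h f hf x T hx hT))⟩

/-! ### The smoothed sums `Φ_c` and multiplication by `log` -/

/-- `Φ_c(v) = ∑_n (c(n)/n) kk(v - log n)`; the terms with `n > w₀ e^v` vanish. -/
noncomputable def Phi (c : ℕ → ℝ) (v : ℝ) : ℝ :=
  ∑ n ∈ Icc 1 ⌊w0 * Real.exp v⌋₊, c n / n * kk (v - Real.log n)

lemma kk_log_eq_zero {v : ℝ} {n : ℕ} (hn : ⌊w0 * Real.exp v⌋₊ < n) : kk (v - Real.log n) = 0 := by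
  refine kk_eq_zero ?_
  have h1 : w0 * Real.exp v < n := (Nat.floor_lt (mul_pos w0_pos (Real.exp_pos v)).le).1 hn
  have h2 := Real.log_lt_log (mul_pos w0_pos (Real.exp_pos v)) h1
  rw [Real.log_mul w0_pos.ne' (Real.exp_pos v).ne', Real.log_exp] at h2
  linarith

lemma Phi_eq_sum (c : ℕ → ℝ) {v : ℝ} {N : ℕ} (hN : ⌊w0 * Real.exp v⌋₊ ≤ N) :
    Phi c v = ∑ n ∈ Icc 1 N, c n / n * kk (v - Real.log n) := by
  refine sum_subset (Icc_subset_Icc_right hN) fun n _ hn2 => ?_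
  rw [kk_log_eq_zero, mul_zero]
  simp only [mem_Icc, not_and, not_le] at *
  omega

lemma Phi_hasSum (c : ℕ → ℝ) (v : ℝ) :
    HasSum (fun n : ℕ => c n / n * kk (v - Real.log n)) (Phi c v) := by
  refine hasSum_sum_of_ne_finset_zero fun n hn => ?_
  rcases Nat.eq_zero_or_pos n with rfl | h0
  · simp
  · rw [kk_log_eq_zero, mul_zero]
    simp only [mem_Icc, not_and, not_le] at *
    omega

lemma Phi_sub (c d : ℕ → ℝ) (v : ℝ) : Phi (fun n => c n - d n) v = Phi c v - Phi d v := by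
  unfold Phi
  rw [← sum_sub_distrib]
  exact sum_congr rfl fun n _ => by ring

lemma abs_kk_log_le (v : ℝ) {n : ℕ} (hn : 1 ≤ n) : |kk (v - Real.log n)| ≤ n * Real.exp (-v) := by
  refine (abs_kk_le _).2.trans (le_of_eq ?_)
  have : (0 : ℝ) < n := by exact_mod_cast hn
  rw [neg_sub, sub_eq_add_neg, Real.exp_add, Real.exp_log this]

lemma abs_Phi_le (c : ℕ → ℝ) (v : ℝ) :
    |Phi c v| ≤ (∑ n ∈ Icc 1 ⌊w0 * Real.exp v⌋₊, |c n|) * Real.exp (-v) := by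
  unfold Phi
  rw [sum_mul]
  refine (abs_sum_le_sum_abs _ _).trans (sum_le_sum fun n hn => ?_)
  have hn1 := (mem_Icc.1 hn).1
  have : (0 : ℝ) < n := by exact_mod_cast hn1
  rw [abs_mul, abs_div, Nat.abs_cast]
  calc _ ≤ |c n| / n * (n * Real.exp (-v)) := by gcongr; exact abs_kk_log_le v hn1
    _ = _ := by field_simp

lemma floor_mul_exp_neg_le (v : ℝ) : (⌊w0 * Real.exp v⌋₊ : ℝ) * Real.exp (-v) ≤ 2 := by
  have h := Nat.floor_le (mul_pos w0_pos (Real.exp_pos v)).le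
  calc _ ≤ w0 * Real.exp v * Real.exp (-v) := by gcongr
    _ = w0 := by rw [mul_assoc, ← Real.exp_add]; simp
    _ ≤ 2 := w0_lt_two.le

/-- The quantity to be estimated is bounded by `2`. -/
lemma abs_Phi_f_le {f : ℕ → ℝ} (hf : ∀ n, f n ∈ Set.Icc (-1 : ℝ) 1) (v : ℝ) : |Phi f v| ≤ 2 := by
  refine (abs_Phi_le f v).trans (le_trans ?_ (floor_mul_exp_neg_le v))
  gcongr
  calc _ ≤ ∑ n ∈ Icc 1 ⌊w0 * Real.exp v⌋₊, (1 : ℝ) := sum_le_sum fun n _ => abs_le.2 (hf n)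
    _ = _ := by simp

lemma sum_antidiag (G : ℕ → ℕ → ℝ) (N : ℕ) :
    ∑ n ∈ Icc 1 N, ∑ x ∈ n.divisorsAntidiagonal, G x.1 x.2 =
      ∑ d ∈ Icc 1 N, ∑ m ∈ Icc 1 (N / d), G d m := by
  rw [sum_sigma', sum_sigma']
  refine sum_bij' (fun a _ => ⟨a.2.1, a.2.2⟩) (fun b _ => ⟨b.1 * b.2, (b.1, b.2)⟩) ?_ ?_ ?_ ?_ ?_
  · rintro ⟨n, d, m⟩ h
    simp only [mem_sigma, mem_Icc, Nat.mem_divisorsAntidiagonal] at h ⊢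
    obtain ⟨⟨h1, h2⟩, h3, h4⟩ := h
    have hd : 0 < d := Nat.pos_of_ne_zero fun h => by simp [h] at h3; omega
    have hm : 0 < m := Nat.pos_of_ne_zero fun h => by simp [h] at h3; omega
    refine ⟨⟨hd, ?_⟩, hm, ?_⟩
    · nlinarith
    · rw [Nat.le_div_iff_mul_le hd]; linarith
  · rintro ⟨d, m⟩ h
    simp only [mem_sigma, mem_Icc, Nat.mem_divisorsAntidiagonal] at h ⊢
    obtain ⟨⟨h1, h2⟩, h3, h4⟩ := h
    rw [Nat.le_div_iff_mul_le (by omega)] at h4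
    have : 0 < d * m := Nat.mul_pos (by omega) (by omega)
    refine ⟨⟨this, by linarith⟩, trivial, by omega⟩
  · rintro ⟨n, d, m⟩ h
    simp only [mem_sigma, mem_Icc, Nat.mem_divisorsAntidiagonal] at h
    simp only [h.2.1]
  · rintro ⟨d, m⟩ h; rfl
  · rintro ⟨n, d, m⟩ h; rfl

lemma sum_divisors_Icc (F : ℕ → ℝ) (N : ℕ) :
    ∑ n ∈ Icc 1 N, ∑ d ∈ n.divisors, F d = ∑ d ∈ Icc 1 N, F d * (N / d : ℕ) := by
  have h := sum_antidiag (fun d _ => F d) N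
  simp only [sum_const, Nat.card_Icc, Nat.add_sub_cancel, nsmul_eq_mul] at h
  rw [sum_congr rfl fun d _ => mul_comm _ _] at h
  rw [← h]
  exact sum_congr rfl fun n _ => (Nat.sum_divisorsAntidiagonal (fun d _ => F d)).symm

/-- The difference of the two sums in the theorem is `Φ_f(log x)`. -/
lemma Phi_eq_diff (f : ℕ → ℝ) {x : ℝ} (hx : 0 < x) :
    Phi f (Real.log x) = Lsum f x - Mt (dconv f) (w0 * x) := by
  have hwx : 0 < w0 * x := mul_pos w0_pos hx
  have hN : ⌊x⌋₊ ≤ ⌊w0 * x⌋₊ := Nat.floor_mono (by nlinarith [one_le_w0])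
  unfold Phi Lsum Mt dconv
  rw [Real.exp_log hx, sum_divisors_Icc, sum_div]
  rw [sum_subset (Icc_subset_Icc_right hN) (f := fun n : ℕ => if (n : ℝ) ≤ x then f n / n else 0)
    (s₁ := Icc 1 ⌊x⌋₊) |> fun h => (sum_congr rfl fun n hn => by
      rw [if_pos ((Nat.le_floor_iff hx.le).1 (mem_Icc.1 hn).2)] :
        ∑ n ∈ Icc 1 ⌊x⌋₊, f n / n = ∑ n ∈ Icc 1 ⌊x⌋₊, if (n : ℝ) ≤ x then f n / n else 0).trans
          (h fun n h1 h2 => by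
      rw [if_neg]
      intro hle
      exact h2 (mem_Icc.2 ⟨(mem_Icc.1 h1).1, Nat.le_floor hle⟩)), ← sum_sub_distrib]
  refine sum_congr rfl fun n hn => ?_
  have hn0 : (0 : ℝ) < n := by exact_mod_cast (mem_Icc.1 hn).1
  have hexp : Real.exp (Real.log x - Real.log n) = x / n := by
    rw [Real.exp_sub, Real.exp_log hx, Real.exp_log hn0]
  have hfl : ⌊w0 * (x / n)⌋₊ = ⌊w0 * x⌋₊ / n := by
    rw [← mul_div_assoc, Nat.floor_div_natCast]
  unfold kk
  rw [hexp, hfl]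
  have hiff : 0 ≤ Real.log x - Real.log n ↔ (n : ℝ) ≤ x := by
    rw [sub_nonneg, Real.log_le_log_iff hn0 hx]
  simp only [hiff]
  split_ifs
  · field_simp
  · field_simp; ring

/-- Coefficients of `P(s) = ∑_p f(p) log p · p^{-1-s}`. -/
noncomputable def pl (f : ℕ → ℝ) (d : ℕ) : ℝ := if d.Prime then f d * Real.log d else 0

/-- The convolution of `pl f` and `f`; it approximates `f(n) log n`. -/
noncomputable def acoef (f : ℕ → ℝ) (n : ℕ) : ℝ := ∑ x ∈ n.divisorsAntidiagonal, pl f x.1 * f x.2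

/-- `Λ` restricted to numbers that are not prime. -/
noncomputable def Lamnp (d : ℕ) : ℝ := if d.Prime then 0 else ArithmeticFunction.vonMangoldt d

lemma primeFactors_eq_filter (n : ℕ) : n.primeFactors = n.divisors.filter Nat.Prime := by
  ext p
  simp only [Nat.mem_primeFactors, mem_filter, Nat.mem_divisors]
  tauto

lemma acoef_eq (f : ℕ → ℝ) (n : ℕ) :
    acoef f n = ∑ p ∈ n.primeFactors, f p * Real.log p * f (n / p) := by
  unfold acoef pl
  rw [Nat.sum_divisorsAntidiagonal (fun d m => (if d.Prime then f d * Real.log d else 0) * f m)]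
  rw [primeFactors_eq_filter, sum_filter]
  exact sum_congr rfl fun d _ => by split_ifs <;> simp

lemma sum_Lamnp (n : ℕ) :
    ∑ d ∈ n.divisors, Lamnp d = Real.log n - ∑ p ∈ n.primeFactors, Real.log p := by
  rw [← ArithmeticFunction.vonMangoldt_sum, primeFactors_eq_filter, sum_filter,
    ← sum_sub_distrib]
  refine sum_congr rfl fun d _ => ?_
  unfold Lamnp
  split_ifs with h
  · rw [ArithmeticFunction.vonMangoldt_apply_prime h]; ring
  · ring

/-- `f(n) log n` and `acoef f n` differ only through prime powers `p^k ∣ n` with `k ≥ 2`. -/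
lemma acoef_approx {f : ℕ → ℝ} (hf : ∀ n, f n ∈ Set.Icc (-1 : ℝ) 1) (hm : IsMult f) {n : ℕ}
    (hn : 1 ≤ n) : |f n * Real.log n - acoef f n| ≤ 3 * ∑ d ∈ n.divisors, Lamnp d := by
  rw [sum_Lamnp, acoef_eq, Real.log_nat_eq_sum_factorization, Finsupp.sum,
    Nat.support_factorization, ← sum_sub_distrib, mul_sum, mul_sum, ← sum_sub_distrib]
  refine (abs_sum_le_sum_abs _ _).trans (sum_le_sum fun p hp => ?_)
  have hpp := Nat.prime_of_mem_primeFactors hp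
  have hpd := Nat.dvd_of_mem_primeFactors hp
  have hlog : 0 ≤ Real.log p := Real.log_natCast_nonneg p
  have hk : 1 ≤ n.factorization p :=
    (hpp.dvd_iff_one_le_factorization (by omega)).1 hpd
  have h1 : |f n * ((n.factorization p : ℝ) * Real.log p) - f p * Real.log p * f (n / p)| =
      |(n.factorization p : ℝ) * f n - f p * f (n / p)| * Real.log p := by
    rw [← abs_of_nonneg hlog, ← abs_mul, abs_of_nonneg hlog]; ring_nf
  rw [h1]
  have h2 : 3 * ((n.factorization p : ℝ) * Real.log p - Real.log p) =
    (3 * (n.factorization p : ℝ) - 3) * Real.log p := by ring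
  rw [h2]
  refine mul_le_mul_of_nonneg_right ?_ hlog
  rcases hk.eq_or_lt with hk1 | hk2
  · have hcop : Nat.Coprime p (n / p) := by
      have := Nat.coprime_ordCompl hpp (show n ≠ 0 by omega)
      rwa [← hk1, pow_one] at this
    have := hm.2 _ _ hcop
    rw [Nat.mul_div_cancel' hpd] at this
    rw [← hk1, this]; simp
  · have hk3 : (2 : ℝ) ≤ n.factorization p := by exact_mod_cast hk2
    have e1 : |(n.factorization p : ℝ) * f n| ≤ n.factorization p := by
      rw [abs_mul, Nat.abs_cast]
      exact mul_le_of_le_one_right (by positivity) (abs_le.2 (hf n))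
    have e2 : |f p * f (n / p)| ≤ 1 := by
      rw [abs_mul]
      exact mul_le_one₀ (abs_le.2 (hf p)) (abs_nonneg _) (abs_le.2 (hf _))
    have e3 := abs_sub ((n.factorization p : ℝ) * f n) (f p * f (n / p))
    linarith

lemma Lamnp_nonneg (d : ℕ) : 0 ≤ Lamnp d := by
  unfold Lamnp; split_ifs
  · exact le_rfl
  · exact ArithmeticFunction.vonMangoldt_nonneg

lemma summable_Lamnp : Summable fun d : ℕ => Lamnp d / d := by
  have h := ArithmeticFunction.vonMangoldt.summable_residueClass_non_primes_div (q := 1) (a := 0)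
  convert h using 2 with d
  unfold Lamnp ArithmeticFunction.vonMangoldt.residueClass
  simp only [Set.indicator_apply]
  have : (d : ZMod 1) = 0 := Subsingleton.elim _ _
  split_ifs <;> simp_all

lemma sum_inv_sqrt_le (N : ℕ) : ∑ n ∈ Icc 1 N, 1 / √(n : ℝ) ≤ 2 * √(N : ℝ) := by
  induction N with
  | zero => simp
  | succ k ih =>
    rw [sum_Icc_succ_top (by omega)]
    have h1 : 0 < √((k + 1 : ℕ) : ℝ) := Real.sqrt_pos.2 (by positivity)
    have h2 := Real.sq_sqrt (show (0 : ℝ) ≤ ((k + 1 : ℕ) : ℝ) by positivity)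
    have h3 := Real.sq_sqrt (show (0 : ℝ) ≤ (k : ℝ) by positivity)
    have h4 := Real.sqrt_nonneg (k : ℝ)
    have h5 : 1 / √((k + 1 : ℕ) : ℝ) ≤ 2 * √((k + 1 : ℕ) : ℝ) - 2 * √(k : ℝ) := by
      rw [div_le_iff₀ h1]
      push_cast at *
      nlinarith [sq_nonneg (√((k : ℝ) + 1) - √(k : ℝ))]
    linarith

lemma abs_mul_kk_le (w : ℝ) : |w * kk w| ≤ 2 * Real.exp (-(w / 2)) := by
  rcases lt_or_ge w (-Real.log w0) with h | h
  · rw [kk_eq_zero h]; simp; positivity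
  · have h1 : |w| ≤ 2 * Real.exp (w / 2) := by
      have := Real.add_one_le_exp (w / 2)
      rw [abs_le]
      constructor <;> linarith [log_w0_lt]
    have h2 := (abs_kk_le w).2
    rw [abs_mul]
    calc _ ≤ 2 * Real.exp (w / 2) * Real.exp (-w) := by gcongr
      _ = _ := by rw [mul_assoc, ← Real.exp_add]; ring_nf

/-- Up to a bounded error, multiplying `Φ_f` by `v` replaces `f` by `acoef f`. -/
lemma Phi_log_approx : ∃ C : ℝ, 0 < C ∧ ∀ f : ℕ → ℝ, (∀ n, f n ∈ Set.Icc (-1 : ℝ) 1) → IsMult f →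
    ∀ v : ℝ, |v * Phi f v - Phi (acoef f) v| ≤ C := by
  set K := ∑' d : ℕ, Lamnp d / d with hK
  have hK0 : 0 ≤ K := tsum_nonneg fun d => div_nonneg (Lamnp_nonneg d) (by positivity)
  refine ⟨8 + 6 * K, by positivity, ?_⟩
  intro f hf hm v
  set N := ⌊w0 * Real.exp v⌋₊ with hN
  have hNv := floor_mul_exp_neg_le v
  rw [← hN] at hNv
  have hsplit : v * Phi f v - Phi (acoef f) v =
      ∑ n ∈ Icc 1 N, f n / n * ((v - Real.log n) * kk (v - Real.log n)) +
        Phi (fun n => f n * Real.log n - acoef f n) v := by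
    rw [Phi_sub]
    unfold Phi
    rw [mul_sum, ← add_sub_assoc, ← sum_add_distrib]
    congr 1
    exact sum_congr rfl fun n _ => by ring
  have h1 : |∑ n ∈ Icc 1 N, f n / n * ((v - Real.log n) * kk (v - Real.log n))| ≤ 8 := by
    calc _ ≤ ∑ n ∈ Icc 1 N, 2 * Real.exp (-(v / 2)) * (1 / √(n : ℝ)) := by
          refine (abs_sum_le_sum_abs _ _).trans (sum_le_sum fun n hn => ?_)
          have hn0 : (0 : ℝ) < n := by exact_mod_cast (mem_Icc.1 hn).1
          rw [abs_mul, abs_div, Nat.abs_cast]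
          have e1 := abs_mul_kk_le (v - Real.log n)
          have e2 : Real.exp (-((v - Real.log n) / 2)) = Real.exp (-(v / 2)) * √(n : ℝ) := by
            rw [Real.sqrt_eq_rpow, Real.rpow_def_of_pos hn0, ← Real.exp_add]; ring_nf
          have hs : √(n : ℝ) * √(n : ℝ) = n := Real.mul_self_sqrt hn0.le
          have hs0 : 0 < √(n : ℝ) := Real.sqrt_pos.2 hn0
          calc _ ≤ 1 / (n : ℝ) * (2 * Real.exp (-((v - Real.log n) / 2))) := by
                gcongr; exact abs_le.2 (hf n)
            _ = _ := by
                rw [e2]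
                nth_rewrite 1 [← hs]
                field_simp
      _ = 2 * Real.exp (-(v / 2)) * ∑ n ∈ Icc 1 N, 1 / √(n : ℝ) := by rw [mul_sum]
      _ ≤ 2 * Real.exp (-(v / 2)) * (2 * √(N : ℝ)) := by gcongr; exact sum_inv_sqrt_le N
      _ = 4 * √(N * Real.exp (-v)) := by
          rw [Real.sqrt_mul (by positivity), show Real.exp (-v) = Real.exp (-(v / 2)) ^ 2 by
            rw [← Real.exp_nat_mul]; push_cast; ring_nf, Real.sqrt_sq (Real.exp_pos _).le]
          ring
      _ ≤ 4 * 2 := by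
          gcongr
          rw [Real.sqrt_le_left (by norm_num)]
          linarith
      _ = 8 := by norm_num
  have h2 : |Phi (fun n => f n * Real.log n - acoef f n) v| ≤ 6 * K := by
    refine (abs_Phi_le _ v).trans ?_
    rw [← hN]
    have e1 : ∑ n ∈ Icc 1 N, |f n * Real.log n - acoef f n| ≤ 3 * (N * K) := by
      calc _ ≤ ∑ n ∈ Icc 1 N, 3 * ∑ d ∈ n.divisors, Lamnp d :=
            sum_le_sum fun n hn => acoef_approx hf hm (mem_Icc.1 hn).1
        _ = 3 * ∑ d ∈ Icc 1 N, Lamnp d * (N / d : ℕ) := by rw [← mul_sum, sum_divisors_Icc]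
        _ ≤ 3 * ∑ d ∈ Icc 1 N, N * (Lamnp d / d) := by
            refine mul_le_mul_of_nonneg_left (sum_le_sum fun d hd => ?_) (by norm_num)
            have : ((N / d : ℕ) : ℝ) ≤ N / d := Nat.cast_div_le
            calc _ ≤ Lamnp d * (N / d) := mul_le_mul_of_nonneg_left this (Lamnp_nonneg d)
              _ = _ := by ring
        _ ≤ _ := by
            rw [← mul_sum]
            gcongr
            exact summable_Lamnp.sum_le_tsum _
              fun d _ => div_nonneg (Lamnp_nonneg d) (by positivity)
    calc _ ≤ 3 * (N * K) * Real.exp (-v) := by gcongr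
      _ = 3 * K * (N * Real.exp (-v)) := by ring
      _ ≤ 3 * K * 2 := by gcongr
      _ = _ := by ring
  rw [hsplit]
  exact (abs_add_le _ _).trans (add_le_add h1 h2)

/-- `Φ` turns the Dirichlet convolution defining `acoef` into an additive convolution in `v`. -/
lemma Phi_acoef_eq (f : ℕ → ℝ) (v : ℝ) :
    Phi (acoef f) v = ∑ d ∈ Icc 1 ⌊w0 * Real.exp v⌋₊, pl f d / d * Phi f (v - Real.log d) := by
  set N := ⌊w0 * Real.exp v⌋₊ with hN
  have h := sum_antidiag (fun d m => pl f d * f m / (d * m : ℕ) *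
    kk (v - Real.log (d * m : ℕ))) N
  have h1 : Phi (acoef f) v = ∑ n ∈ Icc 1 N, ∑ x ∈ n.divisorsAntidiagonal,
      pl f x.1 * f x.2 / (x.1 * x.2 : ℕ) * kk (v - Real.log (x.1 * x.2 : ℕ)) := by
    unfold Phi acoef
    refine sum_congr rfl fun n _ => ?_
    rw [sum_div, sum_mul]
    refine sum_congr rfl fun x hx => ?_
    rw [(Nat.mem_divisorsAntidiagonal.1 hx).1]
  rw [h1, h]
  refine sum_congr rfl fun d hd => ?_
  have hd1 := (mem_Icc.1 hd).1
  have hd0 : (0 : ℝ) < d := by exact_mod_cast hd1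
  have hfl : ⌊w0 * Real.exp (v - Real.log d)⌋₊ = N / d := by
    rw [Real.exp_sub, Real.exp_log hd0, ← mul_div_assoc, Nat.floor_div_natCast]
  unfold Phi
  rw [hfl, mul_sum]
  refine sum_congr rfl fun m hm => ?_
  have hm0 : (0 : ℝ) < m := by exact_mod_cast (mem_Icc.1 hm).1
  rw [Nat.cast_mul, Real.log_mul hd0.ne' hm0.ne', sub_add_eq_sub_sub]
  field_simp

lemma abs_Phi_acoef_le {f : ℕ → ℝ} (hf : ∀ n, f n ∈ Set.Icc (-1 : ℝ) 1) (v : ℝ) :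
    |Phi (acoef f) v| ≤ ∑ p ∈ (Icc 1 ⌊w0 * Real.exp v⌋₊).filter Nat.Prime,
      Real.log p / p * |Phi f (v - Real.log p)| := by
  rw [Phi_acoef_eq, sum_filter]
  refine (abs_sum_le_sum_abs _ _).trans (sum_le_sum fun p _ => ?_)
  unfold pl
  split_ifs
  · rw [abs_mul, abs_div, abs_mul, Nat.abs_cast, abs_of_nonneg (Real.log_natCast_nonneg p)]
    gcongr
    exact mul_le_of_le_one_left (Real.log_natCast_nonneg p) (abs_le.2 (hf p))
  · simp

/-! ### Variation of `Φ_f` on short intervals -/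

lemma card_divisors_le_two_mul {n B : ℕ} (hn : n ≤ B) :
    #n.divisors ≤ 2 * #(n.divisors.filter (· ≤ Nat.sqrt B)) := by
  have h := card_filter_add_card_filter_not (s := n.divisors) (fun d => d ≤ Nat.sqrt B)
  have h2 : #(n.divisors.filter fun d => ¬ d ≤ Nat.sqrt B) ≤
      #(n.divisors.filter (· ≤ Nat.sqrt B)) := by
    refine card_le_card_of_injOn (fun d => n / d) ?_ ?_
    · intro d hd
      simp only [coe_filter, Nat.mem_divisors, not_le, Set.mem_ofPred_eq] at hd ⊢
      obtain ⟨⟨hdn, hn0⟩, hlt⟩ := hd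
      refine ⟨⟨Nat.div_dvd_of_dvd hdn, hn0⟩, ?_⟩
      by_contra hcon
      rw [not_le] at hcon
      have h3 := Nat.mul_div_cancel' hdn
      have h4 := Nat.lt_succ_sqrt B
      have h5 : (Nat.sqrt B + 1) * (Nat.sqrt B + 1) ≤ d * (n / d) := Nat.mul_le_mul hlt hcon
      simp only [Nat.succ_eq_add_one] at h4
      omega
    · intro a ha b hb hab
      simp only [coe_filter, Nat.mem_divisors, Set.mem_ofPred_eq] at ha hb hab
      have h3 := Nat.mul_div_cancel' ha.1.1
      have h4 := Nat.mul_div_cancel' hb.1.1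
      rw [hab] at h3
      have : 0 < n / b := Nat.div_pos (Nat.le_of_dvd (by omega) hb.1.1)
        (Nat.pos_of_dvd_of_pos hb.1.1 (by omega))
      exact Nat.eq_of_mul_eq_mul_right this (h3.trans h4.symm)
  omega

lemma sum_Icc_inv_le (N : ℕ) : ∑ n ∈ Icc 1 N, (1 : ℝ) / n ≤ 1 + Real.log N := by
  refine le_trans ?_ (sum_range_inv_le N)
  refine sum_le_sum_of_subset_of_nonneg (fun n hn => ?_) fun _ _ _ => by positivity
  rw [mem_range]; have := (mem_Icc.1 hn).2; omega

/-- The divisor function in a short interval, by Dirichlet's hyperbola trick. -/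
lemma sum_card_divisors_short {u' u : ℝ} (hu' : 0 ≤ u') (hu : u' ≤ u) :
    ∑ n ∈ Ioc ⌊u'⌋₊ ⌊u⌋₊, (#n.divisors : ℝ) ≤
      2 * ((u - u') * (1 + Real.log (Nat.sqrt ⌊u⌋₊)) + √u) := by
  set A := ⌊u'⌋₊ with hA
  set B := ⌊u⌋₊ with hB
  set s := Nat.sqrt B with hs
  have hAB : A ≤ B := Nat.floor_mono hu
  set F : ℕ → ℝ := fun d => if d ≤ s then 1 else 0 with hF
  have hsplit : ∑ n ∈ Ioc A B, ∑ d ∈ n.divisors, F d =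
      ∑ d ∈ Icc 1 B, F d * ((B / d : ℕ) - (A / d : ℕ) : ℝ) := by
    have e1 := sum_divisors_Icc F B
    have e2 := sum_divisors_Icc F A
    have e3 : ∑ d ∈ Icc 1 A, F d * (A / d : ℕ) = ∑ d ∈ Icc 1 B, F d * (A / d : ℕ) := by
      refine sum_subset (Icc_subset_Icc_right hAB) fun d h1 h2 => ?_
      have : A < d := by
        simp only [mem_Icc, not_and, not_le] at h1 h2; omega
      rw [Nat.div_eq_of_lt this]; simp
    have e4 : ∑ n ∈ Icc 1 A, ∑ d ∈ n.divisors, F d + ∑ n ∈ Ioc A B, ∑ d ∈ n.divisors, F d =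
        ∑ n ∈ Icc 1 B, ∑ d ∈ n.divisors, F d := by
      rw [← sum_union]
      · refine sum_congr ?_ fun _ _ => rfl
        ext n; simp only [mem_union, mem_Icc, mem_Ioc]; omega
      · rw [disjoint_left]; intro n; simp only [mem_Icc, mem_Ioc]; omega
    have e5 : ∑ d ∈ Icc 1 B, F d * ((B / d : ℕ) - (A / d : ℕ) : ℝ) =
        ∑ d ∈ Icc 1 B, F d * (B / d : ℕ) - ∑ d ∈ Icc 1 B, F d * (A / d : ℕ) := by
      rw [← sum_sub_distrib]; exact sum_congr rfl fun d _ => by ring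
    rw [e5, ← e3, ← e1, ← e2]; linarith
  have hsB : s ≤ B := Nat.sqrt_le_self B
  have hsu : (s : ℝ) ≤ √u := by
    refine Real.le_sqrt_of_sq_le ?_
    have h1 : s * s ≤ B := Nat.sqrt_le B
    have h2 : (B : ℝ) ≤ u := Nat.floor_le (hu'.trans hu)
    have h3 : (s : ℝ) * s ≤ B := by exact_mod_cast h1
    nlinarith
  calc _ ≤ ∑ n ∈ Ioc A B, 2 * ∑ d ∈ n.divisors, F d := by
        refine sum_le_sum fun n hn => ?_
        have := card_divisors_le_two_mul (mem_Ioc.1 hn).2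
        have h2 : ∑ d ∈ n.divisors, F d = #(n.divisors.filter (· ≤ s)) := by
          rw [hF, sum_boole]
        rw [h2]; exact_mod_cast this
    _ = 2 * ∑ d ∈ Icc 1 B, F d * ((B / d : ℕ) - (A / d : ℕ) : ℝ) := by rw [← mul_sum, hsplit]
    _ = 2 * ∑ d ∈ Icc 1 s, ((B / d : ℕ) - (A / d : ℕ) : ℝ) := by
        congr 1
        symm
        calc _ = ∑ d ∈ Icc 1 s, F d * ((B / d : ℕ) - (A / d : ℕ) : ℝ) :=
              sum_congr rfl fun d hd => by rw [hF]; simp [(mem_Icc.1 hd).2]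
          _ = _ := sum_subset (Icc_subset_Icc_right hsB) fun d h1 h2 => by
              have : ¬ d ≤ s := by simp only [mem_Icc, not_and, not_le] at h1 h2; omega
              rw [hF]; simp [this]
    _ ≤ 2 * ∑ d ∈ Icc 1 s, ((u - u') * (1 / d) + 1) := by
        refine mul_le_mul_of_nonneg_left (sum_le_sum fun d hd => ?_) (by norm_num)
        have hd0 : (0 : ℝ) < d := by exact_mod_cast (mem_Icc.1 hd).1
        have h1 : ((B / d : ℕ) : ℝ) ≤ u / d := by
          rw [hB, ← Nat.floor_div_natCast]
          exact Nat.floor_le (by have := hu'.trans hu; positivity)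
        have h2 : u' / d < ((A / d : ℕ) : ℝ) + 1 := by
          rw [hA, ← Nat.floor_div_natCast]
          exact Nat.lt_floor_add_one _
        have h3 : (u - u') * (1 / d) = u / d - u' / d := by ring
        rw [h3]; linarith
    _ = 2 * ((u - u') * ∑ d ∈ Icc 1 s, (1 : ℝ) / d + s) := by
        rw [sum_add_distrib, mul_sum]; simp
    _ ≤ _ := by
        gcongr
        exact sum_Icc_inv_le s

lemma abs_dconv_le {f : ℕ → ℝ} (hf : ∀ n, f n ∈ Set.Icc (-1 : ℝ) 1) (n : ℕ) :
    |dconv f n| ≤ #n.divisors := by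
  unfold dconv
  refine (abs_sum_le_sum_abs _ _).trans ?_
  calc _ ≤ ∑ _d ∈ n.divisors, (1 : ℝ) := sum_le_sum fun d _ => abs_le.2 (hf d)
    _ = _ := by simp

lemma sum_Icc_diff (h : ℕ → ℝ) {A B : ℕ} (hAB : A ≤ B) :
    ∑ n ∈ Icc 1 B, h n - ∑ n ∈ Icc 1 A, h n = ∑ n ∈ Ioc A B, h n := by
  rw [sub_eq_iff_eq_add', ← sum_union]
  · refine sum_congr ?_ fun _ _ => rfl
    ext n; simp only [mem_union, mem_Icc, mem_Ioc]; omega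
  · rw [disjoint_left]; intro n; simp only [mem_Icc, mem_Ioc]; omega

/-- `Φ_f(log ·)` varies little on multiplicatively short intervals. -/
lemma Phi_variation {f : ℕ → ℝ} (hf : ∀ n, f n ∈ Set.Icc (-1 : ℝ) 1) {X x' x δ : ℝ} (hX : 3 ≤ X)
    (hx' : 0 < x') (hxx : x' ≤ x) (hδ : x ≤ (1 + δ) * x') (hxX : x ≤ X) :
    |Phi f (Real.log x) - Phi f (Real.log x')| ≤ 12 * (δ * Real.log X + 1 / √x') := by
  have hlogX : 1 ≤ Real.log X := by
    rw [Real.le_log_iff_exp_le (by linarith)]; linarith [Real.exp_one_lt_d9]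
  have hδ0 : 0 ≤ δ := by nlinarith
  rcases lt_or_ge x' 1 with h1 | h1
  · have e1 := abs_Phi_f_le hf (Real.log x)
    have e2 := abs_Phi_f_le hf (Real.log x')
    have e3 := abs_sub (Phi f (Real.log x)) (Phi f (Real.log x'))
    have hs : √x' ≤ 1 := Real.sqrt_le_one.2 h1.le
    have e4 : 1 ≤ 1 / √x' := by rw [le_div_iff₀ (Real.sqrt_pos.2 hx')]; linarith
    have : 0 ≤ δ * Real.log X := by positivity
    linarith
  have hx0 : 0 < x := hx'.trans_le hxx
  rw [Phi_eq_diff f hx0, Phi_eq_diff f hx']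
  set u := w0 * x with hu
  set u' := w0 * x' with hu'
  have hw := one_le_w0
  have hw2 := w0_lt_two
  have hu'1 : 1 ≤ u' := by nlinarith
  have huu : u' ≤ u := by rw [hu, hu']; gcongr
  have hxu : x ≤ u := by nlinarith
  have hdu : u - u' ≤ δ * u' := by rw [hu, hu']; nlinarith
  have hlogu : Real.log u ≤ 2 * Real.log X := by
    calc Real.log u ≤ Real.log (X * X) := Real.log_le_log (by linarith) (by nlinarith)
      _ = 2 * Real.log X := by rw [Real.log_mul (by linarith) (by linarith)]; ring
  have hL : |Lsum f x - Lsum f x'| ≤ δ + 1 / x' := by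
    unfold Lsum
    rw [sum_Icc_diff (fun n => f n / n) (Nat.floor_mono hxx)]
    calc _ ≤ ∑ n ∈ Ioc ⌊x'⌋₊ ⌊x⌋₊, 1 / x' := by
          refine (abs_sum_le_sum_abs _ _).trans (sum_le_sum fun n hn => ?_)
          have hn1 : x' < n := (Nat.floor_lt hx'.le).1 (mem_Ioc.1 hn).1
          rw [abs_div, Nat.abs_cast]
          gcongr
          exact abs_le.2 (hf n)
      _ = ((⌊x⌋₊ : ℝ) - ⌊x'⌋₊) * (1 / x') := by
          rw [sum_const, Nat.card_Ioc, nsmul_eq_mul, Nat.cast_sub (Nat.floor_mono hxx)]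
      _ ≤ (δ * x' + 1) * (1 / x') := by
          gcongr
          have := Nat.floor_le hx0.le
          have := Nat.lt_floor_add_one x'
          linarith
      _ = _ := by field_simp
  set S := ∑ n ∈ Icc 1 ⌊u⌋₊, dconv f n with hS
  set S' := ∑ n ∈ Icc 1 ⌊u'⌋₊, dconv f n with hS'
  have hlogu0 : 0 ≤ Real.log u := Real.log_nonneg (by linarith)
  have hSS : |S - S'| ≤ 2 * (δ * u' * (1 + Real.log u) + √u) := by
    rw [hS, hS', sum_Icc_diff _ (Nat.floor_mono huu)]
    calc _ ≤ ∑ n ∈ Ioc ⌊u'⌋₊ ⌊u⌋₊, (#n.divisors : ℝ) :=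
          (abs_sum_le_sum_abs _ _).trans (sum_le_sum fun n _ => abs_dconv_le hf n)
      _ ≤ 2 * ((u - u') * (1 + Real.log (Nat.sqrt ⌊u⌋₊)) + √u) :=
          sum_card_divisors_short (by linarith) huu
      _ ≤ _ := by
          have hsq : Real.log (Nat.sqrt ⌊u⌋₊) ≤ Real.log u := by
            have h1 : 0 < Nat.sqrt ⌊u⌋₊ := Nat.sqrt_pos.2 (Nat.floor_pos.2 (by linarith))
            refine Real.log_le_log (by exact_mod_cast h1) ?_
            calc ((Nat.sqrt ⌊u⌋₊ : ℕ) : ℝ) ≤ ⌊u⌋₊ := by exact_mod_cast Nat.sqrt_le_self _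
              _ ≤ u := Nat.floor_le (by linarith)
          have h0 : 0 ≤ Real.log (Nat.sqrt ⌊u⌋₊) := Real.log_natCast_nonneg _
          have h00 : 0 ≤ u - u' := by linarith
          gcongr
  have hSb : |S'| ≤ u' * (1 + Real.log u) := by
    have e0 : |S'| ≤ ∑ n ∈ Icc 1 ⌊u'⌋₊, ∑ _d ∈ n.divisors, (1 : ℝ) :=
      (abs_sum_le_sum_abs _ _).trans (sum_le_sum fun n _ => by simpa using abs_dconv_le hf n)
    rw [sum_divisors_Icc] at e0
    have hfl : (⌊u'⌋₊ : ℝ) ≤ u' := Nat.floor_le (by linarith)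
    have hfp : 0 < ⌊u'⌋₊ := Nat.floor_pos.2 hu'1
    calc _ ≤ _ := e0
      _ ≤ ∑ d ∈ Icc 1 ⌊u'⌋₊, u' * (1 / d) := by
          refine sum_le_sum fun d hd => ?_
          calc _ ≤ 1 * ((⌊u'⌋₊ : ℝ) / d) := by gcongr; exact Nat.cast_div_le
            _ ≤ 1 * (u' / d) := by gcongr
            _ = _ := by ring
      _ = u' * ∑ d ∈ Icc 1 ⌊u'⌋₊, (1 : ℝ) / d := by rw [mul_sum]
      _ ≤ u' * (1 + Real.log ⌊u'⌋₊) := by gcongr; exact sum_Icc_inv_le _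
      _ ≤ _ := by
          gcongr
          exact hfl.trans huu
  have hM : |S / u - S' / u'| ≤ 3 * δ * (1 + Real.log u) + 2 / √x' := by
    have hup : 0 < u := by linarith
    have hup' : 0 < u' := by linarith
    have e1 : S / u - S' / u' = (S - S') / u - S' * ((u - u') / (u * u')) := by
      field_simp; ring
    have hsu : √u * √u = u := Real.mul_self_sqrt hup.le
    have hsu0 : 0 < √u := Real.sqrt_pos.2 hup
    rw [e1]
    calc _ ≤ |(S - S') / u| + |S' * ((u - u') / (u * u'))| := abs_sub _ _
      _ = |S - S'| / u + |S'| * ((u - u') / (u * u')) := by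
          have e2 : |(u - u') / (u * u')| = (u - u') / (u * u') :=
            abs_of_nonneg (div_nonneg (by linarith) (mul_pos hup hup').le)
          rw [abs_div (S - S') u, abs_mul S', e2, abs_of_pos hup]
      _ ≤ 2 * (δ * u' * (1 + Real.log u) + √u) / u +
          u' * (1 + Real.log u) * (δ * u' / (u * u')) := by gcongr
      _ = 3 * δ * (1 + Real.log u) * (u' / u) + 2 * (√u / u) := by field_simp; ring
      _ ≤ 3 * δ * (1 + Real.log u) * 1 + 2 * (1 / √x') := by
          have e3 : u' / u ≤ 1 := by rw [div_le_one hup]; exact huu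
          have e4 : √u / u ≤ 1 / √x' := by
            rw [div_le_div_iff₀ hup (Real.sqrt_pos.2 hx')]
            have : √x' ≤ √u := Real.sqrt_le_sqrt (by linarith)
            nlinarith
          have e5 : 0 ≤ 3 * δ * (1 + Real.log u) := by positivity
          exact add_le_add (mul_le_mul_of_nonneg_left e3 e5)
            (mul_le_mul_of_nonneg_left e4 (by norm_num))
      _ = _ := by ring
  unfold Mt
  rw [← hS, ← hS']
  have hx'inv : 1 / x' ≤ 1 / √x' := by
    refine one_div_le_one_div_of_le (Real.sqrt_pos.2 hx') ?_
    rw [Real.sqrt_le_left (by linarith)]; nlinarith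
  have hsp : 0 ≤ 1 / √x' := by positivity
  have h2d : 2 / √x' = 2 * (1 / √x') := by ring
  have e2 : Lsum f x - S / u - (Lsum f x' - S' / u') = (Lsum f x - Lsum f x') - (S / u - S' / u') := by
    ring
  rw [e2]
  have e3 := abs_sub (Lsum f x - Lsum f x') (S / u - S' / u')
  nlinarith [mul_le_mul_of_nonneg_left hlogu hδ0, mul_le_mul_of_nonneg_left hlogX hδ0]

/-! ### Mean squares of Dirichlet series on vertical lines -/

/-- `∑_n c(n) n^{-1-α-it}`, written as a series of characters `t ↦ n^{-it}`. -/
noncomputable def chs (c : ℕ → ℝ) (α t : ℝ) : ℂ :=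
  ∑' n : ℕ, ((c n * (n : ℝ) ^ (-1 - α) : ℝ) : ℂ) * Complex.exp (-Complex.I * t * Real.log n)

lemma chs_term (c : ℕ → ℝ) {α : ℝ} (hα : 0 < α) (t : ℝ) (n : ℕ) :
    ((c n * (n : ℝ) ^ (-1 - α) : ℝ) : ℂ) * Complex.exp (-Complex.I * t * Real.log n) =
      (c n : ℂ) * (n : ℂ) ^ (-1 - ((α : ℂ) + t * Complex.I)) := by
  rcases Nat.eq_zero_or_pos n with rfl | hn
  · rw [Nat.cast_zero, Nat.cast_zero, Complex.zero_cpow (neg_one_sub_ne (by simpa using hα)),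
      Real.zero_rpow (by linarith)]
    simp
  · have hn0 : (0 : ℝ) < n := by exact_mod_cast hn
    have hnc : (n : ℂ) ≠ 0 := by exact_mod_cast hn.ne'
    rw [Complex.ofReal_mul, mul_assoc, Complex.ofReal_cpow hn0.le, Complex.ofReal_natCast,
      Complex.cpow_def_of_ne_zero hnc, Complex.cpow_def_of_ne_zero hnc, ← Complex.exp_add,
      ← Complex.natCast_log]
    congr 2
    push_cast
    ring

lemma chs_eq_tsum (c : ℕ → ℝ) {α : ℝ} (hα : 0 < α) (t : ℝ) :
    chs c α t = ∑' n : ℕ, (c n : ℂ) * (n : ℂ) ^ (-1 - ((α : ℂ) + t * Complex.I)) :=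
  tsum_congr fun n => chs_term c hα t n

lemma chs_eq_LSeries (c : ℕ → ℝ) {α : ℝ} (hα : 0 < α) (t : ℝ) :
    chs c α t = LSeries (fun n => (c n : ℂ)) (1 + ((α : ℂ) + t * Complex.I)) := by
  rw [LSeries_eq_tsum (by simpa using hα), chs_eq_tsum c hα]

lemma LSeriesSummable_of_chs {c : ℕ → ℝ} {α : ℝ} (hα : 0 < α)
    (hs : Summable fun n : ℕ => |c n| * (n : ℝ) ^ (-1 - α)) (t : ℝ) :
    LSeriesSummable (fun n => (c n : ℂ)) (1 + ((α : ℂ) + t * Complex.I)) := by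
  refine Summable.of_norm_bounded hs fun n => ?_
  rw [term_eq_LSeries_term (by simpa using hα), ← chs_term c hα, norm_mul, norm_char, mul_one,
    Complex.norm_real, norm_mul, Real.norm_eq_abs, Real.norm_eq_abs,
    abs_of_nonneg (Real.rpow_nonneg (Nat.cast_nonneg n) _)]

lemma abs_pl_le {f : ℕ → ℝ} (hf : ∀ n, f n ∈ Set.Icc (-1 : ℝ) 1) (n : ℕ) :
    |pl f n| ≤ ArithmeticFunction.vonMangoldt n := by
  unfold pl
  split_ifs with h
  · rw [ArithmeticFunction.vonMangoldt_apply_prime h, abs_mul,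
      abs_of_nonneg (Real.log_natCast_nonneg n)]
    exact mul_le_of_le_one_left (Real.log_natCast_nonneg n) (abs_le.2 (hf n))
  · simp

lemma abs_acoef_le {f : ℕ → ℝ} (hf : ∀ n, f n ∈ Set.Icc (-1 : ℝ) 1) (n : ℕ) :
    |acoef f n| ≤ Real.log n := by
  unfold acoef
  rw [← ArithmeticFunction.vonMangoldt_sum, ← Nat.sum_divisorsAntidiagonal
    (fun d _ => ArithmeticFunction.vonMangoldt d)]
  refine (abs_sum_le_sum_abs _ _).trans (sum_le_sum fun x _ => ?_)
  rw [abs_mul]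
  calc _ ≤ ArithmeticFunction.vonMangoldt x.1 * 1 :=
        mul_le_mul (abs_pl_le hf _) (abs_le.2 (hf _)) (abs_nonneg _)
          ArithmeticFunction.vonMangoldt_nonneg
    _ = _ := mul_one _

lemma summable_log_rpow {α : ℝ} (hα : 0 < α) :
    Summable fun n : ℕ => Real.log n * (n : ℝ) ^ (-1 - α) := by
  have h := (Real.summable_nat_rpow (p := -1 - α / 2)).2 (by linarith)
  refine Summable.of_nonneg_of_le (fun n => mul_nonneg (Real.log_natCast_nonneg n)
    (by positivity)) (fun n => ?_) (h.mul_left (1 / (α / 2)))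
  rcases Nat.eq_zero_or_pos n with rfl | hn
  · simp; positivity
  · have hn0 : (0 : ℝ) < n := by exact_mod_cast hn
    have := Real.log_le_rpow_div hn0.le (show 0 < α / 2 by positivity)
    calc _ ≤ (n : ℝ) ^ (α / 2) / (α / 2) * (n : ℝ) ^ (-1 - α) := by gcongr
      _ = 1 / (α / 2) * ((n : ℝ) ^ (α / 2) * (n : ℝ) ^ (-1 - α)) := by ring
      _ = _ := by rw [← Real.rpow_add hn0]; ring_nf

/-- The Dirichlet series of `acoef f` is the product of those of `pl f` and `f`. -/
lemma chs_acoef {f : ℕ → ℝ} (hf : ∀ n, f n ∈ Set.Icc (-1 : ℝ) 1) {α : ℝ} (hα : 0 < α) (t : ℝ) :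
    chs (acoef f) α t = chs (pl f) α t * Fs f (α + t * Complex.I) := by
  have h1 : LSeriesSummable (fun n => (pl f n : ℂ)) (1 + ((α : ℂ) + t * Complex.I)) := by
    refine LSeriesSummable_of_chs hα (Summable.of_nonneg_of_le (fun n => by positivity)
      (fun n => ?_) (summable_Lambda_rpow hα)) t
    exact mul_le_mul_of_nonneg_right (abs_pl_le hf n) (by positivity)
  have h2 : LSeriesSummable (fun n => (f n : ℂ)) (1 + ((α : ℂ) + t * Complex.I)) := by
    refine LSeriesSummable_of_chs hα (Summable.of_nonneg_of_le (fun n => by positivity)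
      (fun n => ?_) ((Real.summable_nat_rpow (p := -1 - α)).2 (by linarith))) t
    exact mul_le_of_le_one_left (by positivity) (abs_le.2 (hf n))
  rw [chs_eq_LSeries _ hα, chs_eq_LSeries _ hα, Fs_eq_LSeries (by simpa using hα),
    ← LSeries_convolution' h1 h2, LSeries.convolution_def]
  congr 1
  funext n
  unfold acoef
  push_cast
  rfl

lemma integral_inv_sq_add_le {α : ℝ} (hα : 0 < α) (K : ℝ) :
    ∫ t in (-K)..K, 1 / (α ^ 2 + t ^ 2) ≤ 4 / α := by
  have hd : ∀ t ∈ Set.uIcc (-K) K, HasDerivAt (fun t => Real.arctan (t / α) / α)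
      (1 / (α ^ 2 + t ^ 2)) t := by
    intro t _
    have h := ((hasDerivAt_id t).div_const α).arctan.div_const α
    refine HasDerivAt.congr_deriv h ?_
    simp only [id]
    field_simp
  have hc : Continuous fun t : ℝ => 1 / (α ^ 2 + t ^ 2) :=
    continuous_const.div (by fun_prop) fun t => by positivity
  rw [intervalIntegral.integral_eq_sub_of_hasDerivAt hd (hc.intervalIntegrable _ _)]
  have h1 := Real.arctan_lt_pi_div_two (K / α)
  have h2 := Real.neg_pi_div_two_lt_arctan (-K / α)
  rw [← sub_div]
  gcongr
  linarith [Real.pi_le_four]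

lemma norm_sq_line (α t : ℝ) : ‖(α : ℂ) + t * Complex.I‖ ^ 2 = α ^ 2 + t ^ 2 := by
  rw [← Complex.normSq_eq_norm_sq, Complex.normSq_apply]; simp; ring

lemma continuous_chs {c b : ℕ → ℝ} {α : ℝ} (hb : ∀ n, |c n| ≤ b n)
    (hs : Summable fun n : ℕ => b n * (n : ℝ) ^ (-1 - α)) : Continuous (chs c α) := by
  unfold chs
  refine continuous_tsum (fun n => by fun_prop) hs fun n t => ?_
  rw [norm_mul, norm_char, mul_one, Complex.norm_real, norm_mul, Real.norm_eq_abs,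
    Real.norm_eq_abs, abs_of_nonneg (Real.rpow_nonneg (Nat.cast_nonneg n) _)]
  exact mul_le_mul_of_nonneg_right (hb n) (by positivity)

/-- The majorant principle in terms of `chs`. -/
lemma chs_majorant {c b : ℕ → ℝ} {α : ℝ} (hb : ∀ n, |c n| ≤ b n)
    (hs : Summable fun n : ℕ => b n * (n : ℝ) ^ (-1 - α)) {K : ℝ} (hK : 0 < K) (t₀ : ℝ) :
    ∫ t in (t₀ - K)..(t₀ + K), ‖chs c α t‖ ^ 2 ≤
      2 * ∫ t in (-(4 * K))..(4 * K), ‖chs b α t‖ ^ 2 := by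
  have hb' : ∀ n : ℕ, ‖((c n * (n : ℝ) ^ (-1 - α) : ℝ) : ℂ)‖ ≤ b n * (n : ℝ) ^ (-1 - α) := by
    intro n
    rw [Complex.norm_real, norm_mul, Real.norm_eq_abs, Real.norm_eq_abs,
      abs_of_nonneg (Real.rpow_nonneg (Nat.cast_nonneg n) _)]
    exact mul_le_mul_of_nonneg_right (hb n) (by positivity)
  exact majorant hb' hs hK t₀

/-- Local mean square of `P`: `≪ 1/α` on every interval of length `1/2`. -/
lemma P_local : ∃ C : ℝ, 0 < C ∧ ∀ f : ℕ → ℝ, (∀ n, f n ∈ Set.Icc (-1 : ℝ) 1) →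
    ∀ α t₀ : ℝ, 0 < α → α ≤ 1 →
    ∫ t in (t₀ - 1 / 4)..(t₀ + 1 / 4), ‖chs (pl f) α t‖ ^ 2 ≤ C / α := by
  obtain ⟨C, hC, h⟩ := Lambda_bound
  refine ⟨8 * C ^ 2, by positivity, ?_⟩
  intro f hf α t₀ hα hα1
  have h1 := chs_majorant (c := pl f) (b := fun n => ArithmeticFunction.vonMangoldt n) (α := α)
    (abs_pl_le hf) (summable_Lambda_rpow hα) (show (0 : ℝ) < 1 / 4 by norm_num) t₀
  refine h1.trans ?_
  rw [show (4 : ℝ) * (1 / 4) = 1 by norm_num]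
  have h2 : ∫ t in (-1 : ℝ)..1, ‖chs (fun n => ArithmeticFunction.vonMangoldt n) α t‖ ^ 2 ≤
      ∫ t in (-1 : ℝ)..1, C ^ 2 * (1 / (α ^ 2 + t ^ 2)) := by
    have hcont := continuous_chs (c := fun n => ArithmeticFunction.vonMangoldt n) (α := α)
      (fun n => (abs_of_nonneg ArithmeticFunction.vonMangoldt_nonneg).le) (summable_Lambda_rpow hα)
    refine intervalIntegral.integral_mono_on (by norm_num)
      ((hcont.norm.pow 2).intervalIntegrable _ _) (Continuous.intervalIntegrable
        (continuous_const.mul (continuous_const.div (by fun_prop) fun t => by positivity)) _ _)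
      fun t ht => ?_
    have h3 := h (α + t * Complex.I) (by simpa using hα) (by simpa using hα1)
      (by simpa using abs_le.2 ht)
    rw [← chs_eq_tsum (fun n => ArithmeticFunction.vonMangoldt n) hα] at h3
    calc _ ≤ (C / ‖(α : ℂ) + t * Complex.I‖) ^ 2 := by gcongr
      _ = _ := by rw [div_pow, norm_sq_line]; ring
  calc _ ≤ 2 * ∫ t in (-1 : ℝ)..1, C ^ 2 * (1 / (α ^ 2 + t ^ 2)) := by gcongr
    _ = 2 * (C ^ 2 * ∫ t in (-1 : ℝ)..1, 1 / (α ^ 2 + t ^ 2)) := by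
        rw [intervalIntegral.integral_const_mul]
    _ ≤ 2 * (C ^ 2 * (4 / α)) := by gcongr; exact integral_inv_sq_add_le hα 1
    _ = _ := by ring

lemma log_pow_four_le {y : ℝ} (hy : 1 ≤ y) : Real.log y ^ 4 ≤ 4096 * √y := by
  have h := Real.log_le_rpow_div (x := y) (by linarith) (show (0 : ℝ) < 1 / 8 by norm_num)
  have h0 := Real.log_nonneg hy
  calc _ ≤ (y ^ (1 / 8 : ℝ) / (1 / 8)) ^ 4 := by gcongr
    _ = 4096 * (y ^ (1 / 8 : ℝ)) ^ 4 := by ring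
    _ = _ := by
        rw [← Real.rpow_natCast, ← Real.rpow_mul (by linarith), Real.sqrt_eq_rpow]; norm_num

/-- Mean square of the Dirichlet series of `log`, which majorizes `acoef f`. -/
lemma log_mean_square : ∃ C : ℝ, 0 < C ∧ ∀ α K : ℝ, 0 < α → α ≤ 1 → 1 ≤ K →
    ∫ t in (-(4 * K))..(4 * K), ‖chs (fun n => Real.log n) α t‖ ^ 2 ≤
      C * (1 / α ^ 3 + K * √K) := by
  refine ⟨10 ^ 9, by positivity, ?_⟩
  intro α K hα hα1 hK
  have hcont := continuous_chs (c := fun n => Real.log n) (α := α)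
    (fun n => (abs_of_nonneg (Real.log_natCast_nonneg n)).le) (summable_log_rpow hα)
  have hK0 : 0 ≤ √K := Real.sqrt_nonneg K
  have h1 : ∫ t in (-(4 * K))..(4 * K), ‖chs (fun n => Real.log n) α t‖ ^ 2 ≤
      ∫ t in (-(4 * K))..(4 * K), (10 ^ 7 * √K + 8 / α ^ 2 * (1 / (α ^ 2 + t ^ 2))) := by
    refine intervalIntegral.integral_mono_on (by linarith)
      ((hcont.norm.pow 2).intervalIntegrable _ _) (Continuous.intervalIntegrable
        (continuous_const.add (continuous_const.mul
          (continuous_const.div (by fun_prop) fun t => by positivity))) _ _)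
      fun t ht => ?_
    have h3 := Llog_bound (s := α + t * Complex.I) (by simpa using hα) (by simpa using hα1)
    rw [← chs_eq_tsum (fun n => Real.log n) hα, norm_sq_line] at h3
    have him : ((α : ℂ) + t * Complex.I).im = t := by simp
    rw [him] at h3
    have ht' : |t| ≤ 4 * K := abs_le.2 ht
    have hl : Real.log (3 + |t|) ^ 4 ≤ 4096 * (3 * √K) := by
      refine (log_pow_four_le (by linarith [abs_nonneg t])).trans ?_
      gcongr
      rw [Real.sqrt_le_left (by positivity), mul_pow, Real.sq_sqrt (by linarith)]
      linarith
    have hq : 1 / (α ^ 2 + t ^ 2) ≤ 1 / α ^ 2 := by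
      gcongr; nlinarith [sq_nonneg t]
    have hq0 : 0 ≤ 1 / (α ^ 2 + t ^ 2) := by positivity
    calc _ ≤ (19 * Real.log (3 + |t|) ^ 2 + 2 / (α ^ 2 + t ^ 2)) ^ 2 := by gcongr
      _ ≤ 2 * (19 * Real.log (3 + |t|) ^ 2) ^ 2 + 2 * (2 / (α ^ 2 + t ^ 2)) ^ 2 := by
          nlinarith [sq_nonneg (19 * Real.log (3 + |t|) ^ 2 - 2 / (α ^ 2 + t ^ 2))]
      _ = 722 * Real.log (3 + |t|) ^ 4 + 8 * (1 / (α ^ 2 + t ^ 2) * (1 / (α ^ 2 + t ^ 2))) := by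
          ring
      _ ≤ 722 * (4096 * (3 * √K)) + 8 * (1 / α ^ 2 * (1 / (α ^ 2 + t ^ 2))) := by gcongr
      _ ≤ 10 ^ 7 * √K + 8 / α ^ 2 * (1 / (α ^ 2 + t ^ 2)) := by
          have : 8 * (1 / α ^ 2 * (1 / (α ^ 2 + t ^ 2))) =
            8 / α ^ 2 * (1 / (α ^ 2 + t ^ 2)) := by ring
          rw [this]; nlinarith
  refine h1.trans ?_
  have hi : IntervalIntegrable (fun t : ℝ => 8 / α ^ 2 * (1 / (α ^ 2 + t ^ 2))) volume
      (-(4 * K)) (4 * K) := Continuous.intervalIntegrable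
    (continuous_const.mul (continuous_const.div (by fun_prop) fun t => by positivity)) _ _
  rw [intervalIntegral.integral_add (by simp) hi,
    intervalIntegral.integral_const, intervalIntegral.integral_const_mul, smul_eq_mul]
  calc _ ≤ (4 * K - -(4 * K)) * (10 ^ 7 * √K) + 8 / α ^ 2 * (4 / α) := by
        gcongr; exact integral_inv_sq_add_le hα _
    _ = 8 * 10 ^ 7 * (K * √K) + 32 * (1 / α ^ 3) := by field_simp; ring
    _ ≤ _ := by
        have a1 : 0 ≤ K * √K := by positivity
        have a2 : 0 ≤ 1 / α ^ 3 := by positivity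
        linarith

/-! ### Low frequencies -/

lemma summable_half_weight : Summable fun k : ℕ => (1 + (k : ℝ) / 2) ^ (-(3 / 2) : ℝ) := by
  have h := (summable_nat_add_iff 1).2 ((Real.summable_nat_rpow (p := -(3 / 2))).2 (by norm_num))
  refine Summable.of_nonneg_of_le (fun k => by positivity) (fun k => ?_)
    (h.mul_left ((1 / 2 : ℝ) ^ (-(3 / 2) : ℝ)))
  rw [← Real.mul_rpow (by norm_num) (by positivity)]
  refine Real.rpow_le_rpow_of_nonpos (by positivity) ?_ (by norm_num)
  push_cast
  linarith

/-- A weight of size `(1+t)^{-3/2}` turns uniform local bounds for `h` into a global bound. -/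
lemma weighted_half {h : ℝ → ℝ} (hc : Continuous h) (h0 : ∀ t, 0 ≤ h t) {H : ℝ}
    (hH : ∀ t₀, ∫ t in (t₀ - 1 / 4)..(t₀ + 1 / 4), h t ≤ H) (N : ℕ) :
    ∫ t in (0 : ℝ)..(N / 2), (1 + |t|) ^ (-(3 / 2) : ℝ) * h t ≤
      (∑' k : ℕ, (1 + (k : ℝ) / 2) ^ (-(3 / 2) : ℝ)) * H := by
  have hcw : Continuous fun t : ℝ => (1 + |t|) ^ (-(3 / 2) : ℝ) * h t := by
    refine Continuous.mul (Continuous.rpow_const (by fun_prop) fun t => Or.inl ?_) hc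
    positivity
  have hH0 : 0 ≤ H := le_trans (intervalIntegral.integral_nonneg (by norm_num) fun t _ => h0 t) (hH 0)
  have key : ∀ N : ℕ, ∫ t in (0 : ℝ)..(N / 2), (1 + |t|) ^ (-(3 / 2) : ℝ) * h t ≤
      (∑ k ∈ range N, (1 + (k : ℝ) / 2) ^ (-(3 / 2) : ℝ)) * H := by
    intro N
    induction N with
    | zero => simp
    | succ N ih =>
      rw [← intervalIntegral.integral_add_adjacent_intervals (b := (N : ℝ) / 2)
        (hcw.intervalIntegrable _ _) (hcw.intervalIntegrable _ _), sum_range_succ, add_mul]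
      refine add_le_add ih ?_
      have h1 : ∫ t in ((N : ℝ) / 2)..((N + 1 : ℕ) / 2), (1 + |t|) ^ (-(3 / 2) : ℝ) * h t ≤
          ∫ t in ((N : ℝ) / 2)..((N + 1 : ℕ) / 2), (1 + (N : ℝ) / 2) ^ (-(3 / 2) : ℝ) * h t := by
        refine intervalIntegral.integral_mono_on (by push_cast; linarith)
          (hcw.intervalIntegrable _ _) ((continuous_const.mul hc).intervalIntegrable _ _)
          fun t ht => ?_
        refine mul_le_mul_of_nonneg_right (Real.rpow_le_rpow_of_nonpos (by positivity) ?_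
          (by norm_num)) (h0 t)
        linarith [ht.1, le_abs_self t]
      refine h1.trans ?_
      rw [intervalIntegral.integral_const_mul]
      refine mul_le_mul_of_nonneg_left ?_ (by positivity)
      have := hH (N / 2 + 1 / 4)
      rw [show (N / 2 + 1 / 4 - 1 / 4 : ℝ) = N / 2 by ring,
        show (N / 2 + 1 / 4 + 1 / 4 : ℝ) = (N + 1 : ℕ) / 2 by push_cast; ring] at this
      exact this
  refine (key N).trans (mul_le_mul_of_nonneg_right ?_ hH0)
  exact summable_half_weight.sum_le_tsum _ fun k _ => by positivity

lemma weighted_full : ∃ C : ℝ, 0 < C ∧ ∀ (h : ℝ → ℝ), Continuous h → (∀ t, 0 ≤ h t) → ∀ H : ℝ,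
    (∀ t₀, ∫ t in (t₀ - 1 / 4)..(t₀ + 1 / 4), h t ≤ H) → ∀ K : ℝ, 0 ≤ K →
    ∫ t in (-K)..K, (1 + |t|) ^ (-(3 / 2) : ℝ) * h t ≤ C * H := by
  refine ⟨2 * ∑' k : ℕ, (1 + (k : ℝ) / 2) ^ (-(3 / 2) : ℝ), ?_, ?_⟩
  · have := summable_half_weight.sum_le_tsum {0} fun k _ => by positivity
    simp at this
    positivity
  intro h hc h0 H hH K hK
  have hcw : Continuous fun t : ℝ => (1 + |t|) ^ (-(3 / 2) : ℝ) * h t := by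
    refine Continuous.mul (Continuous.rpow_const (by fun_prop) fun t => Or.inl ?_) hc
    positivity
  have hw0 : ∀ t : ℝ, 0 ≤ (1 + |t|) ^ (-(3 / 2) : ℝ) * h t := fun t => mul_nonneg (by positivity) (h0 t)
  obtain ⟨N, hN⟩ := exists_nat_ge (2 * K)
  have hmono : ∫ t in (-K)..K, (1 + |t|) ^ (-(3 / 2) : ℝ) * h t ≤
      ∫ t in (-(N / 2 : ℝ))..(N / 2), (1 + |t|) ^ (-(3 / 2) : ℝ) * h t :=
    intervalIntegral.integral_mono_interval (by linarith) (by linarith) (by linarith)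
      (Filter.Eventually.of_forall hw0) (hcw.intervalIntegrable _ _)
  have h1 := weighted_half hc h0 hH N
  have h2 := weighted_half (h := fun t => h (-t)) (hc.comp continuous_neg) (fun t => h0 _) (H := H)
    (fun t₀ => by
      rw [intervalIntegral.integral_comp_neg]
      rw [show -(t₀ + 1 / 4) = -t₀ - 1 / 4 by ring, show -(t₀ - 1 / 4) = -t₀ + 1 / 4 by ring]
      exact hH (-t₀)) N
  have h3 : ∫ t in (0 : ℝ)..(N / 2), (1 + |t|) ^ (-(3 / 2) : ℝ) * h (-t) =
      ∫ t in (-(N / 2 : ℝ))..0, (1 + |t|) ^ (-(3 / 2) : ℝ) * h t := by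
    have := intervalIntegral.integral_comp_neg (a := 0) (b := (N / 2 : ℝ))
      (fun t : ℝ => (1 + |t|) ^ (-(3 / 2) : ℝ) * h t)
    simpa using this
  have h4 := intervalIntegral.integral_add_adjacent_intervals (a := -(N / 2 : ℝ)) (b := 0)
    (c := N / 2) (hcw.intervalIntegrable (μ := volume) _ _) (hcw.intervalIntegrable _ _)
  linarith [h3 ▸ h2]

/-- The bound for `‖KL (α + it)‖` provided by `KL_bound`, up to a constant. -/
noncomputable def KW (α t : ℝ) : ℝ :=
  Real.log (3 + |t|) / (1 + |t|) * ‖((α : ℂ) + t * Complex.I) / (1 + (α + t * Complex.I))‖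

lemma one_add_line_ne {α : ℝ} (hα : 0 < α) (t : ℝ) : (1 : ℂ) + (α + t * Complex.I) ≠ 0 := by
  intro h
  have := congrArg Complex.re h
  simp at this
  linarith

lemma KW_nonneg (α t : ℝ) : 0 ≤ KW α t := by
  have := one_le_log_three_add t
  unfold KW
  positivity

lemma continuous_KW {α : ℝ} (hα : 0 < α) : Continuous (KW α) := by
  unfold KW
  refine Continuous.mul (Continuous.div ?_ (by fun_prop) fun t => by positivity) (Continuous.norm
    (Continuous.div (by fun_prop) (by fun_prop) (one_add_line_ne hα)))
  exact Continuous.log (by fun_prop) fun t => by positivity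

lemma KW_le {α : ℝ} (hα : 0 < α) (t : ℝ) : KW α t ≤ Real.log (3 + |t|) / (1 + |t|) := by
  have := one_le_log_three_add t
  unfold KW
  refine mul_le_of_le_one_right (by positivity) ?_
  rw [norm_div, div_le_one (norm_pos_iff.2 (one_add_line_ne hα t))]
  refine (sq_le_sq₀ (norm_nonneg _) (norm_nonneg _)).1 ?_
  have h := norm_sq_line (1 + α) t
  push_cast at h
  rw [norm_sq_line, ← add_assoc, h]
  nlinarith

/-- The low-frequency part of the mean square, where the pointwise bound for `F` is available. -/
lemma low_part : ∃ C : ℝ, 0 < C ∧ ∀ f : ℕ → ℝ, (∀ n, f n ∈ Set.Icc (-1 : ℝ) 1) → IsMult f →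
    ∀ x T α : ℝ, 3 ≤ x → 1 ≤ T → 1 / Real.log x ≤ α → α ≤ 1 →
    ∫ t in (-(T / 2))..(T / 2), (‖chs (acoef f) α t‖ * KW α t) ^ 2 ≤
      C / α * (Real.exp (-MxT f x T) + α * Real.log x / T) ^ 2 := by
  obtain ⟨C₁, hC₁, hF⟩ := F_bound
  obtain ⟨C₂, hC₂, hP⟩ := P_local
  obtain ⟨C₃, hC₃, hW⟩ := weighted_full
  refine ⟨C₁ ^ 2 * 8192 * (C₃ * C₂), by positivity, ?_⟩
  intro f hf hm x T α hx hT hαx hα1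
  have hlog : 0 < Real.log x := Real.log_pos (by linarith)
  have hα : 0 < α := lt_of_lt_of_le (by positivity) hαx
  set G := Real.exp (-MxT f x T) + α * Real.log x / T with hG
  have hG0 : 0 < G := by positivity
  have hcp : Continuous (chs (pl f) α) := continuous_chs (abs_pl_le hf) (summable_Lambda_rpow hα)
  have hca : Continuous (chs (acoef f) α) := continuous_chs (abs_acoef_le hf) (summable_log_rpow hα)
  have h1 := hW (fun t => ‖chs (pl f) α t‖ ^ 2) (by fun_prop) (fun t => by positivity) (C₂ / α)
    (fun t₀ => hP f hf α t₀ hα hα1) (T / 2) (by linarith)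
  have hcw : Continuous fun t : ℝ => (1 + |t|) ^ (-(3 / 2) : ℝ) * ‖chs (pl f) α t‖ ^ 2 := by
    refine Continuous.mul (Continuous.rpow_const (by fun_prop) fun t => Or.inl ?_) (by fun_prop)
    positivity
  have h2 : ∫ t in (-(T / 2))..(T / 2), (‖chs (acoef f) α t‖ * KW α t) ^ 2 ≤
      ∫ t in (-(T / 2))..(T / 2), C₁ ^ 2 * 8192 * G ^ 2 *
        ((1 + |t|) ^ (-(3 / 2) : ℝ) * ‖chs (pl f) α t‖ ^ 2) := by
    refine intervalIntegral.integral_mono_on (by linarith)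
      (((hca.norm.mul (continuous_KW hα)).pow 2).intervalIntegrable _ _)
      ((continuous_const.mul hcw).intervalIntegrable _ _) fun t ht => ?_
    have h3 := hF f hf hm x T t α hx hT (abs_le.2 ht) hαx hα1
    rw [← hG] at h3
    have hu : 0 < 1 + |t| := by positivity
    have hl : Real.log (3 + |t|) ^ 4 ≤ 8192 * √(1 + |t|) := by
      refine (log_pow_four_le (by linarith [abs_nonneg t])).trans ?_
      have : √(3 + |t|) ≤ 2 * √(1 + |t|) := by
        rw [Real.sqrt_le_left (by positivity), mul_pow, Real.sq_sqrt hu.le]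
        linarith [abs_nonneg t]
      linarith
    have hw : √(1 + |t|) / (1 + |t|) ^ 2 = (1 + |t|) ^ (-(3 / 2) : ℝ) := by
      rw [Real.sqrt_eq_rpow, ← Real.rpow_natCast (1 + |t|) 2, ← Real.rpow_sub hu]
      norm_num
    rw [chs_acoef hf hα, norm_mul]
    unfold KW
    have h0 := one_le_log_three_add t
    calc _ = ‖chs (pl f) α t‖ ^ 2 * (Real.log (3 + |t|) / (1 + |t|)) ^ 2 *
          (‖Fs f (α + t * Complex.I)‖ *
            ‖((α : ℂ) + t * Complex.I) / (1 + (α + t * Complex.I))‖) ^ 2 := by ring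
      _ ≤ ‖chs (pl f) α t‖ ^ 2 * (Real.log (3 + |t|) / (1 + |t|)) ^ 2 *
          (C₁ * Real.log (3 + |t|) * G) ^ 2 := by gcongr
      _ = C₁ ^ 2 * G ^ 2 * ‖chs (pl f) α t‖ ^ 2 * (Real.log (3 + |t|) ^ 4 / (1 + |t|) ^ 2) := by
          field_simp
      _ ≤ C₁ ^ 2 * G ^ 2 * ‖chs (pl f) α t‖ ^ 2 * (8192 * √(1 + |t|) / (1 + |t|) ^ 2) := by
          gcongr
      _ = _ := by rw [← hw]; ring
  refine h2.trans ?_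
  rw [intervalIntegral.integral_const_mul]
  calc _ ≤ C₁ ^ 2 * 8192 * G ^ 2 * (C₃ * (C₂ / α)) := by gcongr
    _ = _ := by ring

/-! ### High frequencies and the mean square of `Φ` -/

/-- The mean square over the frequency shell `K ≤ |t| ≤ 2K`. -/
lemma shell_bound : ∃ C : ℝ, 0 < C ∧ ∀ f : ℕ → ℝ, (∀ n, f n ∈ Set.Icc (-1 : ℝ) 1) →
    ∀ α K : ℝ, 0 < α → α ≤ 1 → 1 / 2 ≤ K →
    ∫ t in (-(2 * K))..(2 * K), (‖chs (acoef f) α t‖ * KW α t) ^ 2 ≤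
      (∫ t in (-K)..K, (‖chs (acoef f) α t‖ * KW α t) ^ 2) +
        C * (Real.log (3 + 2 * K) ^ 2 / K ^ 2 * (1 / α ^ 3 + K * √K)) := by
  obtain ⟨C, hC, hL⟩ := log_mean_square
  refine ⟨2 * C * 4, by positivity, ?_⟩
  intro f hf α K hα hα1 hK
  have hca : Continuous (chs (acoef f) α) := continuous_chs (abs_acoef_le hf) (summable_log_rpow hα)
  have hcA : Continuous fun t => (‖chs (acoef f) α t‖ * KW α t) ^ 2 :=
    (hca.norm.mul (continuous_KW hα)).pow 2
  have hcn : Continuous fun t => ‖chs (acoef f) α t‖ ^ 2 := hca.norm.pow 2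
  set w := Real.log (3 + 2 * K) ^ 2 / K ^ 2 with hw
  have hw0 : 0 ≤ w := by positivity
  have hpt : ∀ t, K ≤ |t| → |t| ≤ 2 * K →
      (‖chs (acoef f) α t‖ * KW α t) ^ 2 ≤ w * ‖chs (acoef f) α t‖ ^ 2 := by
    intro t h1 h2
    have h3 : KW α t ≤ Real.log (3 + 2 * K) / K := by
      refine (KW_le hα t).trans ?_
      have := one_le_log_three_add t
      gcongr
      · exact Real.log_nonneg (by linarith)
      · linarith
    calc _ = KW α t ^ 2 * ‖chs (acoef f) α t‖ ^ 2 := by ring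
      _ ≤ (Real.log (3 + 2 * K) / K) ^ 2 * ‖chs (acoef f) α t‖ ^ 2 := by
          have := KW_nonneg α t
          gcongr
      _ = _ := by rw [div_pow]
  have h1 : ∫ t in K..(2 * K), (‖chs (acoef f) α t‖ * KW α t) ^ 2 ≤
      w * ∫ t in K..(2 * K), ‖chs (acoef f) α t‖ ^ 2 := by
    rw [← intervalIntegral.integral_const_mul]
    refine intervalIntegral.integral_mono_on (by linarith) (hcA.intervalIntegrable _ _)
      ((continuous_const.mul hcn).intervalIntegrable _ _) fun t ht => hpt t ?_ ?_
    · exact ht.1.trans (le_abs_self t)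
    · rw [abs_of_nonneg (by linarith [ht.1])]; exact ht.2
  have h2 : ∫ t in (-(2 * K))..(-K), (‖chs (acoef f) α t‖ * KW α t) ^ 2 ≤
      w * ∫ t in (-(2 * K))..(-K), ‖chs (acoef f) α t‖ ^ 2 := by
    rw [← intervalIntegral.integral_const_mul]
    refine intervalIntegral.integral_mono_on (by linarith) (hcA.intervalIntegrable _ _)
      ((continuous_const.mul hcn).intervalIntegrable _ _) fun t ht => hpt t ?_ ?_
    · rw [abs_of_nonpos (by linarith [ht.2])]; linarith [ht.2]
    · rw [abs_of_nonpos (by linarith [ht.2])]; linarith [ht.1]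
  have split : ∀ φ : ℝ → ℝ, Continuous φ → ∫ t in (-(2 * K))..(2 * K), φ t =
      (∫ t in (-(2 * K))..(-K), φ t) + (∫ t in (-K)..K, φ t) + ∫ t in K..(2 * K), φ t := by
    intro φ hφ
    rw [intervalIntegral.integral_add_adjacent_intervals (hφ.intervalIntegrable _ _)
      (hφ.intervalIntegrable _ _), intervalIntegral.integral_add_adjacent_intervals
      (hφ.intervalIntegrable _ _) (hφ.intervalIntegrable _ _)]
  have h3 : ∫ t in (-(2 * K))..(2 * K), ‖chs (acoef f) α t‖ ^ 2 ≤
      2 * C * 4 * (1 / α ^ 3 + K * √K) := by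
    have h4 := chs_majorant (abs_acoef_le hf) (summable_log_rpow hα) (K := 2 * K) (by linarith) 0
    rw [zero_sub, zero_add] at h4
    have h5 := hL α (2 * K) hα hα1 (by linarith)
    have h6 : √(2 * K) ≤ 2 * √K := by
      rw [Real.sqrt_le_left (by positivity), mul_pow, Real.sq_sqrt (by linarith)]
      linarith
    have h7 : 2 * K * √(2 * K) ≤ 4 * (K * √K) := by
      nlinarith
    have h8 : 0 ≤ 1 / α ^ 3 := by positivity
    calc _ ≤ _ := h4
      _ ≤ 2 * (C * (1 / α ^ 3 + 2 * K * √(2 * K))) := by linarith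
      _ ≤ 2 * (C * (4 * (1 / α ^ 3) + 4 * (K * √K))) := by gcongr; linarith
      _ = _ := by ring
  have h4 : 0 ≤ ∫ t in (-K)..K, ‖chs (acoef f) α t‖ ^ 2 :=
    intervalIntegral.integral_nonneg (by linarith) fun t _ => by positivity
  rw [split _ hcn] at h3
  rw [split _ hcA]
  have h5 : w * ((∫ t in (-(2 * K))..(-K), ‖chs (acoef f) α t‖ ^ 2) +
      ∫ t in K..(2 * K), ‖chs (acoef f) α t‖ ^ 2) ≤ w * (2 * C * 4 * (1 / α ^ 3 + K * √K)) :=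
    mul_le_mul_of_nonneg_left (by linarith) hw0
  nlinarith

lemma summable_add_two_sq {r : ℝ} (hr0 : r ≠ 0) (hr : ‖r‖ < 1) :
    Summable fun j : ℕ => ((j : ℝ) + 2) ^ 2 * r ^ j := by
  have h0 : Summable fun n : ℕ => (n : ℝ) ^ 2 * r ^ n :=
    summable_pow_mul_geometric_of_norm_lt_one 2 hr
  have h := ((summable_nat_add_iff (f := fun n : ℕ => (n : ℝ) ^ 2 * r ^ n) 2).2 h0).mul_left
    ((r ^ 2)⁻¹)
  refine h.congr fun j => ?_
  push_cast
  field_simp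
  ring

lemma summable_dyadic_weight : Summable fun j : ℕ => ((j : ℝ) + 2) ^ 2 * (1 / √2) ^ j := by
  refine summable_add_two_sq (by positivity) ?_
  rw [Real.norm_of_nonneg (by positivity), div_lt_one (by positivity)]
  exact Real.lt_sqrt_of_sq_lt (by norm_num)

lemma shell_algebra {T α L q r m : ℝ} (hT : T = 2 * r ^ 2) (hα : 0 < α) (hq : 0 < q) (hr : 0 < r) :
    (m * L) ^ 2 / (q ^ 2 * (T / 2)) ^ 2 * (1 / α ^ 3 + q ^ 2 * (T / 2) * (q * r)) =
      m ^ 2 * (1 / q * (4 * (1 / α ^ 3 * (L ^ 2 / T ^ 2))) * (1 / q ^ 3) + 1 / q * (L ^ 2 / r)) := by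
  subst hT
  field_simp
  ring

/-- One dyadic shell at height `2^j T/2`, in summable form. -/
lemma shell_weight {T α : ℝ} (hT : 1 ≤ T) (hα : 0 < α) (j : ℕ) :
    Real.log (3 + 2 * (2 ^ j * (T / 2))) ^ 2 / (2 ^ j * (T / 2)) ^ 2 *
      (1 / α ^ 3 + 2 ^ j * (T / 2) * √(2 ^ j * (T / 2))) ≤
    ((j : ℝ) + 2) ^ 2 * (1 / √2) ^ j *
      (4 * (1 / α ^ 3 * (Real.log (2 * T) ^ 2 / T ^ 2)) + 128) := by
  have hT0 : 0 < T := by linarith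
  set L := Real.log (2 * T) with hL
  have hL0 : 0 ≤ L := Real.log_nonneg (by linarith)
  have h2j : (1 : ℝ) ≤ 2 ^ j := one_le_pow₀ (by norm_num)
  have hlog : Real.log (3 + 2 * (2 ^ j * (T / 2))) ≤ ((j : ℝ) + 2) * L := by
    have : ((j : ℝ) + 2) * L = Real.log ((2 * T) ^ (j + 2)) := by
      rw [Real.log_pow]; push_cast; rfl
    rw [this]
    refine Real.log_le_log (by positivity) ?_
    have h1 : (1 : ℝ) ≤ T ^ j := one_le_pow₀ hT
    calc 3 + 2 * (2 ^ j * (T / 2)) = 3 + 2 ^ j * T := by ring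
      _ ≤ 4 * (2 ^ j * T) := by nlinarith
      _ ≤ 4 * (2 ^ j * T) * (T ^ j * T) := le_mul_of_one_le_right (by positivity) (by nlinarith)
      _ = _ := by rw [pow_add, mul_pow, mul_pow]; ring
  have hlog0 : 0 ≤ Real.log (3 + 2 * (2 ^ j * (T / 2))) := Real.log_nonneg (by
    have : 0 < 2 ^ j * (T / 2) := by positivity
    linarith)
  have hs2 : (1 : ℝ) ≤ √2 := Real.one_le_sqrt.2 (by norm_num)
  have hsj : ((√2) ^ j) ^ 2 = 2 ^ j := by
    rw [← pow_mul, mul_comm, pow_mul, Real.sq_sqrt (by norm_num)]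
  have hsj0 : 0 < (√2) ^ j := by positivity
  have hsj1 : 1 ≤ (√2) ^ j := one_le_pow₀ hs2
  set q := (√2) ^ j with hq
  have hsT : √(2 ^ j * (T / 2)) = q * √(T / 2) := by
    rw [Real.sqrt_mul (by positivity), ← hsj, Real.sqrt_sq hsj0.le]
  have hr : 0 < √(T / 2) := Real.sqrt_pos.2 (by positivity)
  have hr2 : √(T / 2) ^ 2 = T / 2 := Real.sq_sqrt (by positivity)
  have hL2 : L ^ 2 ≤ 128 * √(T / 2) := by
    have h4 := log_pow_four_le (y := 2 * T) (by linarith)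
    have h5 : √(2 * T) = 2 * √(T / 2) := by
      rw [show 2 * T = 2 ^ 2 * (T / 2) by ring, Real.sqrt_mul (by norm_num),
        Real.sqrt_sq (by norm_num)]
    have h6 : 1 / 2 ≤ √(T / 2) := Real.le_sqrt_of_sq_le (by nlinarith)
    rw [h5, ← hL] at h4
    refine (sq_le_sq₀ (by positivity) (by positivity)).1 ?_
    nlinarith
  have e : Real.log (3 + 2 * (2 ^ j * (T / 2))) ^ 2 ≤ (((j : ℝ) + 2) * L) ^ 2 := by gcongr
  rw [hsT, ← hsj]
  rw [← hsj] at e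
  calc _ ≤ (((j : ℝ) + 2) * L) ^ 2 / (q ^ 2 * (T / 2)) ^ 2 *
        (1 / α ^ 3 + q ^ 2 * (T / 2) * (q * √(T / 2))) := by gcongr
    _ = ((j : ℝ) + 2) ^ 2 * (1 / q * (4 * (1 / α ^ 3 * (L ^ 2 / T ^ 2))) * (1 / q ^ 3) +
        1 / q * (L ^ 2 / √(T / 2))) := by
        exact shell_algebra (by rw [hr2]; ring) hα hsj0 hr
    _ ≤ ((j : ℝ) + 2) ^ 2 * (1 / q * (4 * (1 / α ^ 3 * (L ^ 2 / T ^ 2))) * 1 + 1 / q * 128) := by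
        gcongr
        · rw [div_le_one (by positivity)]; exact one_le_pow₀ hsj1
        · rw [div_le_iff₀ hr]; exact hL2
    _ = _ := by rw [one_div_pow]; ring

lemma hsum_acoef (f : ℕ → ℝ) (α v : ℝ) :
    hsum (fun n => acoef f n * (n : ℝ) ^ (-1 - α)) α v =
      Real.exp (-α * v) * Phi (acoef f) v := by
  unfold hsum
  rw [← (Phi_hasSum (acoef f) v).tsum_eq, ← tsum_mul_left]
  refine tsum_congr fun n => ?_
  rcases Nat.eq_zero_or_pos n with rfl | hn
  · simp [acoef]
  · have hn0 : (0 : ℝ) < n := by exact_mod_cast hn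
    have h1 : (n : ℝ) ^ (-1 - α) = (n : ℝ)⁻¹ * (Real.exp (α * Real.log n))⁻¹ := by
      rw [sub_eq_add_neg, Real.rpow_add hn0, Real.rpow_neg_one, Real.rpow_neg hn0.le,
        Real.rpow_def_of_pos hn0, mul_comm α]
    have h2 : Real.exp (-α * (v - Real.log n)) =
        Real.exp (-α * v) * Real.exp (α * Real.log n) := by
      rw [← Real.exp_add]; ring_nf
    unfold kd
    beta_reduce
    rw [h1, h2]
    have := (Real.exp_pos (α * Real.log n)).ne'
    field_simp

lemma summable_acoef {f : ℕ → ℝ} (hf : ∀ n, f n ∈ Set.Icc (-1 : ℝ) 1) {α : ℝ} (hα : 0 < α) :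
    Summable fun n : ℕ => |acoef f n * (n : ℝ) ^ (-1 - α)| := by
  refine Summable.of_nonneg_of_le (fun n => abs_nonneg _) (fun n => ?_) (summable_log_rpow hα)
  rw [abs_mul, abs_of_nonneg (Real.rpow_nonneg (Nat.cast_nonneg n) _)]
  exact mul_le_mul_of_nonneg_right (abs_acoef_le hf n) (by positivity)

lemma integrable_Phi_acoef_sq {f : ℕ → ℝ} (hf : ∀ n, f n ∈ Set.Icc (-1 : ℝ) 1) {α : ℝ}
    (hα : 0 < α) (hα1 : α ≤ 1) :
    Integrable fun v => (Real.exp (-α * v) * Phi (acoef f) v) ^ 2 := by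
  have := integrable_hsum_sq (summable_acoef hf hα) hα hα1
  simpa only [hsum_acoef] using this

/-- The mean-square estimate for `Phi (acoef f)`. -/
lemma Phi_mean_square : ∃ C : ℝ, 0 < C ∧ ∀ f : ℕ → ℝ, (∀ n, f n ∈ Set.Icc (-1 : ℝ) 1) →
    IsMult f → ∀ x T α : ℝ, 3 ≤ x → 1 ≤ T → 1 / Real.log x ≤ α → α ≤ 1 →
    ∫ v, (Real.exp (-α * v) * Phi (acoef f) v) ^ 2 ≤
      C * (1 / α * (Real.exp (-MxT f x T) + α * Real.log x / T) ^ 2 +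
        1 / α ^ 3 * (Real.log (2 * T) ^ 2 / T ^ 2) + 1) := by
  obtain ⟨C₁, hC₁, hlow⟩ := low_part
  obtain ⟨C₂, hC₂, hsh⟩ := shell_bound
  obtain ⟨C₃, hC₃, hKL⟩ := KL_bound
  set S := ∑' j : ℕ, ((j : ℝ) + 2) ^ 2 * (1 / √2) ^ j with hS
  have hS0 : 0 ≤ S := tsum_nonneg fun j => by positivity
  refine ⟨C₃ ^ 2 * (C₁ + C₂ * S * 128), by positivity, ?_⟩
  intro f hf hm x T α hx hT hαx hα1
  have hlog : 0 < Real.log x := Real.log_pos (by linarith)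
  have hα : 0 < α := lt_of_lt_of_le (by positivity) hαx
  set G := Real.exp (-MxT f x T) + α * Real.log x / T with hG
  set E := 1 / α ^ 3 * (Real.log (2 * T) ^ 2 / T ^ 2) with hE
  have hE0 : 0 ≤ E := by positivity
  have hca : Continuous (chs (acoef f) α) := continuous_chs (abs_acoef_le hf) (summable_log_rpow hα)
  have hcA : Continuous fun t => (‖chs (acoef f) α t‖ * KW α t) ^ 2 :=
    (hca.norm.mul (continuous_KW hα)).pow 2
  have hJ : ∀ J : ℕ, ∫ t in (-(2 ^ J * (T / 2)))..(2 ^ J * (T / 2)),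
      (‖chs (acoef f) α t‖ * KW α t) ^ 2 ≤
      C₁ / α * G ^ 2 + C₂ * ((∑ j ∈ range J, ((j : ℝ) + 2) ^ 2 * (1 / √2) ^ j) * (4 * E + 128)) := by
    intro J
    induction J with
    | zero => simpa using hlow f hf hm x T α hx hT hαx hα1
    | succ J ih =>
      have h2J : (1 : ℝ) ≤ 2 ^ J := one_le_pow₀ (by norm_num)
      have h1 := hsh f hf α (2 ^ J * (T / 2)) hα hα1 (by nlinarith)
      have h2 := mul_le_mul_of_nonneg_left (shell_weight hT hα J) hC₂.le
      rw [show (2 : ℝ) ^ (J + 1) * (T / 2) = 2 * (2 ^ J * (T / 2)) by ring, sum_range_succ, add_mul,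
        mul_add]
      linarith
  have hQ : ∀ R : ℝ, 1 ≤ R → ∫ t in (-R)..R,
      ‖(∑' n : ℕ, ((acoef f n * (n : ℝ) ^ (-1 - α) : ℝ) : ℂ) *
        Complex.exp (-Complex.I * t * Real.log n)) * KL (α + Complex.I * t)‖ ^ 2 ≤
      C₃ ^ 2 * (C₁ / α * G ^ 2 + C₂ * (S * (4 * E + 128))) := by
    intro R hR
    have h1 : ∫ t in (-R)..R, ‖chs (acoef f) α t * KL (α + Complex.I * t)‖ ^ 2 ≤
        ∫ t in (-R)..R, C₃ ^ 2 * (‖chs (acoef f) α t‖ * KW α t) ^ 2 := by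
      rw [intervalIntegral.integral_of_le (by linarith), intervalIntegral.integral_of_le (by linarith)]
      refine integral_mono_of_nonneg (Filter.Eventually.of_forall fun t => by positivity)
        ((continuous_const.mul hcA).intervalIntegrable (-R) R).1
        (Filter.Eventually.of_forall fun t => ?_)
      have h2 := hKL (α + t * Complex.I) (by simpa using hα) (by simpa using hα1)
      have him : ((α : ℂ) + t * Complex.I).im = t := by simp
      rw [him] at h2
      have h3 : ‖KL (α + Complex.I * t)‖ ≤ C₃ * KW α t := by
        rw [mul_comm Complex.I]
        refine h2.trans (le_of_eq ?_)
        unfold KW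
        ring
      change ‖chs (acoef f) α t * KL (α + Complex.I * t)‖ ^ 2 ≤ _
      rw [norm_mul, mul_pow]
      calc _ ≤ ‖chs (acoef f) α t‖ ^ 2 * (C₃ * KW α t) ^ 2 := by gcongr
        _ = _ := by ring
    refine h1.trans ?_
    rw [intervalIntegral.integral_const_mul]
    refine mul_le_mul_of_nonneg_left ?_ (by positivity)
    obtain ⟨J, hJ'⟩ := pow_unbounded_of_one_lt (2 * R) (show (1 : ℝ) < 2 by norm_num)
    have hle : R ≤ 2 ^ J * (T / 2) := by nlinarith
    calc _ ≤ ∫ t in (-(2 ^ J * (T / 2)))..(2 ^ J * (T / 2)),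
          (‖chs (acoef f) α t‖ * KW α t) ^ 2 :=
          intervalIntegral.integral_mono_interval (by linarith) (by linarith) hle
            (Filter.Eventually.of_forall fun t => by positivity) (hcA.intervalIntegrable _ _)
      _ ≤ _ := hJ J
      _ ≤ _ := by
          gcongr
          exact summable_dyadic_weight.sum_le_tsum _ fun j _ => by positivity
  have h := mean_square (summable_acoef hf hα) hα hα1 hQ
  simp only [hsum_acoef] at h
  refine h.trans ?_
  rw [mul_assoc]
  refine mul_le_mul_of_nonneg_left ?_ (by positivity)
  have hg : 0 ≤ 1 / α * G ^ 2 := by positivity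
  have e1 : C₁ / α * G ^ 2 = C₁ * (1 / α * G ^ 2) := by ring
  have hs : 0 ≤ C₂ * S := by positivity
  rw [e1]
  nlinarith [mul_nonneg hs hg, mul_nonneg hs hE0, mul_nonneg hC₁.le hE0]

/-! ### The integral of `|Φ_f|` -/

lemma measurable_Phi (c : ℕ → ℝ) : Measurable (Phi c) := by
  refine measurable_of_tendsto_metrizable
    (f := fun (N : ℕ) (v : ℝ) => ∑ n ∈ range N, c n / n * kk (v - Real.log n)) (fun N => ?_)
    (tendsto_pi_nhds.2 fun v => (Phi_hasSum c v).tendsto_sum_nat)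
  exact Finset.measurable_sum _ fun n _ => (measurable_kk.comp (by fun_prop)).const_mul _

lemma intervalIntegrable_Phi {f : ℕ → ℝ} (hf : ∀ n, f n ∈ Set.Icc (-1 : ℝ) 1) (a b : ℝ) :
    IntervalIntegrable (fun v => |Phi f v|) volume a b := by
  refine (intervalIntegrable_const (c := (2 : ℝ))).mono_fun
    (measurable_Phi f).norm.aestronglyMeasurable (Filter.Eventually.of_forall fun v => ?_)
  beta_reduce
  rw [Real.norm_of_nonneg (abs_nonneg _), Real.norm_of_nonneg (by norm_num)]
  exact abs_Phi_f_le hf v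

/-- The mean of `|Phi f|` on `[V, 2V]`, from the mean square of `Phi (acoef f)` with `α = 1/V`. -/
lemma dyadic_piece : ∃ C : ℝ, 0 < C ∧ ∀ f : ℕ → ℝ, (∀ n, f n ∈ Set.Icc (-1 : ℝ) 1) →
    IsMult f → ∀ x T V : ℝ, 3 ≤ x → 1 ≤ T → 1 ≤ V → V ≤ Real.log x →
    ∫ v in V..(2 * V), |Phi f v| ≤
      C * (1 + Real.exp (-MxT f x T) + Real.log x / (V * T) + V * Real.log (2 * T) / T) := by
  obtain ⟨C₀, hC₀, happ⟩ := Phi_log_approx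
  obtain ⟨C₁, hC₁, hms⟩ := Phi_mean_square
  refine ⟨C₀ + 1 + Real.exp 4 * C₁, by positivity, ?_⟩
  intro f hf hm x T V hx hT hV hVx
  have hV0 : 0 < V := by linarith
  have hα : 0 < 1 / V := by positivity
  have hα1 : 1 / V ≤ 1 := by rw [div_le_one hV0]; exact hV
  have h1 := hms f hf hm x T (1 / V) hx hT (by gcongr) hα1
  have hlx : 0 < Real.log x := by linarith
  have hL : 0 ≤ Real.log (2 * T) := Real.log_nonneg (by linarith)
  set G := Real.exp (-MxT f x T) + 1 / V * Real.log x / T with hG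
  have hG0 : 0 < G := by positivity
  set H := V * Real.log (2 * T) / T with hH
  have hH0 : 0 ≤ H := by positivity
  set lam := 1 + G + H with hlam
  have hlam1 : 1 ≤ lam := by linarith
  have hinteg := integrable_Phi_acoef_sq hf hα hα1
  have hpt : ∀ v ∈ Set.Icc V (2 * V), |Phi f v| ≤ 1 / V * (C₀ + lam + Real.exp 4 / lam *
      (Real.exp (-(1 / V) * v) * Phi (acoef f) v) ^ 2) := by
    intro v hv
    have hv0 : 0 < v := by linarith [hv.1]
    have h2 : v * |Phi f v| ≤ |Phi (acoef f) v| + C₀ := by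
      have := happ f hf hm v
      have h3 : |v * Phi f v| = v * |Phi f v| := by rw [abs_mul, abs_of_pos hv0]
      have h4 := abs_sub_abs_le_abs_sub (v * Phi f v) (Phi (acoef f) v)
      linarith
    have h3 : |Phi (acoef f) v| ≤ lam + |Phi (acoef f) v| ^ 2 / lam := by
      have : 0 ≤ (|Phi (acoef f) v| - lam) ^ 2 / lam := by positivity
      have e : (|Phi (acoef f) v| - lam) ^ 2 / lam =
        |Phi (acoef f) v| ^ 2 / lam - 2 * |Phi (acoef f) v| + lam := by field_simp; ring
      have := abs_nonneg (Phi (acoef f) v)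
      linarith
    have h4 : |Phi (acoef f) v| ^ 2 ≤
        Real.exp 4 * (Real.exp (-(1 / V) * v) * Phi (acoef f) v) ^ 2 := by
      rw [sq_abs, mul_pow, ← mul_assoc, ← Real.exp_nat_mul, ← Real.exp_add]
      refine le_mul_of_one_le_left (sq_nonneg _) (Real.one_le_exp ?_)
      have : v / V ≤ 2 := by rw [div_le_iff₀ hV0]; exact hv.2
      have e : ((2 : ℕ) : ℝ) * (-(1 / V) * v) = -2 * (v / V) := by push_cast; ring
      rw [e]; linarith
    rw [one_div_mul_eq_div, le_div_iff₀ hV0]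
    calc |Phi f v| * V ≤ v * |Phi f v| := by
          rw [mul_comm]; exact mul_le_mul_of_nonneg_right hv.1 (abs_nonneg _)
      _ ≤ C₀ + (lam + |Phi (acoef f) v| ^ 2 / lam) := by linarith
      _ ≤ C₀ + (lam + Real.exp 4 * (Real.exp (-(1 / V) * v) * Phi (acoef f) v) ^ 2 / lam) := by
          gcongr
      _ = _ := by ring
  have hii : IntervalIntegrable (fun v => (Real.exp (-(1 / V) * v) * Phi (acoef f) v) ^ 2)
    volume V (2 * V) := hinteg.intervalIntegrable
  have h2 : ∫ v in V..(2 * V), |Phi f v| ≤ ∫ v in V..(2 * V), 1 / V * (C₀ + lam + Real.exp 4 / lam *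
      (Real.exp (-(1 / V) * v) * Phi (acoef f) v) ^ 2) :=
    intervalIntegral.integral_mono_on (by linarith) (intervalIntegrable_Phi hf _ _)
      ((intervalIntegrable_const.add (hii.const_mul _)).const_mul _) hpt
  rw [intervalIntegral.integral_const_mul, intervalIntegral.integral_add (by simp)
    (hii.const_mul _), intervalIntegral.integral_const, intervalIntegral.integral_const_mul,
    smul_eq_mul] at h2
  have h3 : ∫ v in V..(2 * V), (Real.exp (-(1 / V) * v) * Phi (acoef f) v) ^ 2 ≤
      ∫ v, (Real.exp (-(1 / V) * v) * Phi (acoef f) v) ^ 2 := by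
    rw [intervalIntegral.integral_of_le (by linarith)]
    exact setIntegral_le_integral hinteg (Filter.Eventually.of_forall fun v => by positivity)
  have h4 : C₁ * (1 / (1 / V) * G ^ 2 + 1 / (1 / V) ^ 3 * (Real.log (2 * T) ^ 2 / T ^ 2) + 1) ≤
      C₁ * (V * lam ^ 2) := by
    refine mul_le_mul_of_nonneg_left ?_ hC₁.le
    have e : 1 / (1 / V) * G ^ 2 + 1 / (1 / V) ^ 3 * (Real.log (2 * T) ^ 2 / T ^ 2) + 1 =
        V * (G ^ 2 + H ^ 2) + 1 := by rw [hH]; field_simp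
    rw [e]
    have : G ^ 2 + H ^ 2 + 1 ≤ lam ^ 2 := by rw [hlam]; nlinarith [mul_nonneg hG0.le hH0]
    nlinarith
  calc _ ≤ _ := h2
    _ ≤ 1 / V * ((2 * V - V) * (C₀ + lam) + Real.exp 4 / lam * (C₁ * (V * lam ^ 2))) := by
        gcongr; linarith
    _ = C₀ + lam + Real.exp 4 * C₁ * lam := by field_simp; ring
    _ ≤ (C₀ + 1 + Real.exp 4 * C₁) * lam := by nlinarith
    _ = _ := by rw [hlam, hG]; field_simp; ring

lemma loglog_lower {x : ℝ} (hx : 3 ≤ x) : 1 / 20 ≤ Real.log (Real.log x) := by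
  have h1 : (1.09 : ℝ) ≤ Real.log x := by
    refine le_trans ?_ (Real.log_le_log (by norm_num) hx)
    rw [Real.le_log_iff_exp_le (by norm_num)]
    have h := Real.exp_one_lt_d9
    have h2 : Real.exp (1.09 : ℝ) = Real.exp 1 * Real.exp 0.09 := by
      rw [← Real.exp_add]; norm_num
    have h3 : Real.exp (0.09 : ℝ) ≤ 1 / (1 - 0.09) := by
      rw [le_div_iff₀ (by norm_num)]
      have h4 := Real.add_one_le_exp (-0.09 : ℝ)
      have h5 : Real.exp (0.09 : ℝ) * Real.exp (-0.09 : ℝ) = 1 := by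
        rw [← Real.exp_add]; norm_num
      have := Real.exp_pos (0.09 : ℝ)
      nlinarith
    rw [h2]
    have := Real.exp_pos (0.09 : ℝ)
    nlinarith
  have h2 : Real.log 1.09 ≤ Real.log (Real.log x) := Real.log_le_log (by norm_num) h1
  have h3 := Real.one_sub_inv_le_log_of_pos (show (0 : ℝ) < 1.09 by norm_num)
  norm_num at h3 h2 ⊢
  linarith

lemma log_gt_one {x : ℝ} (hx : 3 ≤ x) : 1 < Real.log x := by
  have h := loglog_lower hx
  by_contra! hc
  have h0 : 0 ≤ Real.log x := Real.log_nonneg (by linarith)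
  have := Real.log_nonpos h0 hc
  linarith

/-- The integral of `|Phi f|` up to `log x`. -/
lemma integral_Phi : ∃ C : ℝ, 0 < C ∧ ∀ f : ℕ → ℝ, (∀ n, f n ∈ Set.Icc (-1 : ℝ) 1) →
    IsMult f → ∀ x T : ℝ, 3 ≤ x → 1 ≤ T →
    ∫ v in (-2 : ℝ)..(Real.log x), |Phi f v| ≤
      C * (Real.log (Real.log x) * Real.exp (-MxT f x T) + Real.log x * Real.log (2 * T) / T) := by
  obtain ⟨C₁, hC₁, hpc⟩ := dyadic_piece
  obtain ⟨c, hc, hlow⟩ := exp_MxT_lower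
  refine ⟨120 / c + C₁ * (22 * (1 / c + 1) + 6), by positivity, ?_⟩
  intro f hf hm x T hx hT
  have hlx := log_gt_one hx
  have hll := loglog_lower hx
  have hM := hlow f hf x T hx hT
  have hI := intervalIntegrable_Phi hf
  obtain ⟨n, hn1, hn2⟩ := exists_nat_pow_near hlx.le (show (1 : ℝ) < 2 by norm_num)
  set E := Real.exp (-MxT f x T) with hE
  set L := Real.log (2 * T) with hL
  have hL2 : 1 / 2 ≤ L := by
    have h1 : Real.log 2 ≤ L := Real.log_le_log (by norm_num) (by linarith)
    linarith [Real.log_two_gt_d9]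
  set l := Real.log x with hl
  set ll := Real.log l with hll'
  have hJ : ∀ J : ℕ, J ≤ n + 1 → ∫ v in (1 : ℝ)..(2 ^ J), |Phi f v| ≤
      C₁ * (J * (1 + E) + 2 * (1 - 1 / 2 ^ J) * (l / T) + (2 ^ J - 1) * (L / T)) := by
    intro J
    induction J with
    | zero => simp
    | succ J ih =>
      intro hJn
      have hpow : (2 : ℝ) ^ J ≤ l := le_trans (pow_le_pow_right₀ (by norm_num) (by omega)) hn1
      have h2 := hpc f hf hm x T (2 ^ J) hx hT (one_le_pow₀ (by norm_num)) hpow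
      have h3 := ih (by omega)
      rw [← intervalIntegral.integral_add_adjacent_intervals (hI 1 (2 ^ J)) (hI _ _)]
      rw [show (2 : ℝ) * 2 ^ J = 2 ^ (J + 1) by ring] at h2
      refine (add_le_add h3 h2).trans (le_of_eq ?_)
      rw [← hE, ← hL, ← hl]
      push_cast
      field_simp
      ring
  have h1 : ∫ v in (-2 : ℝ)..l, |Phi f v| ≤ ∫ v in (-2 : ℝ)..(2 ^ (n + 1)), |Phi f v| :=
    intervalIntegral.integral_mono_interval le_rfl (by linarith) hn2.le
      (Filter.Eventually.of_forall fun v => abs_nonneg _) (hI _ _)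
  have h2 : ∫ v in (-2 : ℝ)..1, |Phi f v| ≤ 6 := by
    have := intervalIntegral.integral_mono_on (by norm_num) (hI (-2) 1)
      (intervalIntegrable_const (c := (2 : ℝ))) fun v _ => abs_Phi_f_le hf v
    rw [intervalIntegral.integral_const, smul_eq_mul] at this
    linarith
  rw [← intervalIntegral.integral_add_adjacent_intervals (hI (-2) 1) (hI 1 (2 ^ (n + 1)))] at h1
  have h3 := hJ (n + 1) le_rfl
  have hE0 : 0 < E := Real.exp_pos _
  have hT0 : 0 < T := by linarith
  have hnl : (n : ℝ) ≤ 2 * ll := by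
    have h4 : Real.log (2 ^ n) ≤ ll := Real.log_le_log (by positivity) hn1
    rw [Real.log_pow] at h4
    have h5 : (n : ℝ) * (1 / 2) ≤ n * Real.log 2 := by
      gcongr; linarith [Real.log_two_gt_d9]
    linarith
  have hone : 1 ≤ E / c := by rw [le_div_iff₀ hc]; linarith
  have hA : ((n + 1 : ℕ) : ℝ) * (1 + E) ≤ 22 * (1 / c + 1) * (ll * E) := by
    have a1 : ((n + 1 : ℕ) : ℝ) ≤ 22 * ll := by push_cast; linarith
    have a2 : 1 + E ≤ (1 / c + 1) * E := by
      have : (1 / c + 1) * E = E / c + E := by ring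
      linarith
    calc _ ≤ 22 * ll * ((1 / c + 1) * E) := by gcongr
      _ = _ := by ring
  have hB : 2 * (1 - 1 / 2 ^ (n + 1)) * (l / T) ≤ 4 * (l * L / T) := by
    have a1 : 0 ≤ (1 : ℝ) / 2 ^ (n + 1) := by positivity
    have a2 : l / T ≤ 2 * (l * L / T) := by
      rw [show 2 * (l * L / T) = (l / T) * (2 * L) by ring]
      exact le_mul_of_one_le_right (by positivity) (by linarith)
    have a3 : 0 ≤ l / T := by positivity
    nlinarith
  have hC : (2 ^ (n + 1) - 1) * (L / T) ≤ 2 * (l * L / T) := by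
    have a1 : (2 : ℝ) ^ (n + 1) - 1 ≤ 2 * l := by rw [pow_succ]; linarith
    calc _ ≤ 2 * l * (L / T) := by gcongr
      _ = _ := by ring
  have h6 : (6 : ℝ) ≤ 120 / c * (ll * E) := by
    have : 120 / c * (ll * E) = 120 * (ll * (E / c)) := by ring
    rw [this]
    nlinarith
  have hW : 0 ≤ l * L / T := by positivity
  have hZ : 0 ≤ ll * E := by positivity
  have h7 : C₁ * (((n + 1 : ℕ) : ℝ) * (1 + E) + 2 * (1 - 1 / 2 ^ (n + 1)) * (l / T) +
      (2 ^ (n + 1) - 1) * (L / T)) ≤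
      C₁ * (22 * (1 / c + 1) * (ll * E) + 6 * (l * L / T)) := by
    exact mul_le_mul_of_nonneg_left (by linarith) hC₁.le
  calc _ ≤ 120 / c * (ll * E) + C₁ * (22 * (1 / c + 1) * (ll * E) + 6 * (l * L / T)) := by linarith
    _ ≤ _ := by
      have b1 : 0 ≤ 120 / c * (l * L / T) := by positivity
      have b2 : 0 ≤ C₁ * (22 * (1 / c + 1)) * (l * L / T) := by positivity
      have b3 : 0 ≤ C₁ * 6 * (ll * E) := by positivity
      nlinarith

/-! ### From the integral to a pointwise bound -/

/-- Replacing a sum over primes by an integral: each prime is spread over `[p, (1+δ)p)`, and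
the short-interval sieve bound controls the overlap. -/
lemma prime_smoothing : ∃ C : ℝ, 0 < C ∧ ∀ (δ B : ℝ) (P : Finset ℕ) (φ : ℕ → ℝ) (ψ : ℝ → ℝ),
    0 < δ → δ ≤ 1 → (∀ p ∈ P, p.Prime ∧ 16 / δ ^ 2 ≤ (p : ℝ) ∧ Real.log p + Real.log (1 + δ) ≤ B) →
    (∀ u, 0 ≤ ψ u) → IntegrableOn ψ (Set.Icc 0 B) →
    (∀ p ∈ P, ∀ u ∈ Set.Ico (Real.log p) (Real.log p + Real.log (1 + δ)), φ p ≤ ψ u) →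
    ∑ p ∈ P, Real.log p / p * φ p ≤ C * ∫ u in Set.Icc 0 B, ψ u := by
  obtain ⟨C, hC, hsieve⟩ := primes_log_short
  refine ⟨2 * C, by positivity, ?_⟩
  intro δ B P φ ψ hδ hδ1 hP hψ hinteg hφ
  set η := Real.log (1 + δ) with hη
  have hη1 : δ / 2 ≤ η := by
    have := Real.one_sub_inv_le_log_of_pos (show 0 < 1 + δ by linarith)
    refine le_trans ?_ this
    rw [← sub_nonneg, show 1 - (1 + δ)⁻¹ - δ / 2 = δ * (1 - δ) / (2 * (1 + δ)) by field_simp; ring]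
    have : 0 ≤ 1 - δ := by linarith
    positivity
  have hη0 : 0 < η := by linarith
  have hsub : ∀ p ∈ P, Set.Ico (Real.log p) (Real.log p + η) ⊆ Set.Icc 0 B := by
    intro p hp u hu
    exact ⟨(Real.log_natCast_nonneg p).trans hu.1, hu.2.le.trans (hP p hp).2.2⟩
  have hc0 : ∀ p : ℕ, 0 ≤ Real.log p / p := fun p =>
    div_nonneg (Real.log_natCast_nonneg p) (Nat.cast_nonneg p)
  have hintp : ∀ p ∈ P, Integrable (fun u => Real.log p / p *
      (Set.Ico (Real.log p) (Real.log p + η)).indicator ψ u) := by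
    intro p hp
    exact ((integrable_indicator_iff measurableSet_Ico).2 (hinteg.mono_set (hsub p hp))).const_mul _
  have h1 : ∀ p ∈ P, Real.log p / p * φ p * η ≤
      ∫ u, Real.log p / p * (Set.Ico (Real.log p) (Real.log p + η)).indicator ψ u := by
    intro p hp
    rw [integral_const_mul, integral_indicator measurableSet_Ico, mul_assoc]
    refine mul_le_mul_of_nonneg_left ?_ (hc0 p)
    have h2 : ∫ _ in Set.Ico (Real.log p) (Real.log p + η), φ p ≤
        ∫ u in Set.Ico (Real.log p) (Real.log p + η), ψ u :=
      setIntegral_mono_on (by simp) (hinteg.mono_set (hsub p hp)) measurableSet_Ico (hφ p hp)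
    rw [setIntegral_const, Real.volume_real_Ico_of_le (by linarith), smul_eq_mul] at h2
    linarith
  have h2 : (∑ p ∈ P, Real.log p / p * φ p) * η ≤
      ∫ u, ∑ p ∈ P, Real.log p / p * (Set.Ico (Real.log p) (Real.log p + η)).indicator ψ u := by
    rw [integral_finsetSum _ hintp, sum_mul]
    exact sum_le_sum h1
  have h3 : ∫ u, ∑ p ∈ P, Real.log p / p * (Set.Ico (Real.log p) (Real.log p + η)).indicator ψ u ≤
      ∫ u, C * δ * (Set.Icc 0 B).indicator ψ u := by
    refine integral_mono (integrable_finsetSum _ hintp)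
      (((integrable_indicator_iff measurableSet_Icc).2 hinteg).const_mul _) fun u => ?_
    beta_reduce
    have e : ∀ p ∈ P, Real.log p / p * (Set.Ico (Real.log p) (Real.log p + η)).indicator ψ u =
        (if u ∈ Set.Ico (Real.log p) (Real.log p + η) then Real.log p / p else 0) * ψ u := by
      intro p _
      rw [Set.indicator_apply]
      split_ifs <;> ring
    rw [sum_congr rfl e, ← sum_mul, ← sum_filter]
    rcases (P.filter fun p : ℕ => u ∈ Set.Ico (Real.log p) (Real.log p + η)).eq_empty_or_nonempty
      with hE | ⟨q, hq⟩
    · rw [hE, sum_empty, zero_mul]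
      exact mul_nonneg (by positivity) (Set.indicator_nonneg (fun u _ => hψ u) u)
    · rw [mem_filter] at hq
      rw [Set.indicator_of_mem (hsub q hq.1 hq.2)]
      refine mul_le_mul_of_nonneg_right ?_ (hψ u)
      have hlogle : ∀ p ∈ P, Real.log p ≤ u → (p : ℝ) ≤ Real.exp u := by
        intro p hp h
        have hp0 : (0 : ℝ) < p := by exact_mod_cast (hP p hp).1.pos
        rwa [← Real.log_le_iff_le_exp hp0]
      refine le_trans (sum_le_sum_of_subset_of_nonneg ?_ fun p _ _ => hc0 p)
        (hsieve δ (Real.exp u) hδ hδ1 (((hP q hq.1).2.1).trans (hlogle q hq.1 hq.2.1)))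
      intro p hp
      rw [mem_filter] at hp
      have hp0 : (0 : ℝ) < p := by exact_mod_cast (hP p hp.1).1.pos
      refine mem_filter.2 ⟨mem_Ioc.2 ⟨?_, ?_⟩, (hP p hp.1).1⟩
      · rw [Nat.floor_lt (by positivity), div_lt_iff₀ (by linarith)]
        rw [← Real.lt_log_iff_exp_lt (by positivity), Real.log_mul hp0.ne' (by linarith)]
        exact hp.2.2
      · exact Nat.le_floor (hlogle p hp.1 hp.2.1)
  rw [integral_const_mul, integral_indicator measurableSet_Icc] at h3
  have hI : 0 ≤ ∫ u in Set.Icc 0 B, ψ u := setIntegral_nonneg measurableSet_Icc fun u _ => hψ u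
  have h4 : (∑ p ∈ P, Real.log p / p * φ p) * η ≤ (2 * C * ∫ u in Set.Icc 0 B, ψ u) * η := by
    refine (h2.trans h3).trans ?_
    have : C * (∫ u in Set.Icc 0 B, ψ u) * δ ≤ C * (∫ u in Set.Icc 0 B, ψ u) * (2 * η) := by
      gcongr; linarith
    linarith
  exact le_of_mul_le_mul_right h4 hη0

/-- The smoothed form of `Phi f`, integrated. -/
lemma integral_psi {f : ℕ → ℝ} (hf : ∀ n, f n ∈ Set.Icc (-1 : ℝ) 1) {l : ℝ} (hl : 1 ≤ l) (e : ℝ) :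
    IntegrableOn (fun u => |Phi f (l - u)| + (e + 12 * Real.exp (-(l - u) / 2)))
      (Set.Icc 0 (l + 2)) ∧
    ∫ u in Set.Icc 0 (l + 2), (|Phi f (l - u)| + (e + 12 * Real.exp (-(l - u) / 2))) ≤
      (∫ v in (-2 : ℝ)..l, |Phi f v|) + e * (l + 2) + 72 := by
  have hI : IntervalIntegrable (fun v => |Phi f v|) volume (-2) l := intervalIntegrable_Phi hf _ _
  have hE : Continuous fun v : ℝ => e + 12 * Real.exp (-v / 2) := by fun_prop
  have hI2 : IntervalIntegrable (fun v => |Phi f v| + (e + 12 * Real.exp (-v / 2))) volume (-2) l :=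
    hI.add (hE.intervalIntegrable _ _)
  have h1 := hI2.comp_sub_left l
  rw [sub_self, sub_neg_eq_add] at h1
  have h1' := h1.symm
  rw [intervalIntegrable_iff_integrableOn_Icc_of_le (by linarith)] at h1'
  refine ⟨h1', ?_⟩
  rw [integral_Icc_eq_integral_Ioc, ← intervalIntegral.integral_of_le (by linarith),
    intervalIntegral.integral_comp_sub_left
      (fun v => |Phi f v| + (e + 12 * Real.exp (-v / 2))) l, sub_zero,
    show l - (l + 2) = -2 by ring, intervalIntegral.integral_add hI (hE.intervalIntegrable _ _)]
  have h2 : ∫ v in (-2 : ℝ)..l, (e + 12 * Real.exp (-v / 2)) =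
      (e * l + -24 * Real.exp (-l / 2)) - (e * (-2) + -24 * Real.exp (-(-2) / 2)) := by
    refine intervalIntegral.integral_eq_sub_of_hasDerivAt
      (f := fun v => e * v + -24 * Real.exp (-v / 2)) (fun v _ => ?_) (hE.intervalIntegrable _ _)
    have h3 := ((hasDerivAt_id v).const_mul e).add
      ((((hasDerivAt_id v).neg.div_const 2).exp).const_mul (-24))
    refine h3.congr_deriv ?_
    rw [Pi.neg_apply, id]
    ring
  rw [h2, show -(-2 : ℝ) / 2 = 1 by norm_num]
  have := Real.exp_one_lt_d9
  have := Real.exp_pos (-l / 2)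
  linarith

set_option maxHeartbeats 1000000 in
/-- The pointwise bound for `Phi f`. -/
lemma Phi_bound : ∃ C : ℝ, 0 < C ∧ ∀ f : ℕ → ℝ, (∀ n, f n ∈ Set.Icc (-1 : ℝ) 1) →
    IsMult f → ∀ x T : ℝ, 3 ≤ x → 1 ≤ T →
    Real.log x * |Phi f (Real.log x)| ≤
      C * (Real.log (Real.log x) * Real.exp (-MxT f x T) + Real.log x * Real.log (2 * T) / T) := by
  obtain ⟨C₀, hC₀, happ⟩ := Phi_log_approx
  obtain ⟨C₁, hC₁, hsm⟩ := prime_smoothing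
  obtain ⟨C₂, hC₂, hinteg⟩ := integral_Phi
  obtain ⟨C₃, hC₃, hch⟩ := sum_log_div_le
  obtain ⟨c, hc, hlow⟩ := exp_MxT_lower
  refine ⟨20 * C₀ / c + 168 * C₃ / c + C₁ * C₂ + 20 * C₁ * 108 / c, by positivity, ?_⟩
  intro f hf hm x T hx hT
  have hl1 := log_gt_one hx
  have hll := loglog_lower hx
  have hM := hlow f hf x T hx hT
  have hI := hinteg f hf hm x T hx hT
  set l := Real.log x with hl
  set ll := Real.log l with hll'
  set E := Real.exp (-MxT f x T) with hE
  have hE0 : 0 < E := Real.exp_pos _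
  have hL : 0 ≤ Real.log (2 * T) := Real.log_nonneg (by linarith)
  set W := l * Real.log (2 * T) / T with hW
  have hW0 : 0 ≤ W := by positivity
  have hx0 : 0 < x := by linarith
  have hl0 : 0 < l := by linarith
  -- with this `δ`, the variation `δ · log x` of `Φ_f`, summed over all primes, is `O(1)`
  set δ := 1 / l ^ 2 with hδ
  have hδ0 : 0 < δ := by positivity
  have hδ1 : δ ≤ 1 := by rw [hδ, div_le_one (by positivity)]; nlinarith
  set Y := 16 / δ ^ 2 with hY
  have hYe : Y = 16 * l ^ 4 := by rw [hY, hδ]; field_simp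
  have hY1 : 1 ≤ Y := by
    have : 1 ≤ l ^ 4 := one_le_pow₀ hl1.le
    rw [hYe]; linarith
  have hexp : Real.exp l = x := Real.exp_log hx0
  have h1 : l * |Phi f l| ≤ |Phi (acoef f) l| + C₀ := by
    have h3 := happ f hf hm l
    have h4 := abs_sub_abs_le_abs_sub (l * Phi f l) (Phi (acoef f) l)
    rw [abs_mul, abs_of_pos hl0] at h4
    linarith
  have h2 := abs_Phi_acoef_le hf l
  rw [hexp, ← sum_filter_add_sum_filter_not _ (fun p : ℕ => (p : ℝ) ≤ Y)] at h2
  set A := (Icc 1 ⌊w0 * x⌋₊).filter Nat.Prime with hA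
  have hc0 : ∀ p : ℕ, 0 ≤ Real.log p / p := fun p =>
    div_nonneg (Real.log_natCast_nonneg p) (Nat.cast_nonneg p)
  -- the primes up to `Y = 16 (log x)⁴` are too small for the sieve and are estimated trivially
  have hsmall : ∑ p ∈ A.filter (fun p : ℕ => (p : ℝ) ≤ Y), Real.log p / p * |Phi f (l - Real.log p)| ≤
      168 * C₃ * ll := by
    calc _ ≤ ∑ p ∈ A.filter (fun p : ℕ => (p : ℝ) ≤ Y), Real.log p / p * 2 :=
          sum_le_sum fun p _ => mul_le_mul_of_nonneg_left (abs_Phi_f_le hf _) (hc0 p)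
      _ ≤ ∑ p ∈ primesUpTo Y, Real.log p / p * 2 := by
          refine sum_le_sum_of_subset_of_nonneg (fun p hp => ?_) fun p _ _ =>
            mul_nonneg (hc0 p) (by norm_num)
          rw [mem_filter, hA, mem_filter] at hp
          exact (mem_primesUpTo (by linarith)).2 ⟨hp.2, hp.1.2⟩
      _ = 2 * ∑ p ∈ primesUpTo Y, Real.log p / p := by rw [← sum_mul, mul_comm]
      _ ≤ 2 * (C₃ * (1 + Real.log Y)) := by gcongr; exact hch Y hY1
      _ ≤ 2 * (C₃ * (84 * ll)) := by
          gcongr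
          have h16 : Real.log 16 ≤ 3 := by
            rw [show (16 : ℝ) = 2 ^ 4 by norm_num, Real.log_pow]
            have := Real.log_two_lt_d9
            push_cast
            linarith
          rw [hYe, Real.log_mul (by norm_num) (by positivity), Real.log_pow, ← hll']
          push_cast
          linarith
      _ = _ := by ring
  obtain ⟨hpi, hpb⟩ := integral_psi hf hl1.le (12 * (δ * l))
  have hbig := hsm δ (l + 2) (A.filter fun p : ℕ => ¬ (p : ℝ) ≤ Y)
    (fun p => |Phi f (l - Real.log p)|) _ hδ0 hδ1 (fun p hp => by
      rw [mem_filter, hA, mem_filter, mem_Icc] at hp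
      have hp0 : (0 : ℝ) < p := by exact_mod_cast hp.1.2.pos
      refine ⟨hp.1.2, (not_le.1 hp.2).le, ?_⟩
      rw [← Real.log_mul hp0.ne' (by linarith), Real.log_le_iff_le_exp (by positivity),
        Real.exp_add, hexp]
      have h3 : (p : ℝ) ≤ w0 * x := by
        have := hp.1.1.2
        rwa [Nat.le_floor_iff (mul_nonneg w0_pos.le hx0.le)] at this
      have h4 : (p : ℝ) ≤ 2 * x := by nlinarith [w0_lt_two]
      have h5 : (4 : ℝ) ≤ Real.exp 2 := by
        have : Real.exp 2 = Real.exp 1 * Real.exp 1 := by rw [← Real.exp_add]; norm_num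
        rw [this]
        nlinarith [Real.exp_one_gt_d9]
      calc (p : ℝ) * (1 + δ) ≤ 2 * x * 2 := by gcongr; linarith
        _ = x * 4 := by ring
        _ ≤ _ := by gcongr)
    (fun u => by positivity) hpi (fun p hp u hu => by
      rw [mem_filter, hA, mem_filter, mem_Icc] at hp
      have hp0 : (0 : ℝ) < p := by exact_mod_cast hp.1.2.pos
      have hp1 : (1 : ℝ) ≤ p := by exact_mod_cast hp.1.1.1
      have h3 := Phi_variation hf (X := x) (x' := Real.exp (l - u)) (x := x / p) (δ := δ) hx
        (Real.exp_pos _) (by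
          rw [Real.exp_sub, hexp]
          gcongr
          rw [← Real.log_le_iff_le_exp hp0]
          exact hu.1) (by
          rw [Real.exp_sub, hexp, div_le_iff₀ hp0]
          have h4 : Real.exp u ≤ p * (1 + δ) := by
            rw [← Real.le_log_iff_exp_le (by positivity), Real.log_mul hp0.ne' (by linarith)]
            exact hu.2.le
          have h5 := Real.exp_pos u
          rw [show (1 + δ) * (x / Real.exp u) * p = x * (p * (1 + δ)) / Real.exp u by ring,
            le_div_iff₀ h5]
          gcongr) (div_le_self hx0.le hp1)
      rw [Real.log_exp, Real.log_div hx0.ne' hp0.ne', ← hl] at h3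
      have h4 : 1 / √(Real.exp (l - u)) = Real.exp (-(l - u) / 2) := by
        rw [Real.sqrt_eq_rpow, ← Real.exp_mul, one_div, ← Real.exp_neg]
        ring_nf
      rw [h4] at h3
      have h5 := abs_sub_abs_le_abs_sub (Phi f (l - Real.log p)) (Phi f (l - u))
      linarith)
  have h3 : 12 * (δ * l) * (l + 2) ≤ 36 := by
    have : 12 * (δ * l) * (l + 2) = 12 * (1 + 2 / l) := by rw [hδ]; field_simp
    rw [this]
    have : 2 / l ≤ 2 := by rw [div_le_iff₀ hl0]; linarith
    linarith
  have h4 : l * |Phi f l| ≤ C₀ + 168 * C₃ * ll + C₁ * (C₂ * (ll * E + W) + 108) := by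
    have h5 := mul_le_mul_of_nonneg_left (a := C₁) (hpb.trans (show _ ≤ C₂ * (ll * E + W) + 108 by
      linarith)) hC₁.le
    linarith
  -- `e^{-M}` is bounded below, so constants and `log log x` are `≪ log log x · e^{-M}`
  have hone : 1 ≤ 20 * ll * E / c := by
    rw [le_div_iff₀ hc]
    exact mul_le_mul (by linarith) hM hc.le (by linarith)
  have hllE : ll ≤ ll * E / c := by
    rw [le_div_iff₀ hc]
    exact mul_le_mul_of_nonneg_left hM (by linarith)
  have hZ : 0 ≤ ll * E := by positivity
  calc _ ≤ _ := h4
    _ ≤ C₀ * (20 * ll * E / c) + 168 * C₃ * (ll * E / c) +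
        (C₁ * C₂ * (ll * E + W) + C₁ * (108 * (20 * ll * E / c))) := by
        have a1 : C₀ ≤ C₀ * (20 * ll * E / c) := le_mul_of_one_le_right hC₀.le hone
        have a2 : 168 * C₃ * ll ≤ 168 * C₃ * (ll * E / c) := by gcongr
        have a3 : C₁ * 108 ≤ C₁ * (108 * (20 * ll * E / c)) := by
          gcongr; linarith
        linarith
    _ = (20 * C₀ / c + 168 * C₃ / c + C₁ * C₂ + 20 * C₁ * 108 / c) * (ll * E) + C₁ * C₂ * W := by
        ring
    _ ≤ _ := by
        have b : 0 ≤ (20 * C₀ / c + 168 * C₃ / c + 20 * C₁ * 108 / c) * W := by positivity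
        linarith

theorem stmt1 :
    ∃ C : ℝ, 0 < C ∧
      ∀ f : ℕ → ℝ, (∀ n, f n ∈ Set.Icc (-1 : ℝ) 1) → IsMult f →
        ∀ x T : ℝ, 3 ≤ x → 1 ≤ T → T ≤ Real.log x ^ (100 : ℕ) →
          |Lsum f x - Mt (dconv f) (w0 * x)| ≤
            C * (|Mt (dconv f) (w0 * x)| / Real.log x
              + Real.log (2 * T) / T
              + (Real.log (Real.log x) / Real.log x) * Real.exp (-(MxT f x T))) := by
  obtain ⟨C, hC, h⟩ := Phi_bound
  refine ⟨C, hC, ?_⟩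
  intro f hf hm x T hx hT _
  have hl := log_gt_one hx
  have hl0 : 0 < Real.log x := by linarith
  have h1 := h f hf hm x T hx hT
  rw [← Phi_eq_diff f (by linarith : 0 < x)]
  rw [mul_comm, ← le_div_iff₀ hl0] at h1
  refine h1.trans ?_
  have h2 : 0 ≤ C * (|Mt (dconv f) (w0 * x)| / Real.log x) := by positivity
  have e : C * (Real.log (Real.log x) * Real.exp (-MxT f x T) +
      Real.log x * Real.log (2 * T) / T) / Real.log x =
      C * (Real.log (2 * T) / T + Real.log (Real.log x) / Real.log x * Real.exp (-MxT f x T)) := by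
    field_simp
    ring
  rw [e]
  linarith
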